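/- Let d ≥ 3 and θ₀ < θ < 1, where θ₀ = (d²+d−2)/(d²+d). There exist constants C_θ ≥ 1 and c_θ ∈ (0,1], depending only on d and θ, with the following property. Let η, δ, δ₁ ∈ (0,1], let E ⊆ ℝ^d be a measurable set of finite positive measure, and let g be a nonnegative function in L^{q_θ′}_t L^{r_θ′}_y for which there exist A > 0 and measurable T ⊆ ℝ with A/2 ≤ ∫_{ℝ^{d-1}} g(t,y)^{r_θ′} dy ≤ 2A for a.e. t ∈ T and ∫ g(t,y)^{r_θ′} dy = 0 for a.e. t ∉ T. With F_k = {z : 2^k ≤ g(z) < 2^{k+1}} and F_k^l = F_k ∩ {(t,y) : 2^l ≤ |{y′ : (t,y′) ∈ F_k}| < 2^{l+1}}, assume that for every k, l with |F_k^l| > 0: η·‖g‖_{L^{q_θ′}_t L^{r_θ′}_y}^{q_θ′} ≤ 2^{k q_θ′}·‖1_{F_k^l}‖_{L^{q_θ′}_t L^{r_θ′}_y}^{q_θ′} < 2η·‖g‖_{L^{q_θ′}_t L^{r_θ′}_y}^{q_θ′} and δ₁·|E|^{1/p_θ}·‖1_{F_k^l}‖_{L^{q_θ′}_t L^{r_θ′}_y}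 ≤ 𝒳(E, F_k^l) < 2δ₁·|E|^{1/p_θ}·‖1_{F_k^l}‖_{L^{q_θ′}_t L^{r_θ′}_y}. If 𝒳(E,g) ≥ δ·|E|^{1/p_θ}·‖g‖_{L^{q_θ′}_t L^{r_θ′}_y}, then 𝒳(E,g) ≤ C_θ·(ηδ₁)^{c_θ}·log(1+δ^{−C_θ})·|E|^{1/p_θ}·‖g‖_{L^{q_θ′}_t L^{r_θ′}_y}. -/

import Mathlib

open MeasureTheory ENNReal Set Filter
noncomputable section

/-- Points of `ℝ^d` written as `(s, x)` with `s ∈ ℝ`, `x ∈ ℝ^(d-1)` (here `n = d-1`). -/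
abbrev Pt (n : ℕ) := ℝ × (Fin n → ℝ)

/-- The moment curve `γ(t) = (t, t², …, t^n)` in `ℝ^n`. -/
def mom (n : ℕ) (t : ℝ) : Fin n → ℝ := fun i => t ^ (i.1 + 1)

/-- The restricted X-ray transform `Xf(t,y) = ∫ f(s, y + s·γ(t)) ds` of a
nonnegative function `f` on `ℝ^d`. -/
def Xray (n : ℕ) (f : Pt n → ℝ) (z : Pt n) : ℝ≥0∞ :=
  ∫⁻ s : ℝ, ENNReal.ofReal (f (s, z.2 + s • mom n z.1))

/-- Mixed norm `‖g‖_{L^q_t L^r_y}` for an `ℝ≥0∞`-valued function on `ℝ × Y`. -/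
def mixedNormG {Y : Type*} [MeasurableSpace Y] (ν : Measure Y) (q r : ℝ)
    (g : ℝ × Y → ℝ≥0∞) : ℝ≥0∞ :=
  (∫⁻ t : ℝ, (∫⁻ y, g (t, y) ^ r ∂ν) ^ (q / r)) ^ (1 / q)

/-- Mixed norm `‖g‖_{L^q_t L^r_y}` on `ℝ^d = ℝ × ℝ^(d-1)`, `ℝ≥0∞`-valued functions. -/
def mixedNorm (n : ℕ) (q r : ℝ) (g : Pt n → ℝ≥0∞) : ℝ≥0∞ :=
  mixedNormG volume q r g

/-- Mixed norm of a real-valued function. -/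
def mixedNormR (n : ℕ) (q r : ℝ) (g : Pt n → ℝ) : ℝ≥0∞ :=
  mixedNorm n q r fun z => ENNReal.ofReal |g z|

/-- The `L^p` norm of a real-valued function on `ℝ^d`. -/
def LpN (n : ℕ) (p : ℝ) (f : Pt n → ℝ) : ℝ≥0∞ :=
  (∫⁻ z : Pt n, ENNReal.ofReal |f z| ^ p) ^ (1 / p)

/-- The `L^p` norm restricted to a set. -/
def LpNOn (n : ℕ) (p : ℝ) (f : Pt n → ℝ) (S : Set (Pt n)) : ℝ≥0∞ :=
  (∫⁻ z in S, ENNReal.ofReal |f z| ^ p) ^ (1 / p)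

/-- `p_θ`, defined by `1/p_θ = 1 - θ + θd/(d+2)`. -/
def pExp (d : ℕ) (θ : ℝ) : ℝ := (1 - θ + θ * d / (d + 2))⁻¹

/-- `q_θ`, defined by `1/q_θ = θd/(d+2)`. -/
def qExp (d : ℕ) (θ : ℝ) : ℝ := (θ * d / (d + 2))⁻¹

/-- `r_θ`, defined by `1/r_θ = 1 - θ + θ(d²-d-2)/(d²+d-2)`. -/
def rExp (d : ℕ) (θ : ℝ) : ℝ :=
  (1 - θ + θ * ((d:ℝ)^2 - d - 2) / ((d:ℝ)^2 + d - 2))⁻¹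

/-- Dual exponent `p' = p/(p-1)`. -/
def dualExp (p : ℝ) : ℝ := p / (p - 1)

/-- `θ₀ = (d²+d-2)/(d²+d)`, the exponent where `q_θ = r_θ`. -/
def theta0 (d : ℕ) : ℝ := ((d:ℝ)^2 + d - 2) / ((d:ℝ)^2 + d)

/-- The mixed norm `‖Xf‖_{L^{q_θ}_t L^{r_θ}_y}`. -/
def XNorm (d : ℕ) (θ : ℝ) (f : Pt (d-1) → ℝ) : ℝ≥0∞ :=
  mixedNorm (d-1) (qExp d θ) (rExp d θ) (Xray (d-1) f)

/-- The source norm `‖f‖_{L^{p_θ}}`. -/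
def srcNorm (d : ℕ) (θ : ℝ) (f : Pt (d-1) → ℝ) : ℝ≥0∞ := LpN (d-1) (pExp d θ) f

/-- The dual mixed norm `‖g‖_{L^{q_θ'}_t L^{r_θ'}_y}`. -/
def dualNorm (d : ℕ) (θ : ℝ) (g : Pt (d-1) → ℝ) : ℝ≥0∞ :=
  mixedNormR (d-1) (dualExp (qExp d θ)) (dualExp (rExp d θ)) g

/-- The operator norm `A_θ` of `X : L^{p_θ} → L^{q_θ}_t L^{r_θ}_y` (restricted to
nonnegative functions). -/
def Aconst (d : ℕ) (θ : ℝ) : ℝ≥0∞ :=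
  sSup { M | ∃ f : Pt (d-1) → ℝ, Measurable f ∧ 0 ≤ f ∧
    srcNorm d θ f = 1 ∧ M = XNorm d θ f }

/-- The bilinear pairing `𝒳(f,g) = ∫ Xf · g`. -/
def pairing (n : ℕ) (f g : Pt n → ℝ) : ℝ≥0∞ :=
  ∫⁻ z : Pt n, Xray n f z * ENNReal.ofReal (g z)

/-- Indicator function of a set, as a real-valued function. -/
def ind (n : ℕ) (E : Set (Pt n)) : Pt n → ℝ := E.indicator fun _ => (1:ℝ)

/-- `𝒳(E,F) = ∫ X1_E · 1_F`. -/
def pairSet (n : ℕ) (E F : Set (Pt n)) : ℝ≥0∞ := pairing n (ind n E) (ind n F)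

/-- Dyadic level set `E_j = {z : 2^j ≤ f(z) < 2^(j+1)}`. -/
def lev (n : ℕ) (f : Pt n → ℝ) (j : ℤ) : Set (Pt n) :=
  {z | (2:ℝ) ^ j ≤ f z ∧ f z < (2:ℝ) ^ (j + 1)}

/-- The measure of the slice `{y : (t,y) ∈ F}`. -/
def sliceVol (n : ℕ) (F : Set (Pt n)) (t : ℝ) : ℝ≥0∞ :=
  volume {y : Fin n → ℝ | (t, y) ∈ F}

/-- `F_k^l = F_k ∩ π⁻¹{t : 2^l ≤ |{y : (t,y) ∈ F_k}| < 2^(l+1)}` where `F_k` is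
the `k`-th level set of `g`. -/
def Fkl (n : ℕ) (g : Pt n → ℝ) (k l : ℤ) : Set (Pt n) :=
  lev n g k ∩ {z | (2:ℝ≥0∞) ^ l ≤ sliceVol n (lev n g k) z.1 ∧
    sliceVol n (lev n g k) z.1 < (2:ℝ≥0∞) ^ (l + 1)}

/-- `F_{kl}^m`: the `k`-th level set of `g`, restricted to `t` with
`2^l ≤ ∫ g(t,y)^{r'} dy < 2^(l+1)` and `2^m ≤ |{y : (t,y) ∈ F_k}| < 2^(m+1)`. -/
def Fklm (n : ℕ) (r' : ℝ) (g : Pt n → ℝ) (k l m : ℤ) : Set (Pt n) :=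
  lev n g k ∩
  {z | (2:ℝ≥0∞) ^ l ≤ (∫⁻ y, ENNReal.ofReal (g (z.1, y)) ^ r') ∧
    (∫⁻ y, ENNReal.ofReal (g (z.1, y)) ^ r') < (2:ℝ≥0∞) ^ (l + 1)} ∩
  {z | (2:ℝ≥0∞) ^ m ≤ sliceVol n (lev n g k) z.1 ∧
    sliceVol n (lev n g k) z.1 < (2:ℝ≥0∞) ^ (m + 1)}

/-- The lower-triangular matrix `G_{t₀}` with entries `C(m,i)·t₀^(m-i)`, acting on `ℝ^(d-1)`. -/
def Gmat (n : ℕ) (t₀ : ℝ) (x : Fin n → ℝ) : Fin n → ℝ := fun m =>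
  ∑ i ∈ Finset.univ.filter (fun i : Fin n => i ≤ m),
    ((Nat.choose (m.1+1) (i.1+1)) : ℝ) * t₀ ^ (m.1 - i.1) * x i

/-- The symmetry group `G_d` of the restricted X-ray transform, with the (constant)
Jacobian determinant carried along: `IsSymJ n φ J` means `φ ∈ G_d` with Jacobian `J`. -/
inductive IsSymJ (n : ℕ) : (Pt n → Pt n) → ℝ → Prop
  | translation (v : Fin n → ℝ) : IsSymJ n (fun p => (p.1, p.2 + v)) 1
  | scaling (α β : ℝ) (hα : 0 < α) (hβ : 0 < β) :
      IsSymJ n (fun p => (α * p.1, fun i => α * β ^ (i.1 + 1) * p.2 i))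
        (α ^ (n+1) * β ^ (n * (n+1) / 2))
  | shift (s₀ t₀ : ℝ) :
      IsSymJ n (fun p => (p.1 + s₀, Gmat n t₀ p.2 + (p.1 + s₀) • mom n t₀)) 1
  | comp (φ ψ : Pt n → Pt n) (J₁ J₂ : ℝ) :
      IsSymJ n φ J₁ → IsSymJ n ψ J₂ → IsSymJ n (φ ∘ ψ) (J₁ * J₂)

/-- The `L^p`-normalized action `φ*f = J^(1/p) · (f ∘ φ)` of a symmetry on functions. -/
def symAct (n : ℕ) (p : ℝ) (J : ℝ) (φ : Pt n → Pt n) (f : Pt n → ℝ) : Pt n → ℝ :=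
  fun z => J ^ (1/p) * f (φ z)

/-- Lorentz norm `‖h‖_{L^{p,s}}` (up to equivalence), via dyadic level sets. -/
def lorentzNorm {α : Type*} [MeasurableSpace α] (μ : Measure α) (p s : ℝ)
    (h : α → ℝ≥0∞) : ℝ≥0∞ :=
  (∑' j : ℤ, ((2:ℝ≥0∞) ^ j *
      μ {z | (2:ℝ≥0∞) ^ j ≤ h z ∧ h z < (2:ℝ≥0∞) ^ (j+1)} ^ (1/p)) ^ s) ^ (1/s)

/-- Weak `L^{p,∞}` norm. -/
def weakNorm {α : Type*} [MeasurableSpace α] (μ : Measure α) (p : ℝ)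
    (h : α → ℝ≥0∞) : ℝ≥0∞ :=
  ⨆ l : ℝ≥0∞, l * μ {z | l < h z} ^ (1/p)

/-- Mixed Lorentz norm `‖g‖_{L^{q,s}_t L^r_y}` (up to equivalence). -/
def mixedLorentzG {Y : Type*} [MeasurableSpace Y] (ν : Measure Y) (q s r : ℝ)
    (g : ℝ × Y → ℝ≥0∞) : ℝ≥0∞ :=
  (∑' l : ℤ, (mixedNormG ν q r
      (Set.indicator {z : ℝ × Y | (2:ℝ≥0∞) ^ l ≤ (∫⁻ y, g (z.1, y) ^ r ∂ν) ∧
        (∫⁻ y, g (z.1, y) ^ r ∂ν) < (2:ℝ≥0∞) ^ (l+1)} g)) ^ s) ^ (1/s)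

/-- Weak mixed norm `‖g‖_{L^{q,∞}_t L^r_y}`. -/
def weakMixedG {Y : Type*} [MeasurableSpace Y] (ν : Measure Y) (q r : ℝ)
    (g : ℝ × Y → ℝ≥0∞) : ℝ≥0∞ :=
  ⨆ l : ℝ≥0∞, l * (volume {t : ℝ | l < (∫⁻ y, g (t, y) ^ r ∂ν) ^ (1/r)}) ^ (1/q)

/-- The paraball `B(s₀,t₀,ȳ,α,β)`. -/
def paraball (n : ℕ) (s₀ t₀ : ℝ) (ybar : Fin n → ℝ) (α β : ℝ) : Set (Pt n) :=
  {z | |z.1 - s₀| < α ∧ ∀ m : Fin n,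
    |(∑ i ∈ Finset.univ.filter (fun i : Fin n => i ≤ m),
        ((Nat.choose (m.1+1) (i.1+1)) : ℝ) * (-t₀) ^ (m.1 - i.1) *
          (z.2 i - (ybar + s₀ • mom n t₀) i))
      + (-t₀) ^ (m.1+1) * (z.1 + s₀)| ≤ β ^ (m.1+1) * α}

/-- The dual paraball `B*(s₀,t₀,ȳ,α,β)`. -/
def dualParaball (n : ℕ) (s₀ t₀ : ℝ) (ybar : Fin n → ℝ) (α β : ℝ) : Set (Pt n) :=
  {z | |z.1 - t₀| < β ∧ ∀ m : Fin n,
    |(∑ i ∈ Finset.univ.filter (fun i : Fin n => i ≤ m),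
        ((Nat.choose (m.1+1) (i.1+1)) : ℝ) * (-t₀) ^ (m.1 - i.1) * (z.2 i - ybar i))
      + s₀ * (z.1 ^ (m.1+1) + (-t₀) ^ (m.1+1))| ≤ β ^ (m.1+1) * α}

/-- The mock-distance between two paraballs. -/
def mockDist (n : ℕ) (sa ta : ℝ) (ya : Fin n → ℝ) (aa ba : ℝ)
    (sb tb : ℝ) (yb : Fin n → ℝ) (ab bb : ℝ) : ℝ :=
  (max (aa ^ n * ba ^ (n * (n+1) / 2)) (ab ^ n * bb ^ (n * (n+1) / 2)) /
    min (aa ^ n * ba ^ (n * (n+1) / 2)) (ab ^ n * bb ^ (n * (n+1) / 2)))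
  + (aa / ab + ab / aa) + (ba / bb + bb / ba)
  + |sa - sb| * (1/aa + 1/ab) + |ta - tb| * (1/ba + 1/bb)
  + ∑ m : Fin n,
      |(∑ i ∈ Finset.univ.filter (fun i : Fin n => i ≤ m),
          ((Nat.choose (m.1+1) (i.1+1)) : ℝ) * (-ta) ^ (m.1 - i.1) *
            ((yb + sb • mom n tb) i - (ya + sa • mom n ta) i))
        + (-ta) ^ (m.1+1) * (sb + sa)| / (aa * ba ^ (m.1+1))
  + ∑ m : Fin n,
      |(∑ i ∈ Finset.univ.filter (fun i : Fin n => i ≤ m),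
          ((Nat.choose (m.1+1) (i.1+1)) : ℝ) * (-tb) ^ (m.1 - i.1) *
            ((ya + sa • mom n ta) i - (yb + sb • mom n tb) i))
        + (-tb) ^ (m.1+1) * (sa + sb)| / (ab * bb ^ (m.1+1))
  + ∑ m : Fin n,
      |(∑ i ∈ Finset.univ.filter (fun i : Fin n => i ≤ m),
          ((Nat.choose (m.1+1) (i.1+1)) : ℝ) * (-sa) ^ (m.1 - i.1) * (yb i - ya i))
        + sa * (tb ^ (m.1+1) + (-ta) ^ (m.1+1))| / (aa * ba ^ (m.1+1))
  + ∑ m : Fin n,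
      |(∑ i ∈ Finset.univ.filter (fun i : Fin n => i ≤ m),
          ((Nat.choose (m.1+1) (i.1+1)) : ℝ) * (-sb) ^ (m.1 - i.1) * (ya i - yb i))
        + sb * (ta ^ (m.1+1) + (-tb) ^ (m.1+1))| / (ab * bb ^ (m.1+1))

/-!
The pairing `𝒳(E, F)` is the measure of the set of incidences between the points of `E` and the
lines of `F`, where `(t, y)` stands for the line `s ↦ (s, y + s • γ t)`. By the method of
refinements, one finds an incidence from which many polygonal paths start, which alternate between
points of `E` and lines of `F`. The last line of such a path is a function of the heights of its
vertices and the slopes of its edges. The Jacobian of this function is a confluent Vandermonde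
determinant, hence a product of gaps between heights and powers of gaps between slopes, and the
function has bounded multiplicity. Counting the end lines in `F` gives the restricted weak-type
bound `𝒳(E, F) ≲ L ^ u * |T| ^ w * |E| ^ (1 - w)` for sets `F` over times `T` with slices of
measure at most `L`.

Interpolation with the trivial bound `𝒳(E, F) ≤ |T| * |E|` gives the desired exponents at a
parameter `θ` strictly between the two endpoints. For the piece `F_k^l` one of the two endpoints
gains geometrically in the distance of `(k, l)` to the line where both bounds agree. The height of
the fibres of `g` confines `(k, l)` to one side of a transversal line, with geometric decay away
from it, and so does the assumption on the strength of the pieces. The geometric mean of these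
estimates carries the factor `(η δ₁) ^ (1 / (2 Q))` and is summable in `k` and `l`.
-/

section ConfluentVandermonde

open Polynomial

variable {R : Type*} [CommRing R]

lemma functional_eq_sum_coeff (L : R[X] →ₗ[R] R) (hL : L 1 = 0) {n : ℕ} {p : R[X]}
    (hp : p.natDegree ≤ n) : L p = ∑ κ : Fin n, p.coeff (κ + 1) * L (X ^ (κ.1 + 1)) := by
  conv_lhs => rw [p.as_sum_range_C_mul_X_pow' (Nat.lt_succ_of_le hp), Finset.sum_range_succ',
    ← Fin.sum_univ_eq_sum_range (fun j => C (p.coeff (j + 1)) * X ^ (j + 1))]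
  simp only [← smul_eq_C_mul, pow_zero, map_add, map_sum, map_smul, hL, smul_eq_mul, mul_zero,
    add_zero]

theorem det_apply_X_pow_succ {n : ℕ} (L : Fin n → R[X] →ₗ[R] R) (p : Fin n → R[X])
    (hL : ∀ i, L i 1 = 0) (hp : ∀ k, (p k).Monic) (hdeg : ∀ k, (p k).natDegree = k + 1)
    (hzero : ∀ i k, i < k → L i (p k) = 0) :
    (Matrix.of fun κ i : Fin n => L i (X ^ (κ.1 + 1))).det = ∏ i, L i (p i) := by
  set A := Matrix.of fun κ i : Fin n => L i (X ^ (κ.1 + 1))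
  set P := Matrix.of fun k κ : Fin n => (p k).coeff (κ + 1)
  have hPA : P * A = Matrix.of fun k i => L i (p k) := by
    ext k i
    rw [Matrix.mul_apply, Matrix.of_apply,
      functional_eq_sum_coeff (L i) (hL i) ((hdeg k).trans_le k.2)]
    rfl
  have hP : P.det = 1 := by
    rw [Matrix.det_of_isLowerTriangular P]
    · refine Finset.prod_eq_one fun k _ => ?_
      change (p k).coeff (k + 1) = 1
      rw [← hdeg, (hp k).coeff_natDegree]
    · intro k κ hlt
      have hlt : k.1 < κ.1 := hlt
      exact coeff_eq_zero_of_natDegree_lt (by rw [hdeg]; omega)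
  calc A.det = (P * A).det := by rw [Matrix.det_mul, hP, one_mul]
    _ = ∏ i, L i (p i) := by
      rw [hPA]
      exact Matrix.det_of_isUpperTriangular fun k i hlt => hzero i k hlt

/-- The columns of the Jacobian of a polygonal path with slopes `u 0, u 1, …`, as functionals on
polynomials: `2 * r` encodes moving the vertex between the edges of slopes `u r` and `u (r + 1)`,
`2 * r + 1` encodes changing the slope `u (r + 1)`. -/
def pathFunctional (u : ℕ → R) (i : ℕ) : R[X] →ₗ[R] R :=
  if Even i then leval (u (i / 2 + 1)) - leval (u (i / 2))
  else leval (u (i / 2 + 1)) ∘ₗ derivative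

/-- The Newton polynomial `(X - u 0) * ∏ (X - u (q + 1)) ^ 2` over `q < r`, on which the first
`2 * r` path functionals vanish. -/
def slopePoly (u : ℕ → R) (r : ℕ) : R[X] :=
  (X - C (u 0)) * ∏ q ∈ Finset.range r, (X - C (u (q + 1))) ^ 2

variable (u : ℕ → R)

lemma slopePoly_monic (r : ℕ) : (slopePoly u r).Monic :=
  (monic_X_sub_C _).mul (monic_prod_of_monic _ _ fun _ _ => (monic_X_sub_C _).pow 2)

lemma natDegree_slopePoly [Nontrivial R] (r : ℕ) : (slopePoly u r).natDegree = 2 * r + 1 := by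
  rw [slopePoly, (monic_X_sub_C _).natDegree_mul
    (monic_prod_of_monic _ _ fun _ _ => (monic_X_sub_C _).pow 2),
    natDegree_prod_of_monic _ _ fun _ _ => (monic_X_sub_C _).pow 2]
  simp only [natDegree_X_sub_C, (monic_X_sub_C _).natDegree_pow, Finset.sum_const,
    Finset.card_range, smul_eq_mul]
  ring

lemma sq_X_sub_C_dvd_slopePoly {q r : ℕ} (hq : q < r) : (X - C (u (q + 1))) ^ 2 ∣ slopePoly u r :=
  (Finset.dvd_prod_of_mem _ (Finset.mem_range.2 hq)).mul_left _

lemma slopePoly_eval_eq_zero {q r : ℕ} (hq : q ≤ r) : (slopePoly u r).eval (u q) = 0 := by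
  rw [← IsRoot.def, ← dvd_iff_isRoot]
  cases q with
  | zero => exact dvd_mul_right _ _
  | succ q => exact (dvd_pow_self _ two_ne_zero).trans (sq_X_sub_C_dvd_slopePoly u hq)

lemma eval_derivative_eq_zero_of_sq_dvd {p : R[X]} {a : R} (h : (X - C a) ^ 2 ∣ p) :
    p.derivative.eval a = 0 := by
  obtain ⟨f, rfl⟩ := h
  simp [derivative_mul, derivative_pow]

lemma slopePoly_eval (r : ℕ) (x : R) :
    (slopePoly u r).eval x = (x - u 0) * ∏ q ∈ Finset.range r, (x - u (q + 1)) ^ 2 := by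
  simp only [slopePoly, eval_mul, eval_sub, eval_X, eval_C, eval_prod, eval_pow]

theorem det_pathFunctional [Nontrivial R] (n : ℕ) :
    (Matrix.of fun κ i : Fin n => pathFunctional u i (X ^ (κ.1 + 1))).det =
      ∏ i : Fin n, (slopePoly u (i / 2)).eval (u (i / 2 + 1)) := by
  let p (k : ℕ) : R[X] := slopePoly u (k / 2) * if Even k then 1 else X - C (u (k / 2 + 1))
  have hp_eval {k q : ℕ} (hq : 2 * q ≤ k + 1) : (p k).eval (u q) = 0 := by
    rcases (show q ≤ k / 2 ∨ q = k / 2 + 1 ∧ ¬ Even k by grind) with h | ⟨rfl, hk⟩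
    · rw [eval_mul, slopePoly_eval_eq_zero u h, zero_mul]
    · simp [p, hk]
  rw [det_apply_X_pow_succ (fun i => pathFunctional u i) fun k => p k]
  · refine Finset.prod_congr rfl fun i _ => ?_
    by_cases hi : Even i.1
    · simp [pathFunctional, p, hi, slopePoly_eval_eq_zero]
    · simp [pathFunctional, p, hi, derivative_mul]
  · intro i
    dsimp only [pathFunctional]
    split_ifs <;> simp [leval]
  · intro k
    dsimp only [p]
    split_ifs
    exacts [(slopePoly_monic u _).mul monic_one, (slopePoly_monic u _).mul (monic_X_sub_C _)]
  · intro k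
    dsimp only [p]
    split_ifs with hk
    · rw [mul_one, natDegree_slopePoly]
      grind
    · rw [(slopePoly_monic u _).natDegree_mul (monic_X_sub_C _), natDegree_slopePoly,
        natDegree_X_sub_C]
      grind
  · intro i k hik
    have : i.1 < k.1 := hik
    by_cases hi : Even i.1
    · simp only [pathFunctional, hi, if_true, LinearMap.sub_apply, leval_apply]
      rw [hp_eval (by grind), hp_eval (by grind), sub_zero]
    · simp only [pathFunctional, hi, if_false, LinearMap.comp_apply, leval_apply]
      exact eval_derivative_eq_zero_of_sq_dvd
        ((sq_X_sub_C_dvd_slopePoly u (by grind)).mul_right _)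

theorem finsupp_eq_zero_of_moments_eq_zero {K : Type*} [CommRing K] [IsDomain K] {n : ℕ}
    {w : K →₀ K} (hcard : w.support.card ≤ n + 1)
    (hw : ∀ k ≤ n, Finsupp.linearCombination K (fun x : K => x ^ k) w = 0) : w = 0 := by
  let e := w.support.equivFin
  have hzero := Matrix.eq_zero_of_forall_pow_sum_mul_pow_eq_zero
    (f := fun j => (e.symm j).1) (v := fun j => w (e.symm j).1)
    (Subtype.val_injective.comp e.symm.injective) fun i => by
      refine (e.symm.sum_comp fun x => w x.1 * x.1 ^ i.1).trans ?_
      rw [Finset.sum_coe_sort w.support fun x => w x * x ^ i.1]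
      exact hw i (by omega)
  ext x
  by_contra hx
  refine hx ?_
  simpa using congrFun hzero (e ⟨x, Finsupp.mem_support_iff.2 hx⟩)

end ConfluentVandermonde

section PolygonalPath

open Polynomial

variable {n : ℕ}

/-- The heights `s₀ = V 0, V 2, …` and slopes `V 1, V 3, …` of a polygonal path, of which the first
`n` are free and the later ones are the height `s₀` and the slope `t₀` of its initial incidence. -/
def extendPath (s₀ t₀ : ℝ) (v : Fin n → ℝ) (i : ℕ) : ℝ :=
  if h : i < n then v ⟨i, h⟩ else if Even i then s₀ else t₀

/-- The slopes of the edges of a path `V`, preceded by the slope `τ` of the last line. -/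
def slopeSeq (τ : ℝ) (V : ℕ → ℝ) : ℕ → ℝ
  | 0 => τ
  | r + 1 => V (2 * r + 1)

/-- The base point of the last line (of slope `τ`) of a path `V` whose first line has base
point `y₀`: a line of slope `t` through `(s, x)` has base point `x - s • mom n t`, so that turning
at height `s` from slope `t` to slope `t'` moves the base point by `s • (mom n t - mom n t')`. -/
def pathEnd (n : ℕ) (y₀ : Fin n → ℝ) (τ : ℝ) (V : ℕ → ℝ) : Fin n → ℝ :=
  y₀ + ∑ r ∈ Finset.range (n / 2 + 1),
    V (2 * r) • (mom n (slopeSeq τ V (r + 1)) - mom n (slopeSeq τ V r))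

/-- The scalar in front of the `i`-th column of the Jacobian of a path `V`. -/
def pathWeight (V : ℕ → ℝ) (i : ℕ) : ℝ :=
  if Even i then 1 else V (i - 1) - V (i + 1)

/-- The Jacobian matrix of `pathEnd` with respect to the first `n` path parameters. -/
def pathJacobian (n : ℕ) (τ : ℝ) (V : ℕ → ℝ) : Matrix (Fin n) (Fin n) ℝ :=
  Matrix.of fun κ i => pathWeight V i * pathFunctional (slopeSeq τ V) i (X ^ (κ.1 + 1))

lemma det_pathJacobian (τ : ℝ) (V : ℕ → ℝ) :
    (pathJacobian n τ V).det = (∏ i : Fin n, pathWeight V i) *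
      ∏ i : Fin n, (slopePoly (slopeSeq τ V) (i / 2)).eval (slopeSeq τ V (i / 2 + 1)) := by
  rw [← det_pathFunctional]
  exact Matrix.det_mul_row (fun i : Fin n => pathWeight V i) _

lemma pathFunctional_two_mul (u : ℕ → ℝ) (r : ℕ) (f : ℝ[X]) :
    pathFunctional u (2 * r) f = f.eval (u (r + 1)) - f.eval (u r) := by
  simp [pathFunctional]

lemma pathFunctional_two_mul_add_one (u : ℕ → ℝ) (r : ℕ) (f : ℝ[X]) :
    pathFunctional u (2 * r + 1) f = f.derivative.eval (u (r + 1)) := by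
  simp [pathFunctional, show (2 * r + 1) / 2 = r by omega]

lemma hasFDerivAt_sum_mul_eval_sub {E : Type*} [NormedAddCommGroup E] [NormedSpace ℝ E]
    {V : E → ℕ → ℝ} {V' : ℕ → E →L[ℝ] ℝ} {x : E} (hV : ∀ i, HasFDerivAt (V · i) (V' i) x)
    (τ : ℝ) (f : ℝ[X]) (M : ℕ) :
    HasFDerivAt (fun v => ∑ r ∈ Finset.range (M + 1),
        V v (2 * r) * (f.eval (slopeSeq τ (V v) (r + 1)) - f.eval (slopeSeq τ (V v) r)))
      (∑ i ∈ Finset.range (2 * M + 1),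
          (pathWeight (V x) i * pathFunctional (slopeSeq τ (V x)) i f) • V' i +
        (V x (2 * M) * f.derivative.eval (V x (2 * M + 1))) • V' (2 * M + 1)) x := by
  have heval (i : ℕ) : HasFDerivAt (fun v => f.eval (V v i)) (f.derivative.eval (V x i) • V' i) x :=
    (f.hasDerivAt _).comp_hasFDerivAt x (hV i)
  induction M with
  | zero =>
    simp only [zero_add, Finset.range_one, Finset.sum_singleton, mul_zero, slopeSeq]
    refine ((hV 0).mul ((heval 1).sub_const (f.eval τ))).congr_fderiv ?_
    rw [show pathFunctional (slopeSeq τ (V x)) 0 f = f.eval (V x 1) - f.eval τ from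
      pathFunctional_two_mul _ 0 f]
    simp only [pathWeight, Even.zero, if_true, one_mul, smul_smul]
    abel
  | succ M ih =>
    simp only [Finset.sum_range_succ _ (M + 1)]
    refine (ih.add ((hV (2 * (M + 1))).mul
      ((heval (2 * (M + 1) + 1)).sub (heval (2 * M + 1))))).congr_fderiv ?_
    rw [Finset.sum_range_succ _ (2 * (M + 1)), show 2 * (M + 1) = 2 * M + 1 + 1 by ring,
      Finset.sum_range_succ _ (2 * M + 1), pathFunctional_two_mul_add_one,
      show 2 * M + 1 + 1 = 2 * (M + 1) by ring, pathFunctional_two_mul]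
    simp only [Pi.sub_apply, pathWeight, slopeSeq, even_two_mul, Nat.not_even_two_mul_add_one,
      if_true, if_false, add_tsub_cancel_right, show 2 * M + 1 + 1 = 2 * (M + 1) by ring, smul_sub,
      smul_smul]
    module

lemma hasFDerivAt_extendPath (s₀ t₀ : ℝ) (v : Fin n → ℝ) (i : ℕ) :
    HasFDerivAt (fun v : Fin n → ℝ => extendPath s₀ t₀ v i)
      (if h : i < n then (.proj ⟨i, h⟩ : (Fin n → ℝ) →L[ℝ] ℝ) else 0) v := by
  unfold extendPath
  split_ifs
  exacts [hasFDerivAt_apply _ v, hasFDerivAt_const _ v, hasFDerivAt_const _ v]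

theorem hasFDerivAt_pathEnd (y₀ : Fin n → ℝ) (s₀ t₀ τ : ℝ) (v : Fin n → ℝ) :
    HasFDerivAt (fun v => pathEnd n y₀ τ (extendPath s₀ t₀ v))
      (pathJacobian n τ (extendPath s₀ t₀ v)).toLin'.toContinuousLinearMap v := by
  rw [hasFDerivAt_pi']
  intro κ
  have hsum := (hasFDerivAt_sum_mul_eval_sub (hasFDerivAt_extendPath s₀ t₀ v) τ (X ^ (κ.1 + 1))
    (n / 2)).const_add (y₀ κ)
  rw [dif_neg (show ¬ 2 * (n / 2) + 1 < n by omega), smul_zero, add_zero,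
    ← Finset.sum_subset (Finset.range_mono (show n ≤ 2 * (n / 2) + 1 by omega)) fun i _ hi => by
      rw [dif_neg (by simpa using hi), smul_zero],
    ← Fin.sum_univ_eq_sum_range (fun i => (pathWeight _ i * pathFunctional _ i _) •
      (if h : i < n then (.proj ⟨i, h⟩ : (Fin n → ℝ) →L[ℝ] ℝ) else 0))] at hsum
  convert hsum using 1
  · ext v
    simp [pathEnd, mom, Finset.sum_apply]
  · ext w
    simp [pathJacobian, Matrix.mulVec, dotProduct]

lemma measurable_extendPath (s₀ t₀ : ℝ) (i : ℕ) :
    Measurable fun v : Fin n → ℝ => extendPath s₀ t₀ v i := by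
  unfold extendPath
  split_ifs
  exacts [measurable_pi_apply _, measurable_const, measurable_const]

/-- The first `M + 1` slopes of the path `V` are `B`-separated, and consecutive heights up to
`V (2 * M)` differ by at least `A`. -/
structure SeparatedPath (M : ℕ) (A B : ℝ) (V : ℕ → ℝ) : Prop where
  height : ∀ r < M, A ≤ |V (2 * r) - V (2 * r + 2)|
  slope : ∀ r ≤ M, ∀ q < r, B ≤ |V (2 * r + 1) - V (2 * q + 1)|

/-- The combination of point masses at the slopes of the path whose moments are the displacements
of `pathEnd`. -/
def slopeMeasure (τ : ℝ) (V : ℕ → ℝ) (M : ℕ) : ℝ →₀ ℝ :=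
  ∑ r ∈ Finset.range (M + 1),
    (.single (slopeSeq τ V (r + 1)) (V (2 * r)) - .single (slopeSeq τ V r) (V (2 * r)))

lemma slopeMeasure_eq (τ : ℝ) (V : ℕ → ℝ) (M : ℕ) :
    slopeMeasure τ V M = .single (V (2 * M + 1)) (V (2 * M)) - .single τ (V 0) +
      ∑ r ∈ Finset.range M, .single (V (2 * r + 1)) (V (2 * r) - V (2 * r + 2)) := by
  induction M with
  | zero => simp [slopeMeasure, slopeSeq]
  | succ M ih =>
    rw [slopeMeasure, Finset.sum_range_succ, ← slopeMeasure, ih, Finset.sum_range_succ,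
      Finsupp.single_sub]
    simp only [slopeSeq, mul_add, mul_one]
    abel

lemma linearCombination_pow_slopeMeasure (τ : ℝ) (V : ℕ → ℝ) (M k : ℕ) :
    Finsupp.linearCombination ℝ (fun x : ℝ => x ^ k) (slopeMeasure τ V M) =
      ∑ r ∈ Finset.range (M + 1), V (2 * r) * (slopeSeq τ V (r + 1) ^ k - slopeSeq τ V r ^ k) := by
  simp [slopeMeasure, mul_sub]

lemma card_support_sum_single_le {ι α M : Type*} [AddCommMonoid M] (s : Finset ι) (f : ι → α)
    (c : ι → M) : (∑ i ∈ s, Finsupp.single (f i) (c i)).support.card ≤ s.card := by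
  classical
  calc (∑ i ∈ s, Finsupp.single (f i) (c i)).support.card
      ≤ (s.image f).card := Finset.card_le_card fun x hx => by
        obtain ⟨i, hi, hx⟩ := Finset.mem_biUnion.1 (Finsupp.support_finsetSum hx)
        rw [Finset.mem_singleton.1 (Finsupp.support_single_subset hx)]
        exact Finset.mem_image_of_mem f hi
    _ ≤ s.card := Finset.card_image_le

lemma card_support_add_le {α M : Type*} [AddZeroClass M] (f g : α →₀ M) :
    (f + g).support.card ≤ f.support.card + g.support.card := by
  classical
  exact (Finset.card_le_card Finsupp.support_add).trans (Finset.card_union_le _ _)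

lemma slopeMeasure_sub_slopeMeasure (τ : ℝ) {V W : ℕ → ℝ} {M : ℕ}
    (h : V (2 * M + 1) = W (2 * M + 1)) :
    slopeMeasure τ V M - slopeMeasure τ W M =
      .single (V (2 * M + 1)) (V (2 * M) - W (2 * M)) + (.single τ (W 0 - V 0) +
        ((∑ r ∈ Finset.range M, .single (V (2 * r + 1)) (V (2 * r) - V (2 * r + 2))) +
          ∑ r ∈ Finset.range M, .single (W (2 * r + 1)) (W (2 * r + 2) - W (2 * r)))) := by
  simp only [slopeMeasure_eq, h, Finsupp.single_sub, Finset.sum_sub_distrib]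
  abel

lemma extendPath_last_slope (s₀ t₀ : ℝ) (v : Fin n → ℝ) :
    extendPath s₀ t₀ v (2 * (n / 2) + 1) = t₀ := by
  rw [extendPath, dif_neg (by omega), if_neg (Nat.not_even_two_mul_add_one _)]

lemma card_support_slopeMeasure_sub_le (s₀ t₀ τ : ℝ) (v w : Fin n → ℝ) :
    (slopeMeasure τ (extendPath s₀ t₀ v) (n / 2) -
      slopeMeasure τ (extendPath s₀ t₀ w) (n / 2)).support.card ≤ n + 1 := by
  have hsum (c : ℕ → ℝ) (f : ℕ → ℝ) :=
    (card_support_sum_single_le (Finset.range (n / 2)) f c).trans_eq (Finset.card_range _)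
  have hsingle (x c : ℝ) : (Finsupp.single x c).support.card ≤ 1 :=
    Finset.card_le_card Finsupp.support_single_subset
  have hlast : (Finsupp.single (extendPath s₀ t₀ v (2 * (n / 2) + 1)) (extendPath s₀ t₀ v
      (2 * (n / 2)) - extendPath s₀ t₀ w (2 * (n / 2)))).support.card ≤ n % 2 := by
    rcases Nat.mod_two_eq_zero_or_one n with hn | hn
    · simp [extendPath, show ¬ 2 * (n / 2) < n by omega]
    · exact (hsingle _ _).trans hn.ge
  rw [slopeMeasure_sub_slopeMeasure τ (by rw [extendPath_last_slope, extendPath_last_slope])]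
  calc _ ≤ n % 2 + (1 + (n / 2 + n / 2)) :=
        (card_support_add_le _ _).trans <| add_le_add hlast <|
          (card_support_add_le _ _).trans <| add_le_add (hsingle _ _) <|
            (card_support_add_le _ _).trans <| add_le_add (hsum _ _) (hsum _ _)
    _ = n + 1 := by omega

lemma slopeMeasure_eq_of_pathEnd_eq {y₀ v w : Fin n → ℝ} {s₀ t₀ τ : ℝ}
    (h : pathEnd n y₀ τ (extendPath s₀ t₀ v) = pathEnd n y₀ τ (extendPath s₀ t₀ w)) :
    slopeMeasure τ (extendPath s₀ t₀ v) (n / 2) = slopeMeasure τ (extendPath s₀ t₀ w) (n / 2) := by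
  refine sub_eq_zero.1 (finsupp_eq_zero_of_moments_eq_zero
    (card_support_slopeMeasure_sub_le s₀ t₀ τ v w) fun k hk => ?_)
  rw [map_sub, linearCombination_pow_slopeMeasure, linearCombination_pow_slopeMeasure, sub_eq_zero]
  cases k with
  | zero => simp
  | succ k => simpa [pathEnd, mom, Finset.sum_apply] using congrFun h ⟨k, hk⟩

section Reconstruction

variable {M : ℕ} {A B τ : ℝ} {V : ℕ → ℝ}

lemma slopeMeasure_apply_slope (hB : 0 < B) (hV : SeparatedPath M A B V)
    (hτ : ∀ r ≤ M, V (2 * r + 1) ≠ τ) {r : ℕ} (hr : r < M) :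
    slopeMeasure τ V M (V (2 * r + 1)) = V (2 * r) - V (2 * r + 2) := by
  have hne {q : ℕ} (hq : q ≤ M) (hqr : q ≠ r) : V (2 * q + 1) ≠ V (2 * r + 1) := by
    intro heq
    rcases hqr.lt_or_gt with h | h
    · exact (hB.trans_le (hV.slope r hr.le q h)).ne' (by rw [heq, sub_self, abs_zero])
    · exact (hB.trans_le (hV.slope q hq r h)).ne' (by rw [heq, sub_self, abs_zero])
  rw [slopeMeasure_eq, Finsupp.add_apply, Finsupp.sub_apply, Finsupp.finsetSum_apply,
    Finsupp.single_eq_of_ne (hne le_rfl hr.ne').symm, Finsupp.single_eq_of_ne (hτ r hr.le),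
    Finset.sum_eq_single_of_mem r (Finset.mem_range.2 hr) fun q hq hqr =>
      Finsupp.single_eq_of_ne (hne (Finset.mem_range.1 hq).le hqr).symm, Finsupp.single_eq_same]
  ring

lemma slopeMeasure_apply_last (hτ : ∀ r ≤ M, V (2 * r + 1) ≠ τ) :
    slopeMeasure τ V M τ = -V 0 := by
  rw [slopeMeasure_eq, Finsupp.add_apply, Finsupp.sub_apply, Finsupp.finsetSum_apply,
    Finsupp.single_eq_of_ne (hτ M le_rfl).symm, Finsupp.single_eq_same,
    Finset.sum_eq_zero fun q hq => Finsupp.single_eq_of_ne (hτ q (Finset.mem_range.1 hq).le).symm]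
  ring

lemma range_slopes_eq (hA : 0 < A) (hB : 0 < B) (hV : SeparatedPath M A B V)
    (hτ : ∀ r ≤ M, V (2 * r + 1) ≠ τ) :
    range (fun r : Fin M => V (2 * r + 1)) =
      ↑(slopeMeasure τ V M).support \ {τ, V (2 * M + 1)} := by
  ext x
  constructor
  · rintro ⟨r, rfl⟩
    refine ⟨?_, ?_⟩
    · rw [Finset.mem_coe, Finsupp.mem_support_iff, slopeMeasure_apply_slope hB hV hτ r.2,
        ← abs_pos]
      exact hA.trans_le (hV.height r r.2)
    · rintro (h | h)
      · exact hτ r r.2.le h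
      · exact (hB.trans_le (hV.slope M le_rfl r r.2)).ne' (by rw [← h, sub_self, abs_zero])
  · rintro ⟨hx, hx'⟩
    by_contra hxr
    rw [mem_insert_iff, mem_singleton_iff, not_or] at hx'
    refine Finsupp.mem_support_iff.1 hx ?_
    rw [slopeMeasure_eq, Finsupp.add_apply, Finsupp.sub_apply, Finsupp.finsetSum_apply,
      Finsupp.single_eq_of_ne hx'.1, Finsupp.single_eq_of_ne hx'.2,
      Finset.sum_eq_zero fun q hq => Finsupp.single_eq_of_ne fun h =>
        hxr ⟨⟨q, Finset.mem_range.1 hq⟩, h.symm⟩]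
    ring

theorem eq_of_slopeMeasure_eq {W : ℕ → ℝ} (hA : 0 < A) (hB : 0 < B)
    (hV : SeparatedPath M A B V) (hW : SeparatedPath M A B W)
    (hVτ : ∀ r ≤ M, V (2 * r + 1) ≠ τ) (hWτ : ∀ r ≤ M, W (2 * r + 1) ≠ τ)
    (hlast : V (2 * M + 1) = W (2 * M + 1)) (σ : Equiv.Perm (Fin M))
    (hVσ : StrictMono fun r => V (2 * σ r + 1)) (hWσ : StrictMono fun r => W (2 * σ r + 1))
    (h : slopeMeasure τ V M = slopeMeasure τ W M) {i : ℕ} (hi : i ≤ 2 * M) : V i = W i := by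
  have hrange : range (fun r : Fin M => V (2 * r + 1)) = range fun r : Fin M => W (2 * r + 1) := by
    rw [range_slopes_eq hA hB hV hVτ, range_slopes_eq hA hB hW hWτ, h, hlast]
  have hslope {r : ℕ} (hr : r < M) : V (2 * r + 1) = W (2 * r + 1) := by
    have hσ := (hVσ.range_inj hWσ).1 <| (σ.surjective.range_comp _).trans <|
      hrange.trans (σ.surjective.range_comp _).symm
    simpa using congrFun hσ (σ.symm ⟨r, hr⟩)
  have hheight (r : ℕ) (hr : r ≤ M) : V (2 * r) = W (2 * r) := by
    induction r with
    | zero =>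
      exact neg_injective (by
        rw [mul_zero, ← slopeMeasure_apply_last hVτ, h, slopeMeasure_apply_last hWτ])
    | succ r ih =>
      have hval := slopeMeasure_apply_slope hB hW hWτ hr
      rw [← h, ← hslope hr, slopeMeasure_apply_slope hB hV hVτ hr,
        ih (Nat.le_of_succ_le hr)] at hval
      exact sub_right_injective hval
  rcases Nat.even_or_odd' i with ⟨r, rfl | rfl⟩
  exacts [hheight r (by omega), hslope (by omega)]

end Reconstruction

theorem injOn_pathEnd {A B τ : ℝ} (hA : 0 < A) (hB : 0 < B) (y₀ : Fin n → ℝ) (s₀ t₀ : ℝ)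
    (σ : Equiv.Perm (Fin (n / 2))) :
    InjOn (fun v : Fin n → ℝ => pathEnd n y₀ τ (extendPath s₀ t₀ v))
      {v | SeparatedPath (n / 2) A B (extendPath s₀ t₀ v) ∧
        (∀ r ≤ n / 2, extendPath s₀ t₀ v (2 * r + 1) ≠ τ) ∧
        StrictMono fun r => extendPath s₀ t₀ v (2 * σ r + 1)} := by
  rintro v ⟨hv, hvτ, hvσ⟩ w ⟨hw, hwτ, hwσ⟩ h
  ext i
  have hi := eq_of_slopeMeasure_eq hA hB hv hw hvτ hwτ
    (by rw [extendPath_last_slope, extendPath_last_slope]) σ hvσ hwσ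
    (slopeMeasure_eq_of_pathEnd_eq h) (i := i) (by omega)
  simpa [extendPath] using hi

lemma prod_range_ite_even {M : Type*} [CommMonoid M] (a b : M) (n : ℕ) :
    ∏ i ∈ Finset.range n, (if Even i then a else b) = a ^ ((n + 1) / 2) * b ^ (n / 2) := by
  induction n with
  | zero => simp
  | succ n ih =>
    rw [Finset.prod_range_succ, ih]
    rcases Nat.even_or_odd' n with ⟨r, rfl | rfl⟩
    · rw [if_pos (even_two_mul r), show (2 * r + 1) / 2 = r by omega,
        show (2 * r + 1 + 1) / 2 = r + 1 by omega, show 2 * r / 2 = r by omega, pow_succ,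
        mul_right_comm]
    · rw [if_neg (Nat.not_even_two_mul_add_one r), show (2 * r + 1 + 1 + 1) / 2 = r + 1 by omega,
        show (2 * r + 1 + 1) / 2 = r + 1 by omega, show (2 * r + 1) / 2 = r by omega, pow_succ b,
        mul_assoc]

/-- The degree of the Jacobian of `pathEnd` in the differences of the slopes of the path. -/
def slopeDegree (n : ℕ) : ℕ := ∑ i ∈ Finset.range n, 2 * (i / 2)

lemma slopeDegree_add_half (n : ℕ) : slopeDegree n + n / 2 = n.choose 2 := by
  induction n with
  | zero => rfl
  | succ n ih =>
    have hsucc : slopeDegree (n + 1) = slopeDegree n + 2 * (n / 2) := Finset.sum_range_succ _ n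
    rw [hsucc, Nat.choose_succ_succ' n 1, Nat.choose_one_right, ← ih]
    omega

lemma le_abs_slopePoly_eval {M : ℕ} {A B D τ : ℝ} {V : ℕ → ℝ} (hB : 0 ≤ B)
    (hV : SeparatedPath M A B V) (hτ : ∀ r ≤ M, D ≤ |V (2 * r + 1) - τ|) {r : ℕ} (hr : r ≤ M) :
    D * B ^ (2 * r) ≤ |(slopePoly (slopeSeq τ V) r).eval (slopeSeq τ V (r + 1))| := by
  have hprod : ∏ _q ∈ Finset.range r, B ^ 2 ≤
      ∏ q ∈ Finset.range r, |(V (2 * r + 1) - V (2 * q + 1)) ^ 2| :=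
    Finset.prod_le_prod (fun _ _ => by positivity) fun q hq => by
      rw [abs_pow]
      exact pow_le_pow_left₀ hB (hV.slope r hr q (Finset.mem_range.1 hq)) 2
  rw [Finset.prod_const, Finset.card_range, ← pow_mul] at hprod
  rw [slopePoly_eval, abs_mul, Finset.abs_prod]
  exact mul_le_mul (hτ r hr) hprod (by positivity) (abs_nonneg _)

theorem le_abs_det_pathJacobian {A B D τ : ℝ} {V : ℕ → ℝ} (hA : 0 ≤ A) (hB : 0 ≤ B) (hD : 0 ≤ D)
    (hV : SeparatedPath (n / 2) A B V) (hτ : ∀ r ≤ n / 2, D ≤ |V (2 * r + 1) - τ|) :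
    A ^ (n / 2) * D ^ n * B ^ slopeDegree n ≤ |(pathJacobian n τ V).det| := by
  have hweight : A ^ (n / 2) ≤ ∏ i : Fin n, |pathWeight V i| := by
    rw [← one_mul (A ^ (n / 2)), ← one_pow ((n + 1) / 2), ← prod_range_ite_even,
      Finset.prod_range]
    refine Finset.prod_le_prod (fun i _ => by split_ifs <;> positivity) fun i _ => ?_
    rcases Nat.even_or_odd' i.1 with ⟨r, hr | hr⟩
    · simp [pathWeight, hr]
    · simpa [pathWeight, hr] using hV.height r (by omega)
  have hslope : D ^ n * B ^ slopeDegree n ≤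
      ∏ i : Fin n, |(slopePoly (slopeSeq τ V) (i / 2)).eval (slopeSeq τ V (i / 2 + 1))| := by
    have hconst : D ^ n = ∏ _i ∈ Finset.range n, D := by
      rw [Finset.prod_const, Finset.card_range]
    rw [slopeDegree, ← Finset.prod_pow_eq_pow_sum, hconst, ← Finset.prod_mul_distrib,
      Finset.prod_range]
    exact Finset.prod_le_prod (fun i _ => by positivity) fun i _ =>
      le_abs_slopePoly_eval hB hV hτ (by omega)
  rw [det_pathJacobian, abs_mul, Finset.abs_prod, Finset.abs_prod, mul_assoc]
  exact mul_le_mul hweight hslope (by positivity) (by positivity)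

lemma measure_mul_le_of_le_abs_det {E : Type*} [NormedAddCommGroup E] [NormedSpace ℝ E]
    [FiniteDimensional ℝ E] [MeasurableSpace E] [BorelSpace E] (μ : Measure E) [μ.IsAddHaarMeasure]
    {f : E → E} {f' : E → E →L[ℝ] E} {S K : Set E} {c : ℝ} (hS : MeasurableSet S)
    (hf : ∀ x ∈ S, HasFDerivAt f (f' x) x) (hinj : InjOn f S) (hc : ∀ x ∈ S, c ≤ |(f' x).det|)
    (hK : MapsTo f S K) : μ S * ENNReal.ofReal c ≤ μ K :=
  calc μ S * ENNReal.ofReal c = ∫⁻ _ in S, ENNReal.ofReal c ∂μ := by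
        rw [setLIntegral_const, mul_comm]
    _ ≤ ∫⁻ x in S, ENNReal.ofReal |(f' x).det| ∂μ :=
        setLIntegral_mono' hS fun x hx => ENNReal.ofReal_le_ofReal (hc x hx)
    _ = μ (f '' S) := lintegral_abs_det_fderiv_eq_addHaar_image μ hS
        (fun x hx => (hf x hx).hasFDerivWithinAt) hinj
    _ ≤ μ K := measure_mono hK.image_subset

lemma SeparatedPath.injective_slopes {M : ℕ} {A B : ℝ} {V : ℕ → ℝ} (hB : 0 < B)
    (hV : SeparatedPath M A B V) : Function.Injective fun r : Fin M => V (2 * r + 1) := by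
  have hne {q r : Fin M} (hqr : q < r) : V (2 * q + 1) ≠ V (2 * r + 1) := fun h =>
    absurd (hV.slope r r.2.le q hqr) (by simpa [h] using hB)
  intro q r hqr
  by_contra hqr'
  exact (lt_or_gt_of_ne hqr').elim (fun h => hne h hqr) fun h => hne h hqr.symm

/-- The endpoint map is injective on paths whose slopes are ordered in the same way, whence the
factorial. -/
theorem volume_paths_mul_le {A B D τ s₀ t₀ : ℝ} {y₀ : Fin n → ℝ} (hA : 0 < A) (hB : 0 < B)
    (hD : 0 < D) {S K : Set (Fin n → ℝ)} (hS : MeasurableSet S)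
    (hsep : ∀ v ∈ S, SeparatedPath (n / 2) A B (extendPath s₀ t₀ v))
    (hτ : ∀ v ∈ S, ∀ r ≤ n / 2, D ≤ |extendPath s₀ t₀ v (2 * r + 1) - τ|)
    (hK : ∀ v ∈ S, pathEnd n y₀ τ (extendPath s₀ t₀ v) ∈ K) :
    volume S * ENNReal.ofReal (A ^ (n / 2) * D ^ n * B ^ slopeDegree n) ≤
      (n / 2).factorial * volume K := by
  set c := ENNReal.ofReal (A ^ (n / 2) * D ^ n * B ^ slopeDegree n)
  let P (σ : Equiv.Perm (Fin (n / 2))) : Set (Fin n → ℝ) :=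
    {v | StrictMono fun r => extendPath s₀ t₀ v (2 * σ r + 1)}
  have hP (σ) : MeasurableSet (P σ) := by
    simp only [P, StrictMono, ofPred_forall]
    exact .iInter fun _ => .iInter fun _ => .iInter fun _ =>
      measurableSet_lt (measurable_extendPath _ _ _) (measurable_extendPath _ _ _)
  have hcover : S ⊆ ⋃ σ, S ∩ P σ := fun v hv => mem_iUnion.2
    ⟨Tuple.sort fun r => extendPath s₀ t₀ v (2 * r + 1), hv,
      (Tuple.monotone_sort _).strictMono_of_injective
        (((hsep v hv).injective_slopes hB).comp (Equiv.injective _))⟩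
  have hne (v) (hv : v ∈ S) (r) (hr : r ≤ n / 2) : extendPath s₀ t₀ v (2 * r + 1) ≠ τ :=
    sub_ne_zero.1 (abs_pos.1 (hD.trans_le (hτ v hv r hr)))
  have hinj (σ) : InjOn (fun v => pathEnd n y₀ τ (extendPath s₀ t₀ v)) (S ∩ P σ) := by
    refine (injOn_pathEnd hA hB y₀ s₀ t₀ σ).mono ?_
    exact fun v hv => ⟨hsep v hv.1, hne v hv.1, hv.2⟩
  have hpiece (σ) : volume (S ∩ P σ) * c ≤ volume K := by
    refine measure_mul_le_of_le_abs_det volume (hS.inter (hP σ))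
      (fun v _ => hasFDerivAt_pathEnd y₀ s₀ t₀ τ v) (hinj σ) (fun v hv => ?_) fun v hv => hK v hv.1
    · rw [ContinuousLinearMap.det, LinearMap.coe_toContinuousLinearMap, LinearMap.det_toLin']
      exact le_abs_det_pathJacobian hA.le hB.le hD.le (hsep v hv.1) (hτ v hv.1)
  calc volume S * c ≤ (∑ σ, volume (S ∩ P σ)) * c := by
        gcongr
        exact (measure_mono hcover).trans (measure_iUnion_fintype_le _ _)
    _ ≤ ∑ _σ : Equiv.Perm (Fin (n / 2)), volume K := by
        rw [Finset.sum_mul]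
        exact Finset.sum_le_sum fun σ _ => hpiece σ
    _ = (n / 2).factorial * volume K := by simp [Fintype.card_perm]

lemma lintegral_inv_add_sq {R : ℝ} (hR : 0 < R) (c : ℝ) :
    ∫⁻ t : ℝ, ENNReal.ofReal ((R ^ 2 + (t - c) ^ 2)⁻¹) = ENNReal.ofReal (Real.pi * R⁻¹) := by
  have hscale (t : ℝ) : (R ^ 2 + t ^ 2)⁻¹ = (R ^ 2)⁻¹ * (1 + (R⁻¹ * t) ^ 2)⁻¹ := by
    rw [← mul_inv]
    congr 1
    field_simp
  have hint : Integrable fun t : ℝ => (R ^ 2)⁻¹ * (1 + (R⁻¹ * t) ^ 2)⁻¹ :=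
    (integrable_inv_one_add_sq.comp_mul_left' (inv_ne_zero hR.ne')).const_mul _
  rw [lintegral_sub_right_eq_self (fun t : ℝ => ENNReal.ofReal ((R ^ 2 + t ^ 2)⁻¹)) c]
  simp_rw [hscale]
  rw [← ofReal_integral_eq_lintegral_ofReal hint (.of_forall fun t => by positivity),
    integral_const_mul, Measure.integral_comp_mul_left (fun t : ℝ => (1 + t ^ 2)⁻¹),
    integral_univ_inv_one_add_sq, inv_inv, abs_of_pos hR, smul_eq_mul]
  congr 1
  field_simp

lemma lintegral_inv_add_abs_pow_le (hn : 2 ≤ n) {R : ℝ} (hR : 0 < R) (c : ℝ) :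
    ∫⁻ t : ℝ, ENNReal.ofReal (((R + |t - c|) ^ n)⁻¹) ≤
      ENNReal.ofReal (Real.pi * (R ^ (n - 1))⁻¹) := by
  obtain ⟨k, rfl⟩ := Nat.exists_eq_add_of_le' hn
  have hpoint (t : ℝ) : ((R + |t - c|) ^ (k + 2))⁻¹ ≤ (R ^ k)⁻¹ * (R ^ 2 + (t - c) ^ 2)⁻¹ := by
    rw [← mul_inv, pow_add, ← sq_abs (t - c)]
    have habs := abs_nonneg (t - c)
    gcongr
    · linarith
    · nlinarith
  calc ∫⁻ t : ℝ, ENNReal.ofReal (((R + |t - c|) ^ (k + 2))⁻¹)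
      ≤ ∫⁻ t : ℝ, ENNReal.ofReal ((R ^ k)⁻¹) * ENNReal.ofReal ((R ^ 2 + (t - c) ^ 2)⁻¹) :=
        lintegral_mono fun t => by
          rw [← ENNReal.ofReal_mul (by positivity)]
          exact ENNReal.ofReal_le_ofReal (hpoint t)
    _ = ENNReal.ofReal ((R ^ k)⁻¹ * (Real.pi * R⁻¹)) := by
        rw [lintegral_const_mul' _ _ ENNReal.ofReal_ne_top, lintegral_inv_add_sq hR,
          ← ENNReal.ofReal_mul (by positivity)]
    _ = ENNReal.ofReal (Real.pi * (R ^ (k + 2 - 1))⁻¹) := by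
        rw [show k + 2 - 1 = k + 1 by omega, pow_succ, mul_inv]
        ring_nf

lemma mul_ofReal_le_mul_ofReal_inv {x y : ℝ≥0∞} {p q : ℝ} (hp : 0 ≤ p) (hq : 0 < q)
    (h : x * ENNReal.ofReal (p * q) ≤ y) : x * ENNReal.ofReal p ≤ y * ENNReal.ofReal q⁻¹ := by
  rwa [ENNReal.ofReal_inv_of_pos hq, ← div_eq_mul_inv, ENNReal.le_div_iff_mul_le
    (.inl (by simpa using hq)) (.inl ENNReal.ofReal_ne_top), mul_assoc, ← ENNReal.ofReal_mul hp]

/-- The last slopes `τ` for which the path with parameters `V` and last line of slope `τ` ends on a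
line of `F`, at distance at least `R / 2` from the other slopes of the path. -/
def goodEnds (F : Set (Pt n)) (y₀ : Fin n → ℝ) (R : ℝ) (V : ℕ → ℝ) : Set ℝ :=
  {τ | (τ, pathEnd n y₀ τ V) ∈ F ∧ ∀ r ≤ n / 2, R / 2 ≤ |V (2 * r + 1) - τ|}

lemma measurable_mom (n : ℕ) : Measurable (mom n) :=
  measurable_pi_lambda _ fun i => measurable_id.pow_const (i.1 + 1)

lemma measurable_pathEnd (y₀ : Fin n → ℝ) (s₀ t₀ : ℝ) :
    Measurable fun p : ℝ × (Fin n → ℝ) => pathEnd n y₀ p.1 (extendPath s₀ t₀ p.2) := by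
  have hV (i : ℕ) : Measurable fun p : ℝ × (Fin n → ℝ) => extendPath s₀ t₀ p.2 i :=
    (measurable_extendPath s₀ t₀ i).comp measurable_snd
  have hslope (r : ℕ) :
      Measurable fun p : ℝ × (Fin n → ℝ) => slopeSeq p.1 (extendPath s₀ t₀ p.2) r := by
    cases r with
    | zero => exact measurable_fst
    | succ r => exact hV (2 * r + 1)
  refine measurable_const.add (Finset.measurable_fun_sum _ fun r _ => (hV (2 * r)).smul ?_)
  exact ((measurable_mom n).comp (hslope (r + 1))).sub ((measurable_mom n).comp (hslope r))

lemma measurableSet_goodEnds {F : Set (Pt n)} (hF : MeasurableSet F) (y₀ : Fin n → ℝ)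
    (R s₀ t₀ : ℝ) :
    MeasurableSet {p : ℝ × (Fin n → ℝ) | p.1 ∈ goodEnds F y₀ R (extendPath s₀ t₀ p.2)} := by
  have hfar : MeasurableSet {p : ℝ × (Fin n → ℝ) |
      ∀ r ≤ n / 2, R / 2 ≤ |extendPath s₀ t₀ p.2 (2 * r + 1) - p.1|} := by
    simp only [ofPred_forall]
    refine .iInter fun r => .iInter fun _ => measurableSet_le measurable_const ?_
    exact (((measurable_extendPath s₀ t₀ _).comp measurable_snd).sub measurable_fst).abs
  exact (measurable_fst.prodMk (measurable_pathEnd y₀ s₀ t₀) hF).inter hfar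

section PathCount

variable {A B R c s₀ t₀ : ℝ} {y₀ : Fin n → ℝ} {F : Set (Pt n)} {Lm : ℝ≥0∞} {S : Set (Fin n → ℝ)}

lemma volume_paths_to_mul_le (hA : 0 < A) (hB : 0 < B) (hR : 0 < R) (hF : MeasurableSet F)
    (hS : MeasurableSet S) (hsep : ∀ v ∈ S, SeparatedPath (n / 2) A B (extendPath s₀ t₀ v))
    (hc : ∀ v ∈ S, ∀ r ≤ n / 2, |extendPath s₀ t₀ v (2 * r + 1) - c| ≤ R / 2) (τ : ℝ) :
    volume {v ∈ S | τ ∈ goodEnds F y₀ R (extendPath s₀ t₀ v)} *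
        ENNReal.ofReal (A ^ (n / 2) * B ^ slopeDegree n) ≤
      (n / 2).factorial * sliceVol n F τ *
        ENNReal.ofReal (4 ^ n * ((R + |τ - c|) ^ n)⁻¹) := by
  have hmeas : MeasurableSet {v ∈ S | τ ∈ goodEnds F y₀ R (extendPath s₀ t₀ v)} :=
    hS.inter (measurable_prodMk_left (measurableSet_goodEnds hF y₀ R s₀ t₀))
  have hdist (x : ℝ) (hx : |x - c| ≤ R / 2) (hxτ : R / 2 ≤ |x - τ|) :
      (R + |τ - c|) / 4 ≤ |x - τ| := by
    have := abs_sub_le τ x c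
    rw [abs_sub_comm τ x] at this
    linarith
  have hcount := volume_paths_mul_le (D := (R + |τ - c|) / 4) (K := {y | (τ, y) ∈ F}) hA hB
    (by positivity) hmeas (fun v hv => hsep v hv.1)
    (fun v hv r hr => hdist _ (hc v hv.1 r hr) (hv.2.2 r hr)) fun v hv => hv.2.1
  rw [mul_right_comm] at hcount
  convert mul_ofReal_le_mul_ofReal_inv (by positivity) (by positivity) hcount using 3
  · rfl
  · rw [div_pow, inv_div, div_eq_mul_inv]

theorem measure_mul_volume_paths_le (hn : 2 ≤ n) (hA : 0 < A) (hB : 0 < B) (hR : 0 < R)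
    (hF : MeasurableSet F) (hLm : ∀ t, sliceVol n F t ≤ Lm) (hS : MeasurableSet S)
    (hsep : ∀ v ∈ S, SeparatedPath (n / 2) A B (extendPath s₀ t₀ v))
    (hc : ∀ v ∈ S, ∀ r ≤ n / 2, |extendPath s₀ t₀ v (2 * r + 1) - c| ≤ R / 2) {b : ℝ≥0∞}
    (hb : ∀ v ∈ S, b ≤ volume (goodEnds F y₀ R (extendPath s₀ t₀ v))) :
    b * volume S * ENNReal.ofReal (A ^ (n / 2) * B ^ slopeDegree n * R ^ (n - 1)) ≤
      ENNReal.ofReal ((n / 2).factorial * 4 ^ n * Real.pi) * Lm := by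
  set m := ENNReal.ofReal (A ^ (n / 2) * B ^ slopeDegree n)
  let G : Set (ℝ × (Fin n → ℝ)) := {p | p.2 ∈ S ∧ p.1 ∈ goodEnds F y₀ R (extendPath s₀ t₀ p.2)}
  have hG : MeasurableSet G := (measurable_snd hS).inter (measurableSet_goodEnds hF y₀ R s₀ t₀)
  have hlower : b * volume S ≤ volume G := by
    rw [Measure.volume_eq_prod, Measure.prod_apply_symm hG, ← setLIntegral_const]
    refine (setLIntegral_mono' hS fun v hv => (hb v hv).trans (measure_mono ?_)).trans
      (setLIntegral_le_lintegral _ _)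
    exact fun τ hτ => ⟨hv, hτ⟩
  have hupper : volume G * m ≤
      (n / 2).factorial * Lm * ENNReal.ofReal (4 ^ n * (Real.pi * (R ^ (n - 1))⁻¹)) := by
    rw [Measure.volume_eq_prod, Measure.prod_apply hG,
      ← lintegral_mul_const' _ _ ENNReal.ofReal_ne_top]
    calc ∫⁻ τ, volume (Prod.mk τ ⁻¹' G) * m
        ≤ ∫⁻ τ, (n / 2).factorial * Lm *
            (ENNReal.ofReal (4 ^ n) * ENNReal.ofReal (((R + |τ - c|) ^ n)⁻¹)) := by
          refine lintegral_mono fun τ => ?_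
          rw [← ENNReal.ofReal_mul (by positivity)]
          exact (volume_paths_to_mul_le hA hB hR hF hS hsep hc τ).trans (by gcongr; exact hLm τ)
      _ ≤ _ := by
          rw [lintegral_const_mul _ (by fun_prop), lintegral_const_mul _ (by fun_prop),
            ENNReal.ofReal_mul (by positivity)]
          gcongr
          exact lintegral_inv_add_abs_pow_le hn hR c
  calc b * volume S * ENNReal.ofReal (A ^ (n / 2) * B ^ slopeDegree n * R ^ (n - 1))
      ≤ volume G * m * ENNReal.ofReal (R ^ (n - 1)) := by
        rw [ENNReal.ofReal_mul (by positivity), ← mul_assoc]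
        gcongr
    _ ≤ (n / 2).factorial * Lm * ENNReal.ofReal (4 ^ n * (Real.pi * (R ^ (n - 1))⁻¹)) *
          ENNReal.ofReal (R ^ (n - 1)) := by gcongr
    _ = ENNReal.ofReal ((n / 2).factorial * 4 ^ n * Real.pi) * Lm := by
        rw [mul_assoc, ← ENNReal.ofReal_mul (by positivity), mul_assoc (4 ^ n), mul_assoc Real.pi,
          inv_mul_cancel₀ (by positivity), mul_one, mul_assoc ((n / 2).factorial : ℝ),
          ENNReal.ofReal_mul (by positivity) (p := ((n / 2).factorial : ℝ)),
          ENNReal.ofReal_natCast]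
        ring

end PathCount

end PolygonalPath

section Tower

variable {ι : Type*} [Fintype ι] [LinearOrder ι] {X : ι → Type*} [∀ i, MeasurableSpace (X i)]
  (μ : ∀ i, Measure (X i)) [∀ i, SigmaFinite (μ i)] {C : ι → Set (∀ i, X i)} {m : ι → ℝ≥0∞}

lemma prod_le_lmarginal_iInter (hC : ∀ i, MeasurableSet (C i))
    (hupdate : ∀ ⦃i j⦄, i < j → ∀ v x, Function.update v i x ∈ C j ↔ v ∈ C j)
    (hm : ∀ i v, (∀ j, i < j → v ∈ C j) → m i ≤ μ i {x | Function.update v i x ∈ C i})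
    {s : Finset ι} (hs : IsLowerSet (s : Set ι)) {v : ∀ i, X i} (hv : ∀ j ∉ s, v ∈ C j) :
    ∏ i ∈ s, m i ≤ lmarginal μ s ((⋂ i, C i).indicator 1) v := by
  induction s using Finset.induction_on_max generalizing v with
  | empty =>
    have hv' : v ∈ ⋂ i, C i := mem_iInter.2 fun j => hv j (Finset.notMem_empty j)
    simp [hv']
  | insert i s hmax ih =>
    have hi : i ∉ s := fun h => (hmax i h).false
    have hs' : IsLowerSet (s : Set ι) := fun x y hyx hx =>
      (Finset.mem_insert.1 (hs hyx (Finset.mem_insert_of_mem hx))).resolve_left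
        (hyx.trans_lt (hmax x hx)).ne
    have hlt {j : ι} (hj : j ∉ insert i s) : i < j :=
      lt_of_not_ge fun hji => hj (hs hji (Finset.mem_insert_self i s))
    have hmem (x) (hx : Function.update v i x ∈ C i) (j) (hj : j ∉ s) :
        Function.update v i x ∈ C j := by
      rcases eq_or_ne j i with rfl | hji
      · exact hx
      · have hj' : j ∉ insert i s := by simp [hji, hj]
        exact (hupdate (hlt hj') v x).2 (hv j hj')
    have hge {j : ι} (hij : i < j) : j ∉ insert i s := by
      simpa [hij.ne'] using fun h => hij.not_gt (hmax j h)
    rw [Finset.prod_insert hi, lmarginal_insert _ (measurable_one.indicator (.iInter hC)) hi,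
      mul_comm]
    calc (∏ k ∈ s, m k) * m i
        ≤ (∏ k ∈ s, m k) * μ i {x | Function.update v i x ∈ C i} := by
          gcongr
          exact hm i v fun j hij => hv j (hge hij)
      _ = ∫⁻ _ in {x | Function.update v i x ∈ C i}, ∏ k ∈ s, m k ∂μ i := by
          rw [setLIntegral_const]
      _ ≤ ∫⁻ x in {x | Function.update v i x ∈ C i},
            lmarginal μ s ((⋂ i, C i).indicator 1) (Function.update v i x) ∂μ i :=
          setLIntegral_mono' (measurable_update v (hC i)) fun x hx => ih hs' (hmem x hx)
      _ ≤ _ := setLIntegral_le_lintegral _ _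

theorem prod_le_measure_pi_iInter [Nonempty (∀ i, X i)] (hC : ∀ i, MeasurableSet (C i))
    (hupdate : ∀ ⦃i j⦄, i < j → ∀ v x, Function.update v i x ∈ C j ↔ v ∈ C j)
    (hm : ∀ i v, (∀ j, i < j → v ∈ C j) → m i ≤ μ i {x | Function.update v i x ∈ C i}) :
    ∏ i, m i ≤ Measure.pi μ (⋂ i, C i) := by
  inhabit ∀ i, X i
  have h := prod_le_lmarginal_iInter μ hC hupdate hm (s := Finset.univ) (v := default)
    (by simpa using isLowerSet_univ) fun j hj => absurd (Finset.mem_univ j) hj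
  rwa [lmarginal_univ, lintegral_indicator_one (.iInter hC)] at h

end Tower

section Far

variable {κ : Type*} {J : Finset κ} {T : Set ℝ} {h : ℝ}

lemma volume_le_volume_far_add {ε : ℝ≥0∞} (p : κ → ℝ)
    (hball : ∀ x, volume (T ∩ Metric.ball x h) ≤ ε) :
    volume T ≤ volume {x ∈ T | ∀ j ∈ J, h ≤ |p j - x|} + J.card * ε := by
  have hcover : T ⊆ {x ∈ T | ∀ j ∈ J, h ≤ |p j - x|} ∪ ⋃ j ∈ J, T ∩ Metric.ball (p j) h := by
    intro x hx
    by_cases hfar : ∀ j ∈ J, h ≤ |p j - x|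
    · exact .inl ⟨hx, hfar⟩
    · push Not at hfar
      obtain ⟨j, hj, hlt⟩ := hfar
      exact .inr (mem_biUnion hj ⟨hx, by rwa [Metric.mem_ball', Real.dist_eq]⟩)
  refine (measure_mono hcover).trans ((measure_union_le _ _).trans ?_)
  gcongr
  refine (measure_biUnion_finset_le _ _).trans ((Finset.sum_le_sum fun j _ => hball (p j)).trans ?_)
  rw [Finset.sum_const, nsmul_eq_mul]

lemma half_le_volume_far {δ ε : ℝ≥0∞} (p : κ → ℝ)
    (hball : ∀ x, volume (T ∩ Metric.ball x h) ≤ ε) (hδ : δ ≠ ⊤) (hT : δ ≤ volume T)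
    (hε : J.card * ε ≤ δ / 2) :
    δ / 2 ≤ volume {x ∈ T | ∀ j ∈ J, h ≤ |p j - x|} := by
  rw [← ENNReal.sub_half hδ]
  exact tsub_le_iff_right.2 (hT.trans ((volume_le_volume_far_add p hball).trans
    (add_le_add_right hε _)))

lemma ofReal_half_le_volume_far (p : κ → ℝ) {g m : ℝ} (hm : 0 < m) (hJ : J.card ≤ m)
    (hT : ENNReal.ofReal g ≤ volume T) :
    ENNReal.ofReal (g / 2) ≤ volume {x ∈ T | ∀ j ∈ J, g / (4 * m) ≤ |p j - x|} := by
  rcases le_total g 0 with hg | hg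
  · simp [ENNReal.ofReal_of_nonpos (div_nonpos_of_nonpos_of_nonneg hg zero_le_two)]
  have hball (x : ℝ) : volume (T ∩ Metric.ball x (g / (4 * m))) ≤
      ENNReal.ofReal (2 * (g / (4 * m))) :=
    (measure_mono inter_subset_right).trans (Real.volume_ball x _).le
  have hhalf : ENNReal.ofReal (g / 2) = ENNReal.ofReal g / 2 := by
    rw [ENNReal.ofReal_div_of_pos two_pos, ENNReal.ofReal_ofNat]
  rw [hhalf]
  refine half_le_volume_far p hball ENNReal.ofReal_ne_top hT ?_
  rw [← hhalf, ← ENNReal.ofReal_natCast, ← ENNReal.ofReal_mul (by positivity)]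
  refine ENNReal.ofReal_le_ofReal ?_
  calc (J.card : ℝ) * (2 * (g / (4 * m))) ≤ m * (2 * (g / (4 * m))) := by gcongr
    _ = g / 2 := by field_simp; ring

end Far

section Incidences

variable {n : ℕ}

/-- An incident pair of a point and a line: `(s, t, y)` stands for the line with slope `t` and base
point `y` together with its point at height `s`. -/
abbrev Incidence (n : ℕ) := ℝ × Pt n

/-- The point of an incidence; its line is `Prod.snd`. -/
def incidencePoint (w : Incidence n) : Pt n := (w.1, w.2.2 + w.1 • mom n w.2.1)

/-- The incidence consisting of the point `z` and the line of slope `t` through it. -/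
def incidenceAt (z : Pt n) (t : ℝ) : Incidence n := (z.1, t, z.2 - z.1 • mom n t)

/-- The heights of the points which form an incidence of `W` with the line `z`. -/
def lineFibre (W : Set (Incidence n)) (z : Pt n) : Set ℝ := {s | (s, z) ∈ W}

/-- The slopes of the lines which form an incidence of `W` with the point `z`. -/
def pointFibre (W : Set (Incidence n)) (z : Pt n) : Set ℝ := {t | incidenceAt z t ∈ W}

/-- The slopes of the lines of `F` through the point `z`. -/
def pencil (F : Set (Pt n)) (z : Pt n) : Set ℝ := {t | (incidenceAt z t).2 ∈ F}

/-- The parameters which lead from the incidence `w` to an incidence of `W` in the `k`-th step of a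
path: the even steps move the point along the line, the odd ones turn the line about the point. -/
def stepFibre (W : Set (Incidence n)) (k : ℕ) (w : Incidence n) : Set ℝ :=
  if Even k then lineFibre W w.2 else pointFibre W (incidencePoint w)

/-- The base point of the line of slope `V (2 * r + 1)` of a path `V`. -/
def pathBase (y₀ : Fin n → ℝ) (V : ℕ → ℝ) (r : ℕ) : Fin n → ℝ :=
  y₀ + ∑ q ∈ Finset.Ico r (n / 2),
    V (2 * q + 2) • (mom n (V (2 * q + 3)) - mom n (V (2 * q + 1)))

/-- The incidence of a path `V` determined by its parameters from the `k`-th one on. -/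
def pathIncidence (y₀ : Fin n → ℝ) (V : ℕ → ℝ) (k : ℕ) : Incidence n :=
  if Even k then (V k, V (k + 1), pathBase y₀ V (k / 2))
  else (V (k + 1), V k, pathBase y₀ V (k / 2))

lemma pathIncidence_two_mul (y₀ : Fin n → ℝ) (V : ℕ → ℝ) (r : ℕ) :
    pathIncidence y₀ V (2 * r) = (V (2 * r), V (2 * r + 1), pathBase y₀ V r) := by
  simp [pathIncidence]

lemma pathIncidence_two_mul_add_one (y₀ : Fin n → ℝ) (V : ℕ → ℝ) (r : ℕ) :
    pathIncidence y₀ V (2 * r + 1) = (V (2 * r + 2), V (2 * r + 1), pathBase y₀ V r) := by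
  simp [pathIncidence, show (2 * r + 1) / 2 = r by omega]

lemma pathBase_eq_add (y₀ : Fin n → ℝ) (V : ℕ → ℝ) {r : ℕ} (hr : r < n / 2) :
    pathBase y₀ V r = pathBase y₀ V (r + 1) +
      V (2 * r + 2) • (mom n (V (2 * r + 3)) - mom n (V (2 * r + 1))) := by
  rw [pathBase, pathBase, Finset.sum_eq_sum_Ico_succ_bot hr]
  abel

lemma pathIncidence_mem_iff {y₀ : Fin n → ℝ} {V : ℕ → ℝ} {W : Set (Incidence n)} {k : ℕ}
    (hk : k < n) : pathIncidence y₀ V k ∈ W ↔ V k ∈ stepFibre W k (pathIncidence y₀ V (k + 1)) := by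
  rcases Nat.even_or_odd' k with ⟨r, rfl | rfl⟩
  · rw [stepFibre, if_pos (even_two_mul r), pathIncidence_two_mul, pathIncidence_two_mul_add_one,
      lineFibre, mem_ofPred_eq]
  · rw [stepFibre, if_neg (Nat.not_even_two_mul_add_one r), pathIncidence_two_mul_add_one,
      show 2 * r + 1 + 1 = 2 * (r + 1) by ring, pathIncidence_two_mul,
      pathBase_eq_add _ _ (by omega)]
    simp only [pointFibre, incidenceAt, incidencePoint, mem_ofPred_eq]
    rw [smul_sub]
    ring_nf

lemma pathIncidence_congr {y₀ : Fin n → ℝ} {V V' : ℕ → ℝ} {k : ℕ} (h : ∀ i, k ≤ i → V i = V' i) :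
    pathIncidence y₀ V k = pathIncidence y₀ V' k := by
  have hbase : pathBase y₀ V (k / 2) = pathBase y₀ V' (k / 2) := by
    refine congrArg (y₀ + ·) (Finset.sum_congr rfl fun q hq => ?_)
    have := (Finset.mem_Ico.1 hq).1
    rw [h _ (by omega), h _ (by omega), h _ (by omega)]
  rw [pathIncidence, pathIncidence, h k le_rfl, h (k + 1) k.le_succ, hbase]

lemma pathIncidence_extendPath_last (y₀ : Fin n → ℝ) (s₀ t₀ : ℝ) (v : Fin n → ℝ) :
    pathIncidence y₀ (extendPath s₀ t₀ v) n = (s₀, t₀, y₀) := by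
  have hbase : pathBase y₀ (extendPath s₀ t₀ v) (n / 2) = y₀ := by simp [pathBase]
  rw [pathIncidence, hbase, extendPath, extendPath, dif_neg (by omega), dif_neg (by omega)]
  by_cases hn : Even n <;> simp [hn, Nat.even_add_one]

lemma pathEnd_eq_incidenceAt (y₀ : Fin n → ℝ) (τ : ℝ) (V : ℕ → ℝ) :
    (τ, pathEnd n y₀ τ V) = (incidenceAt (incidencePoint (pathIncidence y₀ V 0)) τ).2 := by
  rw [pathEnd, Finset.sum_range_succ', ← mul_zero 2, pathIncidence_two_mul, pathBase,
    ← Finset.range_eq_Ico]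
  simp only [incidenceAt, incidencePoint, slopeSeq, mul_zero, zero_add, smul_sub, Prod.mk.injEq,
    true_and]
  rw [← add_assoc, ← add_sub_assoc]
  rfl

lemma extendPath_update_of_lt {s₀ t₀ x : ℝ} {v : Fin n → ℝ} {k : Fin n} {i : ℕ} (hi : k < i) :
    extendPath s₀ t₀ (Function.update v k x) i = extendPath s₀ t₀ v i := by
  unfold extendPath
  split_ifs with h
  · rw [Function.update_of_ne (by simpa [Fin.ext_iff] using hi.ne')]
  all_goals rfl

lemma extendPath_update_self (s₀ t₀ x : ℝ) (v : Fin n → ℝ) (k : Fin n) :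
    extendPath s₀ t₀ (Function.update v k x) k = x := by
  simp [extendPath]

lemma measurable_pathIncidence (y₀ : Fin n → ℝ) (s₀ t₀ : ℝ) (k : ℕ) :
    Measurable fun v : Fin n → ℝ => pathIncidence y₀ (extendPath s₀ t₀ v) k := by
  have hV := measurable_extendPath (n := n) s₀ t₀
  have hbase (r : ℕ) : Measurable fun v : Fin n → ℝ => pathBase y₀ (extendPath s₀ t₀ v) r :=
    measurable_const.add (Finset.measurable_fun_sum _ fun q _ => (hV _).smul
      (((measurable_mom n).comp (hV _)).sub ((measurable_mom n).comp (hV _))))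
  unfold pathIncidence
  split_ifs
  exacts [(hV _).prodMk ((hV _).prodMk (hbase _)), (hV _).prodMk ((hV _).prodMk (hbase _))]

/-- The path parameters whose `k`-th step leads to an incidence of `W` and keeps a distance at
least `g` from all earlier parameters, a path being built up from its last parameters. -/
def admissibleStep (y₀ : Fin n → ℝ) (s₀ t₀ : ℝ) (W : Set (Incidence n)) (g : ℝ) (k : ℕ) :
    Set (Fin n → ℝ) :=
  {v | pathIncidence y₀ (extendPath s₀ t₀ v) k ∈ W ∧
    ∀ j ∈ Finset.Ioc k (n + 1), g ≤ |extendPath s₀ t₀ v j - extendPath s₀ t₀ v k|}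

lemma measurableSet_admissibleStep {W : Set (Incidence n)} (hW : MeasurableSet W)
    (y₀ : Fin n → ℝ) (s₀ t₀ g : ℝ) (k : ℕ) :
    MeasurableSet (admissibleStep y₀ s₀ t₀ W g k) := by
  have hfar : MeasurableSet {v : Fin n → ℝ | ∀ j ∈ Finset.Ioc k (n + 1),
      g ≤ |extendPath s₀ t₀ v j - extendPath s₀ t₀ v k|} := by
    simp only [ofPred_forall]
    exact .iInter fun j => .iInter fun _ => measurableSet_le measurable_const
      ((measurable_extendPath s₀ t₀ j).sub (measurable_extendPath s₀ t₀ k)).abs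
  exact (measurable_pathIncidence y₀ s₀ t₀ k hW).inter hfar

lemma update_mem_admissibleStep_iff {y₀ v : Fin n → ℝ} {s₀ t₀ g : ℝ} {W : Set (Incidence n)}
    {i j : Fin n} (hij : i < j) (x : ℝ) :
    Function.update v i x ∈ admissibleStep y₀ s₀ t₀ W g j ↔
      v ∈ admissibleStep y₀ s₀ t₀ W g j := by
  have hext (k : ℕ) (hk : j.1 ≤ k) :
      extendPath s₀ t₀ (Function.update v i x) k = extendPath s₀ t₀ v k :=
    extendPath_update_of_lt (lt_of_lt_of_le hij hk)
  refine and_congr (by rw [pathIncidence_congr hext]) (forall₂_congr fun k hk => ?_)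
  rw [hext k (Finset.mem_Ioc.1 hk).1.le, hext j le_rfl]

/-- The two kinds of step of a path alternate, and so do the gaps `a` and `b` belonging to them. -/
def stepGap (a b : ℝ) (k : ℕ) : ℝ := if Even k then a else b

lemma le_volume_update_mem_admissibleStep {y₀ v : Fin n → ℝ} {s₀ t₀ g : ℝ} {W : Set (Incidence n)}
    (k : Fin n) (hg : ENNReal.ofReal g ≤
      volume (stepFibre W k (pathIncidence y₀ (extendPath s₀ t₀ v) (k + 1)))) :
    ENNReal.ofReal (g / 2) ≤ volume
      {x | Function.update v k x ∈ admissibleStep y₀ s₀ t₀ W (g / (4 * (n + 1))) k} := by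
  have hcard : ((Finset.Ioc k.1 (n + 1)).card : ℝ) ≤ n + 1 := by
    rw [Nat.card_Ioc]
    exact_mod_cast Nat.sub_le (n + 1) k
  refine (ofReal_half_le_volume_far (extendPath s₀ t₀ v) (by positivity) hcard hg).trans
    (measure_mono ?_)
  rintro x ⟨hx, hfar⟩
  have hext (i : ℕ) (hi : k.1 + 1 ≤ i) :
      extendPath s₀ t₀ (Function.update v k x) i = extendPath s₀ t₀ v i :=
    extendPath_update_of_lt hi
  refine ⟨?_, fun j hj => ?_⟩
  · rwa [pathIncidence_mem_iff k.2, pathIncidence_congr hext, extendPath_update_self]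
  · rw [hext j (Finset.mem_Ioc.1 hj).1, extendPath_update_self]
    exact hfar j hj

section RefinedPaths

variable {a b s₀ t₀ : ℝ} {y₀ : Fin n → ℝ} {W : ℕ → Set (Incidence n)}

/-- The parameters of the paths which start at the incidence `(s₀, t₀, y₀)` and all of whose steps
are admissible. -/
def admissiblePaths (a b s₀ t₀ : ℝ) (y₀ : Fin n → ℝ) (W : ℕ → Set (Incidence n)) :
    Set (Fin n → ℝ) :=
  ⋂ k : Fin n, admissibleStep y₀ s₀ t₀ (W k) (stepGap a b k / (4 * (n + 1))) k

lemma pathIncidence_mem_of_admissible (h₀ : (s₀, t₀, y₀) ∈ W n) {v : Fin n → ℝ} {k : ℕ}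
    (hk : k ≤ n) (hv : ∀ j : Fin n, j = k →
      v ∈ admissibleStep y₀ s₀ t₀ (W j) (stepGap a b j / (4 * (n + 1))) j) :
    pathIncidence y₀ (extendPath s₀ t₀ v) k ∈ W k := by
  rcases hk.eq_or_lt with rfl | hk
  · rwa [pathIncidence_extendPath_last]
  · exact (hv ⟨k, hk⟩ rfl).1

theorem ofReal_le_volume_admissiblePaths (ha : 0 < a) (hb : 0 < b)
    (hW : ∀ k, MeasurableSet (W k)) (h₀ : (s₀, t₀, y₀) ∈ W n)
    (hfibre : ∀ k < n, ∀ w ∈ W (k + 1),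
      ENNReal.ofReal (stepGap a b k) ≤ volume (stepFibre (W k) k w)) :
    ENNReal.ofReal ((a / 2) ^ ((n + 1) / 2) * (b / 2) ^ (n / 2)) ≤
      volume (admissiblePaths a b s₀ t₀ y₀ W) := by
  have hprod : ENNReal.ofReal ((a / 2) ^ ((n + 1) / 2) * (b / 2) ^ (n / 2)) =
      ∏ k : Fin n, ENNReal.ofReal (stepGap a b k / 2) := by
    rw [← ENNReal.ofReal_prod_of_nonneg fun k _ => by unfold stepGap; split_ifs <;> positivity,
      ← prod_range_ite_even, Finset.prod_range]
    simp only [stepGap, ite_div]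
  rw [hprod]
  refine prod_le_measure_pi_iInter _ (fun k => measurableSet_admissibleStep (hW k) y₀ s₀ t₀ _ k)
    (fun i j hij v x => update_mem_admissibleStep_iff hij x) fun k v hv => ?_
  refine le_volume_update_mem_admissibleStep k (hfibre k k.2 _ ?_)
  exact pathIncidence_mem_of_admissible h₀ k.2 fun j hj => hv j (by omega)

lemma separatedPath_of_mem_admissiblePaths {v : Fin n → ℝ}
    (hv : v ∈ admissiblePaths a b s₀ t₀ y₀ W) :
    SeparatedPath (n / 2) (a / (4 * (n + 1))) (b / (4 * (n + 1))) (extendPath s₀ t₀ v) where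
  height r hr := by
    have h := (mem_iInter.1 hv ⟨2 * r, by omega⟩).2 (2 * r + 2)
      (Finset.mem_Ioc.2 ⟨show 2 * r < 2 * r + 2 by omega, by omega⟩)
    rwa [abs_sub_comm, stepGap, if_pos (even_two_mul r)] at h
  slope r hr q hq := by
    have h := (mem_iInter.1 hv ⟨2 * q + 1, by omega⟩).2 (2 * r + 1)
      (Finset.mem_Ioc.2 ⟨show 2 * q + 1 < 2 * r + 1 by omega, by omega⟩)
    rwa [stepGap, if_neg (Nat.not_even_two_mul_add_one q)] at h

lemma pathIncidence_mem_of_mem_admissiblePaths (hanti : Antitone W) (h₀ : (s₀, t₀, y₀) ∈ W n)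
    {v : Fin n → ℝ} (hv : v ∈ admissiblePaths a b s₀ t₀ y₀ W) {k : ℕ} (hk : k ≤ n) :
    pathIncidence y₀ (extendPath s₀ t₀ v) k ∈ W 0 :=
  hanti k.zero_le (pathIncidence_mem_of_admissible h₀ hk fun j _ => mem_iInter.1 hv j)

lemma extendPath_slope_sub_le (hanti : Antitone W) (h₀ : (s₀, t₀, y₀) ∈ W n) {c R : ℝ}
    (hslope : ∀ w ∈ W 0, |w.2.1 - c| ≤ R / 2) {v : Fin n → ℝ}
    (hv : v ∈ admissiblePaths a b s₀ t₀ y₀ W) {r : ℕ} (hr : r ≤ n / 2) :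
    |extendPath s₀ t₀ v (2 * r + 1) - c| ≤ R / 2 := by
  have h := hslope _ (pathIncidence_mem_of_mem_admissiblePaths hanti h₀ hv
    (show 2 * r ≤ n by omega))
  rwa [pathIncidence_two_mul] at h

theorem path_count_of_refined (hn : 2 ≤ n) {c R : ℝ} {β Lm : ℝ≥0∞} {F : Set (Pt n)} (ha : 0 < a)
    (hb : 0 < b) (hR : 0 < R) (hF : MeasurableSet F) (hLm : ∀ t, sliceVol n F t ≤ Lm)
    (hW : ∀ k, MeasurableSet (W k)) (hanti : Antitone W) (hne : (W n).Nonempty)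
    (hfibre : ∀ k < n, ∀ w ∈ W (k + 1),
      ENNReal.ofReal (stepGap a b k) ≤ volume (stepFibre (W k) k w))
    (hslope : ∀ w ∈ W 0, |w.2.1 - c| ≤ R / 2)
    (hβ : ∀ w ∈ W 0, ∀ p : ℕ → ℝ, β ≤ volume
      {τ ∈ pencil F (incidencePoint w) | ∀ r ∈ Finset.range (n / 2 + 1), R / 2 ≤ |p r - τ|}) :
    β * ENNReal.ofReal ((a / 2) ^ ((n + 1) / 2) * (b / 2) ^ (n / 2)) *
        ENNReal.ofReal ((a / (4 * (n + 1))) ^ (n / 2) * (b / (4 * (n + 1))) ^ slopeDegree n *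
          R ^ (n - 1)) ≤
      ENNReal.ofReal ((n / 2).factorial * 4 ^ n * Real.pi) * Lm := by
  obtain ⟨⟨s₀, t₀, y₀⟩, h₀⟩ := hne
  have hends (v) (hv : v ∈ admissiblePaths a b s₀ t₀ y₀ W) :
      β ≤ volume (goodEnds F y₀ R (extendPath s₀ t₀ v)) := by
    refine (hβ _ (pathIncidence_mem_of_mem_admissiblePaths hanti h₀ hv n.zero_le)
      fun r => extendPath s₀ t₀ v (2 * r + 1)).trans (measure_mono ?_)
    rintro τ ⟨hτ, hfar⟩
    exact ⟨by rwa [pathEnd_eq_incidenceAt], fun r hr => hfar r (Finset.mem_range_succ_iff.2 hr)⟩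
  have hcount := measure_mul_volume_paths_le (S := admissiblePaths a b s₀ t₀ y₀ W) hn
    (by positivity) (by positivity) hR hF hLm
    (.iInter fun k => measurableSet_admissibleStep (hW k) y₀ s₀ t₀ _ k)
    (fun v hv => separatedPath_of_mem_admissiblePaths hv)
    (fun v hv r hr => extendPath_slope_sub_le hanti h₀ hslope hv hr) hends
  refine le_trans ?_ hcount
  gcongr
  exact ofReal_le_volume_admissiblePaths ha hb hW h₀ hfibre

end RefinedPaths

lemma measurable_incidencePoint : Measurable (incidencePoint (n := n)) := by
  have hmom : Measurable fun w : Incidence n => mom n w.2.1 :=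
    (measurable_mom n).comp (measurable_fst.comp measurable_snd)
  exact measurable_fst.prodMk
    ((measurable_snd.comp measurable_snd).add (measurable_fst.smul hmom))

lemma measurePreserving_incidenceAt :
    MeasurePreserving (fun p : Pt n × ℝ => incidenceAt p.1 p.2) := by
  have hshear (s : ℝ) : MeasurePreserving fun q : ℝ × (Fin n → ℝ) =>
      (q.1, q.2 - s • mom n q.1) :=
    (MeasurePreserving.id volume).skew_product
      (measurable_snd.sub (((measurable_mom n).comp measurable_fst).const_smul s))
      (ae_of_all _ fun t => map_sub_right_eq_self volume (s • mom n t))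
  have hturn : Measurable (Function.uncurry fun (s : ℝ) (q : (Fin n → ℝ) × ℝ) =>
      ((q.2, q.1 - s • mom n q.2) : Pt n)) := by
    have h : Measurable fun p : ℝ × (Fin n → ℝ) × ℝ => mom n p.2.2 :=
      (measurable_mom n).comp (measurable_snd.comp measurable_snd)
    exact (measurable_snd.comp measurable_snd).prodMk
      ((measurable_fst.comp measurable_snd).sub (measurable_fst.smul h))
  exact ((MeasurePreserving.id volume).skew_product hturn
    (ae_of_all _ fun s => ((hshear s).comp Measure.measurePreserving_swap).map_eq)).comp
    (measurePreserving_prodAssoc volume volume volume)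

lemma measurable_volume_lineFibre {W : Set (Incidence n)} (hW : MeasurableSet W) :
    Measurable fun z => volume (lineFibre W z) :=
  measurable_measure_prodMk_right hW

lemma measurable_volume_pointFibre {W : Set (Incidence n)} (hW : MeasurableSet W) :
    Measurable fun z => volume (pointFibre W z) :=
  measurable_measure_prodMk_left (measurePreserving_incidenceAt.measurable hW)

lemma volume_eq_lintegral_lineFibre {W : Set (Incidence n)} (hW : MeasurableSet W) :
    volume W = ∫⁻ z, volume (lineFibre W z) :=
  Measure.prod_apply_symm hW

lemma volume_eq_lintegral_pointFibre {W : Set (Incidence n)} (hW : MeasurableSet W) :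
    volume W = ∫⁻ z, volume (pointFibre W z) := by
  rw [← measurePreserving_incidenceAt.measure_preimage hW.nullMeasurableSet]
  exact Measure.prod_apply (measurePreserving_incidenceAt.measurable hW)

lemma lintegral_le_mul_measure_of_support_subset {α : Type*} [MeasurableSpace α] {μ : Measure α}
    {f : α → ℝ≥0∞} {a : ℝ≥0∞} {S : Set α} (hf : ∀ x ∈ S, f x ≤ a) (hS : Function.support f ⊆ S) :
    ∫⁻ x, f x ∂μ ≤ a * μ S := by
  refine (lintegral_mono fun x => ?_).trans (lintegral_indicator_const_le S a)
  by_cases hx : x ∈ S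
  · rw [indicator_of_mem hx]
    exact hf x hx
  · exact (Function.notMem_support.1 fun h => hx (hS h)).trans_le zero_le

/-- The incidences between the points of `E` and the lines of `F`. -/
def incidences (E F : Set (Pt n)) : Set (Incidence n) := incidencePoint ⁻¹' E ∩ Prod.snd ⁻¹' F

lemma measurableSet_incidences {E F : Set (Pt n)} (hE : MeasurableSet E) (hF : MeasurableSet F) :
    MeasurableSet (incidences E F) :=
  (measurable_incidencePoint hE).inter (measurable_snd hF)

lemma incidencePoint_incidenceAt (z : Pt n) (t : ℝ) : incidencePoint (incidenceAt z t) = z := by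
  simp [incidenceAt, incidencePoint]

/-- The incidences of `W` whose line carries measure at least `a` and whose point measure at least
`b` of incidences of `W`. -/
def richIncidences (a b : ℝ≥0∞) (W : Set (Incidence n)) : Set (Incidence n) :=
  {w ∈ W | a ≤ volume (lineFibre W w.2) ∧ b ≤ volume (pointFibre W (incidencePoint w))}

section Refinement

variable {a b : ℝ≥0∞} {W : Set (Incidence n)} {E F : Set (Pt n)}

lemma measurableSet_richIncidences (hW : MeasurableSet W) :
    MeasurableSet (richIncidences a b W) :=
  hW.inter ((measurableSet_le measurable_const
      ((measurable_volume_lineFibre hW).comp measurable_snd)).inter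
    (measurableSet_le measurable_const
      ((measurable_volume_pointFibre hW).comp measurable_incidencePoint)))

lemma volume_poor_lines_le (hW : MeasurableSet W) (hWF : W ⊆ incidences E F) :
    volume {w ∈ W | volume (lineFibre W w.2) < a} ≤ a * volume F := by
  have hpoor : MeasurableSet {w ∈ W | volume (lineFibre W w.2) < a} := hW.inter
    (measurableSet_lt ((measurable_volume_lineFibre hW).comp measurable_snd) measurable_const)
  rw [volume_eq_lintegral_lineFibre hpoor]
  refine lintegral_le_mul_measure_of_support_subset (fun z _ => ?_) fun z hz => ?_
  · by_cases hz : volume (lineFibre W z) < a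
    · exact (measure_mono fun s hs => hs.1).trans hz.le
    · exact (measure_mono fun s hs => hz hs.2).trans (measure_empty.trans_le zero_le)
  · obtain ⟨s, hs⟩ := nonempty_of_measure_ne_zero hz
    exact (hWF hs.1).2

lemma volume_poor_points_le (hW : MeasurableSet W) (hWE : W ⊆ incidences E F) :
    volume {w ∈ W | volume (pointFibre W (incidencePoint w)) < b} ≤ b * volume E := by
  set B := {w ∈ W | volume (pointFibre W (incidencePoint w)) < b}
  have hB : MeasurableSet B := hW.inter (measurableSet_lt
    ((measurable_volume_pointFibre hW).comp measurable_incidencePoint) measurable_const)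
  rw [volume_eq_lintegral_pointFibre hB]
  refine lintegral_le_mul_measure_of_support_subset (fun z _ => ?_) fun z hz => ?_
  · have hpoor {t : ℝ} (ht : t ∈ pointFibre B z) : volume (pointFibre W z) < b := by
      have h := ht.2
      rwa [incidencePoint_incidenceAt] at h
    by_cases hz : volume (pointFibre W z) < b
    · exact (measure_mono fun t ht => ht.1).trans hz.le
    · exact (measure_mono fun t ht => hz (hpoor ht)).trans (measure_empty.trans_le zero_le)
  · obtain ⟨t, ht⟩ := nonempty_of_measure_ne_zero hz
    simpa only [mem_preimage, incidencePoint_incidenceAt] using (hWE ht.1).1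

lemma volume_le_volume_richIncidences_add (hW : MeasurableSet W) (hWE : W ⊆ incidences E F) :
    volume W ≤ volume (richIncidences a b W) + (a * volume F + b * volume E) := by
  have hcover : W ⊆ richIncidences a b W ∪ ({w ∈ W | volume (lineFibre W w.2) < a} ∪
      {w ∈ W | volume (pointFibre W (incidencePoint w)) < b}) := by
    intro w hw
    rcases lt_or_ge (volume (lineFibre W w.2)) a with hl | hl
    · exact .inr (.inl ⟨hw, hl⟩)
    rcases lt_or_ge (volume (pointFibre W (incidencePoint w))) b with hp | hp
    · exact .inr (.inr ⟨hw, hp⟩)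
    · exact .inl ⟨hw, hl, hp⟩
  refine (measure_mono hcover).trans ((measure_union_le _ _).trans ?_)
  gcongr
  exact (measure_union_le _ _).trans
    (add_le_add (volume_poor_lines_le hW hWE) (volume_poor_points_le hW hWE))

lemma measurableSet_iterate_richIncidences (hW : MeasurableSet W) (k : ℕ) :
    MeasurableSet ((richIncidences a b)^[k] W) := by
  induction k with
  | zero => exact hW
  | succ k ih =>
    rw [Function.iterate_succ_apply']
    exact measurableSet_richIncidences ih

lemma antitone_iterate_richIncidences (a b : ℝ≥0∞) (W : Set (Incidence n)) :
    Antitone fun k => (richIncidences a b)^[k] W := by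
  refine antitone_nat_of_succ_le fun k => ?_
  rw [Function.iterate_succ_apply']
  exact sep_subset _ _

lemma volume_le_volume_iterate_richIncidences_add (hW : MeasurableSet W)
    (hWE : W ⊆ incidences E F) (k : ℕ) :
    volume W ≤ volume ((richIncidences a b)^[k] W) + k * (a * volume F + b * volume E) := by
  induction k with
  | zero => simp
  | succ k ih =>
    have hsub := (antitone_iterate_richIncidences a b W k.zero_le).trans hWE
    calc volume W
        ≤ volume ((richIncidences a b)^[k] W) + k * (a * volume F + b * volume E) := ih
      _ ≤ volume ((richIncidences a b)^[k + 1] W) + (a * volume F + b * volume E) +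
            k * (a * volume F + b * volume E) := by
          rw [Function.iterate_succ_apply']
          gcongr
          exact volume_le_volume_richIncidences_add (measurableSet_iterate_richIncidences hW k) hsub
      _ = _ := by push_cast; ring

end Refinement

lemma ofReal_stepGap_le_volume_stepFibre {a b : ℝ} {W : Set (Incidence n)} {w : Incidence n}
    (hw : w ∈ richIncidences (ENNReal.ofReal a) (ENNReal.ofReal b) W) (k : ℕ) :
    ENNReal.ofReal (stepGap a b k) ≤ volume (stepFibre W k w) := by
  unfold stepGap stepFibre
  split_ifs
  exacts [hw.2.1, hw.2.2]

theorem path_count_of_incidences (hn : 2 ≤ n) {a b c R : ℝ} {β Lm : ℝ≥0∞} {E₀ F₀ F : Set (Pt n)}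
    (ha : 0 < a) (hb : 0 < b) (hR : 0 < R) (hF : MeasurableSet F)
    (hLm : ∀ t, sliceVol n F t ≤ Lm) (hE₀ : MeasurableSet E₀) (hF₀ : MeasurableSet F₀)
    (hlarge : n * (ENNReal.ofReal a * volume F₀ + ENNReal.ofReal b * volume E₀) <
      volume (incidences E₀ F₀))
    (hslope : ∀ z ∈ F₀, |z.1 - c| ≤ R / 2)
    (hβ : ∀ z ∈ E₀, ∀ p : ℕ → ℝ, β ≤ volume
      {τ ∈ pencil F z | ∀ r ∈ Finset.range (n / 2 + 1), R / 2 ≤ |p r - τ|}) :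
    β * ENNReal.ofReal ((a / 2) ^ ((n + 1) / 2) * (b / 2) ^ (n / 2)) *
        ENNReal.ofReal ((a / (4 * (n + 1))) ^ (n / 2) * (b / (4 * (n + 1))) ^ slopeDegree n *
          R ^ (n - 1)) ≤
      ENNReal.ofReal ((n / 2).factorial * 4 ^ n * Real.pi) * Lm := by
  have hW := measurableSet_incidences hE₀ hF₀
  refine path_count_of_refined hn (c := c) ha hb hR hF hLm
    (fun k => measurableSet_iterate_richIncidences (a := .ofReal a) (b := .ofReal b) hW k)
    (antitone_iterate_richIncidences _ _ _) ?_ (fun k _ w hw => ?_)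
    (fun w hw => hslope _ hw.2) fun w hw => hβ _ hw.1
  · by_contra hempty
    have h := volume_le_volume_iterate_richIncidences_add (a := .ofReal a) (b := .ofReal b) hW
      subset_rfl n
    rw [not_nonempty_iff_eq_empty.1 hempty, measure_empty, zero_add] at h
    exact h.not_gt hlarge
  · rw [Function.iterate_succ_apply'] at hw
    exact ofReal_stepGap_le_volume_stepFibre hw k

lemma measurableSet_pencil {F : Set (Pt n)} (hF : MeasurableSet F) (z : Pt n) :
    MeasurableSet (pencil F z) :=
  (measurePreserving_incidenceAt.measurable.comp measurable_prodMk_left) (measurable_snd hF)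

lemma measurable_volume_pencil {F : Set (Pt n)} (hF : MeasurableSet F) :
    Measurable fun z => volume (pencil F z) :=
  measurable_volume_pointFibre (measurable_snd hF)

lemma pointFibre_incidences_of_mem {E F : Set (Pt n)} {z : Pt n} (hz : z ∈ E) :
    pointFibre (incidences E F) z = pencil F z := by
  ext t
  simp only [pointFibre, incidences, mem_ofPred_eq, mem_inter_iff, mem_preimage,
    incidencePoint_incidenceAt, hz, true_and, pencil]

lemma pointFibre_incidences_of_notMem {E F : Set (Pt n)} {z : Pt n} (hz : z ∉ E) :
    pointFibre (incidences E F) z = ∅ := by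
  ext t
  simp only [pointFibre, incidences, mem_ofPred_eq, mem_inter_iff, mem_preimage,
    incidencePoint_incidenceAt, hz, false_and, mem_empty_iff_false]

lemma volume_incidences {E F : Set (Pt n)} (hE : MeasurableSet E) (hF : MeasurableSet F) :
    volume (incidences E F) = ∫⁻ z in E, volume (pencil F z) := by
  rw [volume_eq_lintegral_pointFibre (measurableSet_incidences hE hF), ← lintegral_indicator hE]
  refine lintegral_congr fun z => ?_
  by_cases hz : z ∈ E
  · rw [indicator_of_mem hz, pointFibre_incidences_of_mem hz]
  · rw [indicator_of_notMem hz, pointFibre_incidences_of_notMem hz, measure_empty]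

/-- The cell with number `j` of the grid of mesh `h` on the real line. -/
def gridCell (h : ℝ) (j : ℤ) : Set ℝ := Ico (j • h) ((j + 1) • h)

section Grid

variable {h : ℝ}

lemma measurableSet_gridCell (h : ℝ) (j : ℤ) : MeasurableSet (gridCell h j) := measurableSet_Ico

lemma volume_gridCell (h : ℝ) (j : ℤ) : volume (gridCell h j) = ENNReal.ofReal h := by
  rw [gridCell, Real.volume_Ico, add_one_zsmul, add_sub_cancel_left]

lemma abs_sub_center_le_of_mem_gridCell {j : ℤ} {t : ℝ} (ht : t ∈ gridCell h j) :
    |t - (j + 1 / 2) * h| ≤ h / 2 := by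
  obtain ⟨h₁, h₂⟩ := ht
  rw [zsmul_eq_mul] at h₁ h₂
  push_cast at h₂
  rw [abs_le]
  constructor <;> linarith

lemma tsum_measure_inter_preimage_gridCell {α : Type*} [MeasurableSpace α] (μ : Measure α)
    {f : α → ℝ} (hf : Measurable f) (hh : 0 < h) {T : Set α} (hT : MeasurableSet T) :
    ∑' j, μ (T ∩ f ⁻¹' gridCell h j) = μ T := by
  rw [← measure_iUnion]
  · rw [← inter_iUnion, ← preimage_iUnion, show ⋃ j, gridCell h j = univ from iUnion_Ico_zsmul hh,
      preimage_univ, inter_univ]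
  · intro i j hij
    exact ((pairwise_disjoint_Ico_zsmul h hij).preimage f).mono inter_subset_right
      inter_subset_right
  · exact fun j => hT.inter (hf (measurableSet_gridCell h j))

lemma ball_subset_union_gridCell {j : ℤ} {p : ℝ} (hp : p ∈ gridCell h j) :
    Metric.ball p h ⊆ gridCell h (j - 1) ∪ (gridCell h j ∪ gridCell h (j + 1)) := by
  intro t ht
  rw [Metric.mem_ball', Real.dist_eq, abs_sub_lt_iff] at ht
  simp only [gridCell, mem_union, mem_Ico, zsmul_eq_mul] at hp ⊢
  push_cast at hp ⊢
  by_cases h₁ : t < j * h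
  · exact .inl ⟨by linarith, by linarith⟩
  by_cases h₂ : t < (j + 1) * h
  · exact .inr (.inl ⟨by linarith, h₂⟩)
  · exact .inr (.inr ⟨by linarith, by linarith⟩)

lemma volume_inter_ball_le {T : Set ℝ} {ε : ℝ≥0∞} (hh : 0 < h)
    (hT : ∀ j, volume (T ∩ gridCell h j) ≤ ε) (p : ℝ) :
    volume (T ∩ Metric.ball p h) ≤ 3 * ε := by
  obtain ⟨j, hj⟩ := mem_iUnion.1 ((iUnion_Ico_zsmul hh).symm ▸ mem_univ p)
  calc volume (T ∩ Metric.ball p h)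
      ≤ volume ((T ∩ gridCell h (j - 1)) ∪ ((T ∩ gridCell h j) ∪ (T ∩ gridCell h (j + 1)))) := by
        rw [← inter_union_distrib_left, ← inter_union_distrib_left]
        exact measure_mono (inter_subset_inter_right _ (ball_subset_union_gridCell hj))
    _ ≤ ε + (ε + ε) := (measure_union_le _ _).trans
        (add_le_add (hT _) ((measure_union_le _ _).trans (add_le_add (hT _) (hT _))))
    _ = 3 * ε := by ring

end Grid

/-- The proportion `c` of `T` lies in the cell with number `j` of the grid of mesh `h`, whereas no
cell of half the size contains as much. -/
def ConcentratedAt (c : ℝ≥0∞) (h : ℝ) (j : ℤ) (T : Set ℝ) : Prop :=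
  c * volume T ≤ volume (T ∩ gridCell h j) ∧
    ∀ i, volume (T ∩ gridCell (h / 2) i) < c * volume T

section Concentration

variable {T : Set ℝ} {c : ℝ≥0∞} {h : ℝ}

lemma exists_le_volume_inter_gridCell (hc : 2 * c < 1) (hT₀ : volume T ≠ 0) (hT : volume T ≠ ⊤)
    (hh : 0 < h) : ∃ (i : ℕ) (j : ℤ), c * volume T ≤ volume (T ∩ gridCell (h * 2 ^ i) j) := by
  have hmono : Monotone fun i : ℕ => T ∩ Ico (-(h * 2 ^ i)) (h * 2 ^ i) := fun i j hij =>
    inter_subset_inter_right _ (Ico_subset_Ico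
      (neg_le_neg (by gcongr; exact one_le_two)) (by gcongr; exact one_le_two))
  have hunion : ⋃ i : ℕ, T ∩ Ico (-(h * 2 ^ i)) (h * 2 ^ i) = T := by
    rw [← inter_iUnion, inter_eq_left]
    intro t _
    obtain ⟨i, hi⟩ := pow_unbounded_of_one_lt (|t| / h) one_lt_two
    rw [div_lt_iff₀' hh, abs_lt] at hi
    exact mem_iUnion.2 ⟨i, hi.1.le, hi.2⟩
  have hlt : 2 * c * volume T < volume (⋃ i : ℕ, T ∩ Ico (-(h * 2 ^ i)) (h * 2 ^ i)) := by
    rw [hunion]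
    exact (ENNReal.mul_lt_mul_left hT₀ hT hc).trans_eq (one_mul _)
  obtain ⟨i, hi⟩ := ((tendsto_measure_iUnion_atTop hmono).eventually (lt_mem_nhds hlt)).exists
  have hsplit : Ico (-(h * 2 ^ i)) (h * 2 ^ i) =
      gridCell (h * 2 ^ i) (-1) ∪ gridCell (h * 2 ^ i) 0 := by
    have hpos : 0 ≤ h * 2 ^ i := by positivity
    simp [gridCell, Ico_union_Ico_eq_Ico, hpos]
  by_contra! hno
  refine hi.not_ge ?_
  rw [Function.comp_apply, hsplit, inter_union_distrib_left, two_mul, add_mul]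
  exact (measure_union_le _ _).trans (add_le_add (hno i (-1)).le (hno i 0).le)

theorem exists_concentratedAt (hc : 2 * c < 1) (hT : volume T ≠ ⊤) (hh : 0 < h)
    (hhT : ENNReal.ofReal h ≤ c * volume T) :
    ∃ (i : ℕ) (j : ℤ), ConcentratedAt c (h * 2 ^ i) j T := by
  classical
  have hpos : 0 < c * volume T := (ENNReal.ofReal_pos.2 hh).trans_le hhT
  have hex := exists_le_volume_inter_gridCell hc (right_ne_zero_of_mul hpos.ne') hT hh
  obtain ⟨j, hj⟩ := Nat.find_spec hex
  refine ⟨Nat.find hex, j, hj, fun k => ?_⟩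
  rcases hi : Nat.find hex with _ | i
  · refine (measure_mono inter_subset_right).trans_lt (lt_of_lt_of_le ?_ hhT)
    rw [volume_gridCell, pow_zero, mul_one, ENNReal.ofReal_lt_ofReal_iff hh]
    exact half_lt_self hh
  · have hmin := not_exists.1 (Nat.find_min hex (show i < Nat.find hex by omega)) k
    rw [pow_succ, ← mul_assoc, mul_div_cancel_right₀ _ two_ne_zero]
    exact not_le.1 hmin

lemma half_volume_le_volume_far_of_concentratedAt {j : ℤ} {κ : Type*} {J : Finset κ} (p : κ → ℝ)
    (hT : volume T ≠ ⊤) (hh : 0 < h) (hJ : J.card * (3 * c) ≤ 1 / 2)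
    (hconc : ConcentratedAt c h j T) :
    volume T / 2 ≤ volume {x ∈ T | ∀ k ∈ J, h / 2 ≤ |p k - x|} := by
  refine half_le_volume_far p (volume_inter_ball_le (half_pos hh) fun i => (hconc.2 i).le) hT
    le_rfl ?_
  calc J.card * (3 * (c * volume T)) = J.card * (3 * c) * volume T := by ring
    _ ≤ 1 / 2 * volume T := by gcongr
    _ = volume T / 2 := by rw [one_div, mul_comm, div_eq_mul_inv]

end Concentration

/-- The points whose pencil of lines of `F` has finite measure at least `β` and is concentrated, up
to the proportion `c`, at slopes in the cell with number `j` of the grid of mesh `h`. -/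
def concentratedPoints (F : Set (Pt n)) (β c : ℝ≥0∞) (h : ℝ) (j : ℤ) : Set (Pt n) :=
  {z | β ≤ volume (pencil F z) ∧ volume (pencil F z) ≠ ⊤ ∧ ConcentratedAt c h j (pencil F z)}

lemma measurableSet_inter_preimage_gridCell {F : Set (Pt n)} (hF : MeasurableSet F) (h : ℝ)
    (j : ℤ) : MeasurableSet (F ∩ Prod.fst ⁻¹' gridCell h j) :=
  hF.inter (measurable_fst (measurableSet_gridCell h j))

lemma measurable_volume_pencil_inter_gridCell {F : Set (Pt n)} (hF : MeasurableSet F) (h : ℝ)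
    (j : ℤ) : Measurable fun z => volume (pencil F z ∩ gridCell h j) :=
  measurable_volume_pencil (measurableSet_inter_preimage_gridCell hF h j)

section Scales

variable {E F : Set (Pt n)} {α β c q x : ℝ≥0∞} {h : ℝ}

lemma measurableSet_concentratedPoints (hF : MeasurableSet F) (j : ℤ) :
    MeasurableSet (concentratedPoints F β c h j) := by
  have hτ := measurable_volume_pencil hF
  have hcell := measurable_volume_pencil_inter_gridCell hF
  have hhalf : MeasurableSet
      {z | ∀ i, volume (pencil F z ∩ gridCell (h / 2) i) < c * volume (pencil F z)} := by
    rw [Set.ofPred_forall]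
    exact MeasurableSet.iInter fun i => measurableSet_lt (hcell (h / 2) i) (hτ.const_mul c)
  exact (measurableSet_le measurable_const hτ).inter
    ((hτ (measurableSet_singleton ⊤)).compl.inter
      ((measurableSet_le (hτ.const_mul c) (hcell h j)).inter hhalf))

lemma le_div_of_mem_concentratedPoints {j : ℤ} {z : Pt n}
    (hz : z ∈ concentratedPoints F β c h j) :
    c ≤ volume (pencil F z ∩ gridCell h j) / volume (pencil F z) := by
  obtain ⟨-, hfin, hcell, hhalf⟩ := hz
  have hpos : volume (pencil F z) ≠ 0 := right_ne_zero_of_mul (zero_le.trans_lt (hhalf 0)).ne'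
  exact (ENNReal.le_div_iff_mul_le (.inl hpos) (.inl hfin)).2 hcell

lemma mul_tsum_volume_concentratedPoints_le (hF : MeasurableSet F) (hh : 0 < h) :
    c * ∑' j, volume (E ∩ concentratedPoints F β c h j) ≤ volume E := by
  have hτ := measurable_volume_pencil hF
  have hratio (j : ℤ) : Measurable fun z =>
      volume (pencil F z ∩ gridCell h j) / volume (pencil F z) :=
    (measurable_volume_pencil_inter_gridCell hF h j).div hτ
  calc c * ∑' j, volume (E ∩ concentratedPoints F β c h j)
      = ∑' j, c * volume (E ∩ concentratedPoints F β c h j) := ENNReal.tsum_mul_left.symm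
    _ ≤ ∑' j, ∫⁻ z in E, volume (pencil F z ∩ gridCell h j) / volume (pencil F z) := by
        refine ENNReal.tsum_le_tsum fun j => ?_
        rw [inter_comm, ← Measure.restrict_apply (measurableSet_concentratedPoints hF j),
          ← setLIntegral_const]
        exact (setLIntegral_mono (hratio j) fun z => le_div_of_mem_concentratedPoints).trans
          (setLIntegral_le_lintegral _ _)
    _ = ∫⁻ z in E, volume (pencil F z) / volume (pencil F z) := by
        rw [← lintegral_tsum fun j => (hratio j).aemeasurable]
        refine lintegral_congr fun z => ?_
        simp only [div_eq_mul_inv, ENNReal.tsum_mul_right]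
        rw [← tsum_measure_inter_preimage_gridCell volume measurable_id hh
          (measurableSet_pencil hF z)]
        rfl
    _ ≤ ∫⁻ _ in E, 1 := lintegral_mono fun z => ENNReal.div_self_le_one
    _ = volume E := setLIntegral_one E

lemma setLIntegral_le_setLIntegral_superlevel_add {X : Type*} [MeasurableSpace X] {μ : Measure X}
    {f : X → ℝ≥0∞} (hf : Measurable f) (b : ℝ≥0∞) (S : Set X) :
    ∫⁻ x in S, f x ∂μ ≤ ∫⁻ x in S ∩ {x | b ≤ f x}, f x ∂μ + b * μ S := by
  rw [← lintegral_inter_add_sdiff f S (measurableSet_le measurable_const hf)]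
  gcongr
  calc ∫⁻ x in S \ {x | b ≤ f x}, f x ∂μ
      ≤ ∫⁻ _ in S \ {x | b ≤ f x}, b ∂μ :=
        setLIntegral_mono measurable_const fun x hx => (not_le.1 hx.2).le
    _ ≤ b * μ S := by
        rw [setLIntegral_const]
        gcongr
        exact sdiff_subset

lemma half_le_setLIntegral_pencil (hE : MeasurableSet E) (hF : MeasurableSet F)
    (hβ : 2 * (β * volume E) ≤ volume (incidences E F)) (hfin : volume (incidences E F) ≠ ⊤) :
    volume (incidences E F) / 2 ≤
      ∫⁻ z in E ∩ {z | β ≤ volume (pencil F z)}, volume (pencil F z) := by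
  have hhalf : β * volume E ≤ volume (incidences E F) / 2 := by
    rwa [ENNReal.le_div_iff_mul_le (.inl two_ne_zero) (.inl ENNReal.ofNat_ne_top), mul_comm]
  have hsplit := setLIntegral_le_setLIntegral_superlevel_add (μ := volume)
    (measurable_volume_pencil hF) β E
  rw [← volume_incidences hE hF] at hsplit
  refine (ENNReal.add_le_add_iff_right (ENNReal.div_ne_top hfin two_ne_zero)).1 ?_
  rw [ENNReal.add_halves]
  exact hsplit.trans (by gcongr)

lemma mul_setLIntegral_pencil_le_volume_incidences (hE : MeasurableSet E) (hF : MeasurableSet F)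
    (j : ℤ) :
    c * ∫⁻ z in E ∩ concentratedPoints F β c h j, volume (pencil F z) ≤
      volume (incidences (E ∩ concentratedPoints F β c h j)
        (F ∩ Prod.fst ⁻¹' gridCell h j)) := by
  have hcell := measurableSet_inter_preimage_gridCell hF h j
  rw [volume_incidences (hE.inter (measurableSet_concentratedPoints hF j)) hcell,
    ← lintegral_const_mul _ (measurable_volume_pencil hF)]
  exact setLIntegral_mono (measurable_volume_pencil hcell) fun z hz => hz.2.2.2.1

lemma mul_half_le_tsum_volume_incidences (hE : MeasurableSet E) (hF : MeasurableSet F)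
    (hβ : 2 * (β * volume E) ≤ volume (incidences E F)) (hfin : volume (incidences E F) ≠ ⊤)
    (hc : 2 * c < 1) (hh : 0 < h) (hhβ : ENNReal.ofReal h ≤ c * β) :
    c * (volume (incidences E F) / 2) ≤
      ∑' (i : ℕ) (j : ℤ), volume (incidences (E ∩ concentratedPoints F β c (h * 2 ^ i) j)
        (F ∩ Prod.fst ⁻¹' gridCell (h * 2 ^ i) j)) := by
  have hτ := measurable_volume_pencil hF
  have hcover : (E ∩ {z | β ≤ volume (pencil F z)} : Set (Pt n)) ≤ᵐ[volume]
      ⋃ p : ℕ × ℤ, E ∩ concentratedPoints F β c (h * 2 ^ p.1) p.2 := by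
    have hlt : ∀ᵐ z ∂volume.restrict E, volume (pencil F z) < ⊤ :=
      ae_lt_top hτ (by rwa [← volume_incidences hE hF])
    filter_upwards [(ae_restrict_iff' hE).1 hlt] with z hz ⟨hzE, hzβ⟩
    obtain ⟨i, j, hij⟩ := exists_concentratedAt hc (hz hzE).ne hh
      (hhβ.trans (mul_le_mul_right hzβ c))
    exact mem_iUnion.2 ⟨(i, j), hzE, hzβ, (hz hzE).ne, hij⟩
  calc c * (volume (incidences E F) / 2)
      ≤ c * ∫⁻ z in E ∩ {z | β ≤ volume (pencil F z)}, volume (pencil F z) := by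
        gcongr
        exact half_le_setLIntegral_pencil hE hF hβ hfin
    _ ≤ c * ∫⁻ z in ⋃ p : ℕ × ℤ, E ∩ concentratedPoints F β c (h * 2 ^ p.1) p.2,
          volume (pencil F z) :=
        mul_le_mul_right (lintegral_mono' (Measure.restrict_mono_ae hcover) le_rfl) c
    _ ≤ c * ∑' p : ℕ × ℤ, ∫⁻ z in E ∩ concentratedPoints F β c (h * 2 ^ p.1) p.2,
          volume (pencil F z) := by
        gcongr
        exact lintegral_iUnion_le _ _
    _ ≤ ∑' p : ℕ × ℤ, volume (incidences (E ∩ concentratedPoints F β c (h * 2 ^ p.1) p.2)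
          (F ∩ Prod.fst ⁻¹' gridCell (h * 2 ^ p.1) p.2)) := by
        rw [← ENNReal.tsum_mul_left]
        exact ENNReal.tsum_le_tsum fun p =>
          mul_setLIntegral_pencil_le_volume_incidences hE hF p.2
    _ = _ := ENNReal.tsum_prod' (f := fun p : ℕ × ℤ => volume (incidences
          (E ∩ concentratedPoints F β c (h * 2 ^ p.1) p.2)
          (F ∩ Prod.fst ⁻¹' gridCell (h * 2 ^ p.1) p.2)))

theorem exists_scale_of_incidences (hE : MeasurableSet E) (hF : MeasurableSet F)
    (hα : α * volume F ≤ volume (incidences E F))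
    (hβ : 2 * (β * volume E) ≤ volume (incidences E F))
    (hpos : volume (incidences E F) ≠ 0) (hfin : volume (incidences E F) ≠ ⊤)
    (hc₀ : c ≠ 0) (hc : 2 * c < 1) (hh : 0 < h) (hhβ : ENNReal.ofReal h ≤ c * β)
    (hq : q * (n * (1 + c⁻¹) * (1 - x)⁻¹) < c / 2) :
    ∃ (i : ℕ) (j : ℤ),
      n * (q * x ^ i * α * volume (F ∩ Prod.fst ⁻¹' gridCell (h * 2 ^ i) j) +
        q * x ^ i * β * volume (E ∩ concentratedPoints F β c (h * 2 ^ i) j)) <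
      volume (incidences (E ∩ concentratedPoints F β c (h * 2 ^ i) j)
        (F ∩ Prod.fst ⁻¹' gridCell (h * 2 ^ i) j)) := by
  set X := volume (incidences E F)
  have hc_top : c ≠ ⊤ := by
    rintro rfl
    simp at hc
  by_contra! hno
  have hscale (i : ℕ) : ∑' j : ℤ,
      volume (incidences (E ∩ concentratedPoints F β c (h * 2 ^ i) j)
        (F ∩ Prod.fst ⁻¹' gridCell (h * 2 ^ i) j)) ≤ n * q * (1 + c⁻¹) * X * x ^ i := by
    have hhi : 0 < h * 2 ^ i := by positivity
    have hEi : ∑' j, volume (E ∩ concentratedPoints F β c (h * 2 ^ i) j) ≤ c⁻¹ * volume E :=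
      (ENNReal.mul_le_iff_le_inv hc₀ hc_top).1 (mul_tsum_volume_concentratedPoints_le hF hhi)
    refine (ENNReal.tsum_le_tsum fun j => hno i j).trans ?_
    rw [ENNReal.tsum_mul_left, ENNReal.tsum_add, ENNReal.tsum_mul_left, ENNReal.tsum_mul_left,
      tsum_measure_inter_preimage_gridCell volume measurable_fst hhi hF]
    calc n * (q * x ^ i * α * volume F + q * x ^ i * β *
          ∑' j, volume (E ∩ concentratedPoints F β c (h * 2 ^ i) j))
        ≤ n * (q * x ^ i * α * volume F + q * x ^ i * β * (c⁻¹ * volume E)) := by gcongr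
      _ = n * q * (α * volume F + c⁻¹ * (β * volume E)) * x ^ i := by ring
      _ ≤ n * q * (X + c⁻¹ * X) * x ^ i := by
          gcongr
          exact (le_mul_of_one_le_left' one_le_two).trans hβ
      _ = n * q * (1 + c⁻¹) * X * x ^ i := by ring
  refine ((mul_half_le_tsum_volume_incidences hE hF hβ hfin hc hh hhβ).trans
    (ENNReal.tsum_le_tsum hscale)).not_gt ?_
  rw [ENNReal.tsum_mul_left, ENNReal.tsum_geometric]
  calc n * q * (1 + c⁻¹) * X * (1 - x)⁻¹ = q * (n * (1 + c⁻¹) * (1 - x)⁻¹) * X := by ring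
    _ < c / 2 * X := ENNReal.mul_lt_mul_left hpos hfin hq
    _ = c * (X / 2) := by rw [div_eq_mul_inv, div_eq_mul_inv]; ring

end Scales

end Incidences

section RestrictedWeakType

open scoped NNReal

lemma pow_mul_pow_le_of_scale {n m : ℕ} (hn : 2 ≤ n) {α β c q x : ℝ} (hα : 0 ≤ α) (hβ : 0 ≤ β)
    (hc : 0 ≤ c) (hq : 0 ≤ q) (hx : 1 ≤ 2 * x ^ (n + m)) (i : ℕ) :
    q ^ (n + m) * c ^ (n - 1) * (α ^ n * β ^ (n + m)) ≤
      β * (q * x ^ i * α) ^ n * (q * x ^ i * β) ^ m * (c * β * 2 ^ i) ^ (n - 1) := by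
  have hgain : 1 ≤ (x ^ (n + m)) ^ i * (2 ^ i) ^ (n - 1) := by
    have hx₀ : 0 ≤ x ^ (n + m) := by linarith
    calc (1 : ℝ) ≤ (2 * x ^ (n + m)) ^ i := one_le_pow₀ hx
      _ = (x ^ (n + m)) ^ i * 2 ^ i := by rw [mul_pow, mul_comm]
      _ ≤ (x ^ (n + m)) ^ i * (2 ^ i) ^ (n - 1) := by
          gcongr
          exact le_self_pow₀ (one_le_pow₀ one_le_two) (by omega)
  calc q ^ (n + m) * c ^ (n - 1) * (α ^ n * β ^ (n + m))
      ≤ q ^ (n + m) * c ^ (n - 1) * (α ^ n * β ^ (n + m)) *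
          ((x ^ (n + m)) ^ i * (2 ^ i) ^ (n - 1)) := le_mul_of_one_le_right (by positivity) hgain
    _ = _ := by
        obtain ⟨k, rfl⟩ := Nat.exists_eq_add_of_le hn
        rw [show 2 + k - 1 = k + 1 by omega]
        ring

lemma exists_lt_one_two_mul_pow_eq_one {N : ℕ} (hN : N ≠ 0) :
    ∃ x : ℝ≥0, x < 1 ∧ 2 * x ^ N = 1 := by
  refine ⟨2⁻¹ ^ (N : ℝ)⁻¹, NNReal.rpow_lt_one (by norm_num) (by positivity), ?_⟩
  rw [NNReal.rpow_inv_natCast_pow _ hN, mul_inv_cancel₀ two_ne_zero]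

lemma exists_scale_constants {n : ℕ} (hn : n ≠ 0) : ∃ c q x : ℝ≥0, 0 < c ∧ 0 < q ∧
    (2 * c : ℝ≥0∞) < 1 ∧ ((n / 2 + 1 : ℕ) * (3 * c) : ℝ≥0∞) ≤ 1 / 2 ∧
    2 * x ^ (n + n.choose 2) = 1 ∧
    (q * (n * (1 + (c : ℝ≥0∞)⁻¹) * (1 - (x : ℝ≥0∞))⁻¹) : ℝ≥0∞) < c / 2 := by
  obtain ⟨x, hx, hxN⟩ := exists_lt_one_two_mul_pow_eq_one (N := n + n.choose 2) (by omega)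
  obtain ⟨c, hc₀, hc⟩ : ∃ c : ℝ≥0, 0 < c ∧ (n / 2 + 1 : ℕ) * (3 * c) = 1 / 2 :=
    ⟨1 / (6 * (n / 2 + 1 : ℕ)), by positivity, by push_cast; field_simp; norm_num⟩
  have hc_lt : 2 * c < 1 := by
    calc 2 * c < 3 * c := by gcongr; norm_num
      _ ≤ (n / 2 + 1 : ℕ) * (3 * c) := le_mul_of_one_le_left' (by simp)
      _ < 1 := by rw [hc]; norm_num
  have hcn : ((n / 2 + 1 : ℕ) * (3 * c) : ℝ≥0∞) ≤ 1 / 2 := by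
    simpa only [ENNReal.coe_mul, ENNReal.coe_div two_ne_zero, ENNReal.coe_natCast,
      ENNReal.coe_ofNat, ENNReal.coe_one] using ENNReal.coe_le_coe.2 hc.le
  have hx_top : (n * (1 + (c : ℝ≥0∞)⁻¹) * (1 - (x : ℝ≥0∞))⁻¹ : ℝ≥0∞) ≠ ⊤ := by
    refine ENNReal.mul_ne_top (ENNReal.mul_ne_top (ENNReal.natCast_ne_top n) ?_) ?_
    · exact ENNReal.add_ne_top.2 ⟨ENNReal.one_ne_top,
        ENNReal.inv_ne_top.2 (ENNReal.coe_ne_zero.2 hc₀.ne')⟩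
    · exact ENNReal.inv_ne_top.2 (tsub_pos_of_lt (mod_cast hx)).ne'
  obtain ⟨q, hq₀, hq⟩ := ENNReal.exists_nnreal_pos_mul_lt hx_top
    (b := (c : ℝ≥0∞) / 2)
    (ENNReal.div_ne_zero.2 ⟨ENNReal.coe_ne_zero.2 hc₀.ne', ENNReal.ofNat_ne_top⟩)
  exact ⟨c, q, x, hc₀, hq₀, mod_cast hc_lt, hcn, hxN, hq⟩

lemma half_le_volume_far_of_mem_concentratedPoints {n : ℕ} {F : Set (Pt n)} {β c : ℝ≥0∞} {h : ℝ}
    {j : ℤ} {z : Pt n} (hh : 0 < h) (hc : (n / 2 + 1 : ℕ) * (3 * c) ≤ 1 / 2)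
    (hz : z ∈ concentratedPoints F β c h j) (p : ℕ → ℝ) :
    β / 2 ≤ volume {τ ∈ pencil F z | ∀ r ∈ Finset.range (n / 2 + 1), h / 2 ≤ |p r - τ|} :=
  (ENNReal.div_le_div_right hz.1 2).trans
    (half_volume_le_volume_far_of_concentratedAt p hz.2.1 hh (by rwa [Finset.card_range]) hz.2.2)

lemma mul_div_pow_mul_div_pow_le {n : ℕ} {a b β R : ℝ} (ha : 0 ≤ a) (hb : 0 ≤ b) (hβ : 0 ≤ β)
    (hR : 0 ≤ R) :
    β * (a / (4 * (n + 1))) ^ n * (b / (4 * (n + 1))) ^ n.choose 2 * R ^ (n - 1) ≤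
      β * ((a / 2) ^ ((n + 1) / 2) * (b / 2) ^ (n / 2)) *
        ((a / (4 * (n + 1))) ^ (n / 2) * (b / (4 * (n + 1))) ^ slopeDegree n * R ^ (n - 1)) := by
  have hD : (2 : ℝ) ≤ 4 * (n + 1) := by linarith [n.cast_nonneg (α := ℝ)]
  calc _ = β * ((a / (4 * (n + 1))) ^ ((n + 1) / 2) * (b / (4 * (n + 1))) ^ (n / 2)) *
        ((a / (4 * (n + 1))) ^ (n / 2) * (b / (4 * (n + 1))) ^ slopeDegree n * R ^ (n - 1)) := by
        rw [← slopeDegree_add_half n, pow_add _ (slopeDegree n),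
          ← congrArg ((a / (4 * (n + 1))) ^ ·) (show (n + 1) / 2 + n / 2 = n by omega), pow_add]
        ring
    _ ≤ _ := by gcongr

lemma path_count_of_scale {n : ℕ} (hn : 2 ≤ n) {α β c q x : ℝ≥0} {Lm : ℝ≥0∞} {E F : Set (Pt n)}
    (hα : 0 < α) (hβ : 0 < β) (hc : 0 < c) (hq : 0 < q) (hx : 2 * x ^ (n + n.choose 2) = 1)
    (hcn : ((n / 2 + 1 : ℕ) * (3 * c) : ℝ≥0∞) ≤ 1 / 2) (hE : MeasurableSet E)
    (hF : MeasurableSet F) (hLm : ∀ t, sliceVol n F t ≤ Lm) {i : ℕ} {j : ℤ}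
    (hlarge : n * (q * x ^ i * α * volume (F ∩ Prod.fst ⁻¹' gridCell (c * β * 2 ^ i) j) +
        q * x ^ i * β * volume (E ∩ concentratedPoints F β c (c * β * 2 ^ i) j)) <
      volume (incidences (E ∩ concentratedPoints F β c (c * β * 2 ^ i) j)
        (F ∩ Prod.fst ⁻¹' gridCell (c * β * 2 ^ i) j))) :
    ENNReal.ofReal ((q / (4 * (n + 1))) ^ (n + n.choose 2) * c ^ (n - 1) / 2 *
        (α ^ n * β ^ (n + n.choose 2))) ≤
      ENNReal.ofReal ((n / 2).factorial * 4 ^ n * Real.pi) * Lm := by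
  have hx₀ : 0 < x := pos_iff_ne_zero.2 fun h => by simp [h, show n ≠ 0 by omega] at hx
  have hcount := path_count_of_incidences hn (a := q * x ^ i * α) (b := q * x ^ i * β)
    (c := (j + 1 / 2) * (c * β * 2 ^ i)) (R := c * β * 2 ^ i) (β := ENNReal.ofReal (β / 2))
    (by positivity) (by positivity) (by positivity) hF hLm
    (hE.inter (measurableSet_concentratedPoints hF j))
    (measurableSet_inter_preimage_gridCell hF _ j)
    (by simpa only [← NNReal.coe_pow, ← NNReal.coe_mul, ENNReal.ofReal_coe_nnreal, ENNReal.coe_mul,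
      ENNReal.coe_pow] using hlarge)
    (fun z hz => abs_sub_center_le_of_mem_gridCell hz.2)
    (fun z hz p => by
      rw [ENNReal.ofReal_div_of_pos two_pos, ENNReal.ofReal_coe_nnreal, ENNReal.ofReal_ofNat]
      exact half_le_volume_far_of_mem_concentratedPoints (by positivity) hcn hz.2 p)
  rw [← ENNReal.ofReal_mul (by positivity), ← ENNReal.ofReal_mul (by positivity)] at hcount
  refine (ENNReal.ofReal_le_ofReal ?_).trans hcount
  refine le_trans ?_ (mul_div_pow_mul_div_pow_le (by positivity) (by positivity) (by positivity)
    (by positivity))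
  have hscale := pow_mul_pow_le_of_scale hn (m := n.choose 2) (q := q / (4 * (n + 1))) (x := x)
    α.coe_nonneg β.coe_nonneg c.coe_nonneg (by positivity) (mod_cast hx.ge) i
  convert mul_le_mul_of_nonneg_left hscale (inv_nonneg.2 zero_le_two) using 1 <;> ring

theorem exists_pow_mul_pow_le_mul_of_incidences {n : ℕ} (hn : 2 ≤ n) :
    ∃ C : ℝ≥0, ∀ {α β : ℝ≥0} {Lm : ℝ≥0∞} {E F : Set (Pt n)}, 0 < α → 0 < β →
      MeasurableSet E → MeasurableSet F → (∀ t, sliceVol n F t ≤ Lm) →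
      α * volume F ≤ volume (incidences E F) → 2 * (β * volume E) ≤ volume (incidences E F) →
      volume (incidences E F) ≠ 0 → volume (incidences E F) ≠ ⊤ →
      (α ^ n * β ^ (n + n.choose 2) : ℝ≥0∞) ≤ C * Lm := by
  obtain ⟨c, q, x, hc₀, hq₀, hc, hcn, hx, hq⟩ := exists_scale_constants (n := n) (by omega)
  set K : ℝ := (q / (4 * (n + 1))) ^ (n + n.choose 2) * c ^ (n - 1) / 2
  have hK : 0 < K := by positivity
  refine ⟨((n / 2).factorial * 4 ^ n * Real.pi / K).toNNReal,
    fun {α β Lm E F} hα hβ hE hF hLm hαF hβE hpos hfin => ?_⟩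
  obtain ⟨i, j, hij⟩ := exists_scale_of_incidences (h := c * β) hE hF hαF hβE hpos hfin
    (ENNReal.coe_ne_zero.2 hc₀.ne') hc (by positivity)
    (by rw [← NNReal.coe_mul, ENNReal.ofReal_coe_nnreal, ENNReal.coe_mul]) hq
  have hcount := path_count_of_scale hn hα hβ hc₀ hq₀ hx hcn hE hF hLm hij
  rw [ENNReal.ofReal_mul hK.le, mul_comm, ← ENNReal.le_div_iff_mul_le
    (.inl (ENNReal.ofReal_pos.2 hK).ne') (.inl ENNReal.ofReal_ne_top), div_eq_mul_inv,
    mul_right_comm, ← div_eq_mul_inv, ← ENNReal.ofReal_div_of_pos hK] at hcount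
  simp only [← NNReal.coe_pow, ← NNReal.coe_mul, ENNReal.ofReal_coe_nnreal, ENNReal.coe_mul,
    ENNReal.coe_pow] at hcount
  exact hcount

end RestrictedWeakType

section WeakType

open scoped NNReal

variable {n : ℕ} {E F : Set (Pt n)}

lemma volume_incidences_eq_zero (hE : MeasurableSet E) (hF : MeasurableSet F)
    (hF₀ : volume F = 0) : volume (incidences E F) = 0 := by
  rw [volume_eq_lintegral_lineFibre (measurableSet_incidences hE hF)]
  refine nonpos_iff_eq_zero.1 ((lintegral_le_mul_measure_of_support_subset (a := ⊤)
    (fun _ _ => le_top) (Function.support_subset_iff'.2 fun z hz => ?_)).trans_eq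
    (by rw [hF₀, mul_zero]))
  exact (measure_mono fun s hs => hz hs.2).trans_eq measure_empty |>.antisymm zero_le

theorem exists_volume_incidences_pow_le (hn : 2 ≤ n) :
    ∃ C : ℝ≥0, ∀ {Lm : ℝ≥0∞} {E F : Set (Pt n)}, MeasurableSet E → MeasurableSet F →
      volume E ≠ ⊤ → volume F ≠ ⊤ → (∀ t, sliceVol n F t ≤ Lm) →
      volume (incidences E F) ≠ ⊤ →
      volume (incidences E F) ^ (n + (n + n.choose 2)) ≤
        C * Lm * volume F ^ n * volume E ^ (n + n.choose 2) := by
  obtain ⟨C, hC⟩ := exists_pow_mul_pow_le_mul_of_incidences hn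
  refine ⟨C * 2 ^ (n + n.choose 2), fun {Lm E F} hE hF hE_top hF_top hLm hfin => ?_⟩
  set X := volume (incidences E F) with hX
  rcases eq_or_ne X 0 with hX₀ | hX₀
  · rw [hX₀, zero_pow (by omega)]
    exact zero_le
  have hF₀ : volume F ≠ 0 := fun h => hX₀ (volume_incidences_eq_zero hE hF h)
  have hE₀ : volume E ≠ 0 := fun h => hX₀ (by
    rw [hX, volume_incidences hE hF]
    exact setLIntegral_measure_zero _ _ h)
  obtain ⟨α, hα⟩ : ∃ α : ℝ≥0, (α : ℝ≥0∞) = X / volume F :=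
    ⟨_, ENNReal.coe_toNNReal (ENNReal.div_ne_top hfin hF₀)⟩
  obtain ⟨β, hβ⟩ : ∃ β : ℝ≥0, (β : ℝ≥0∞) = X / (2 * volume E) :=
    ⟨_, ENNReal.coe_toNNReal (ENNReal.div_ne_top hfin (mul_ne_zero two_ne_zero hE₀))⟩
  have hαF : α * volume F = X := by rw [hα, ENNReal.div_mul_cancel hF₀ hF_top]
  have hβE : 2 * (β * volume E) = X := by
    rw [hβ, mul_left_comm, ENNReal.div_mul_cancel (mul_ne_zero two_ne_zero hE₀)
      (ENNReal.mul_ne_top ENNReal.ofNat_ne_top hE_top)]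
  have hα₀ : 0 < α := by
    refine pos_iff_ne_zero.2 fun h => hX₀ ?_
    rw [← hαF, h, ENNReal.coe_zero, zero_mul]
  have hβ₀ : 0 < β := by
    refine pos_iff_ne_zero.2 fun h => hX₀ ?_
    rw [← hβE, h, ENNReal.coe_zero, zero_mul, mul_zero]
  calc X ^ (n + (n + n.choose 2))
      = (α * volume F) ^ n * (2 * (β * volume E)) ^ (n + n.choose 2) := by
        rw [hαF, hβE, pow_add]
    _ = α ^ n * β ^ (n + n.choose 2) *
          (2 ^ (n + n.choose 2) * volume F ^ n * volume E ^ (n + n.choose 2)) := by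
        simp only [mul_pow]
        ring
    _ ≤ C * Lm * (2 ^ (n + n.choose 2) * volume F ^ n * volume E ^ (n + n.choose 2)) :=
        mul_le_mul_left (hC hα₀ hβ₀ hE hF hLm hαF.le hβE.le hX₀ hfin) _
    _ = (C * 2 ^ (n + n.choose 2) : ℝ≥0) * Lm * volume F ^ n * volume E ^ (n + n.choose 2) := by
        push_cast
        ring

lemma volume_incidences_le_mul {T : Set ℝ} (hE : MeasurableSet E) (hF : MeasurableSet F)
    (hT : F ⊆ Prod.fst ⁻¹' T) : volume (incidences E F) ≤ volume T * volume E := by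
  rw [volume_incidences hE hF, ← setLIntegral_const]
  exact lintegral_mono fun z => measure_mono fun t ht => hT ht

lemma ofReal_ind (E : Set (Pt n)) (z : Pt n) :
    ENNReal.ofReal (ind n E z) = E.indicator (fun _ => 1) z := by
  by_cases h : z ∈ E <;> simp [ind, h]

lemma Xray_ind (hE : MeasurableSet E) (z : Pt n) :
    Xray n (ind n E) z = volume (lineFibre (incidencePoint ⁻¹' E) z) := by
  have hfibre : MeasurableSet (lineFibre (incidencePoint ⁻¹' E) z) :=
    measurable_prodMk_right (measurable_incidencePoint hE)
  rw [Xray, ← lintegral_indicator_one hfibre]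
  exact lintegral_congr fun s => ofReal_ind E _

lemma measurable_Xray_ind (hE : MeasurableSet E) : Measurable (Xray n (ind n E)) := by
  rw [funext (Xray_ind hE)]
  exact measurable_volume_lineFibre (measurable_incidencePoint hE)

lemma pairSet_eq_setLIntegral (E : Set (Pt n)) (hF : MeasurableSet F) :
    pairSet n E F = ∫⁻ z in F, Xray n (ind n E) z := by
  rw [pairSet, pairing, ← lintegral_indicator hF]
  refine lintegral_congr fun z => ?_
  by_cases hz : z ∈ F <;> simp [ofReal_ind, hz]

theorem pairSet_eq_volume_incidences (hE : MeasurableSet E) (hF : MeasurableSet F) :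
    pairSet n E F = volume (incidences E F) := by
  rw [pairSet_eq_setLIntegral E hF,
    volume_eq_lintegral_lineFibre (measurableSet_incidences hE hF), ← lintegral_indicator hF]
  refine lintegral_congr fun z => ?_
  by_cases hz : z ∈ F
  · rw [indicator_of_mem hz, Xray_ind hE]
    congr 1
    ext s
    simp [lineFibre, incidences, hz]
  · rw [indicator_of_notMem hz, show lineFibre (incidences E F) z = ∅ by
      ext s; simp [lineFibre, incidences, hz], measure_empty]

lemma volume_le_mul_of_sliceVol_le {Lm : ℝ≥0∞} {T : Set ℝ} (hF : MeasurableSet F)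
    (hT : F ⊆ Prod.fst ⁻¹' T) (hLm : ∀ t, sliceVol n F t ≤ Lm) :
    volume F ≤ Lm * volume T := by
  rw [Measure.volume_eq_prod, Measure.prod_apply hF]
  refine lintegral_le_mul_measure_of_support_subset (fun t _ => hLm t)
    (Function.support_subset_iff'.2 fun t ht => ?_)
  exact measure_mono_null (fun y hy => ht (hT hy)) measure_empty

theorem exists_pairSet_le_mul_rpow (hn : 2 ≤ n) :
    ∃ C : ℝ≥0, ∀ {Lm : ℝ≥0∞} {T : Set ℝ} {E F : Set (Pt n)}, MeasurableSet E →
      MeasurableSet F → volume E ≠ ⊤ → volume T ≠ ⊤ → Lm ≠ ⊤ → F ⊆ Prod.fst ⁻¹' T →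
      (∀ t, sliceVol n F t ≤ Lm) →
      pairSet n E F ≤ C * Lm ^ (2 * (n + 1) / (n * (n + 3)) : ℝ) *
        volume T ^ (2 / (n + 3) : ℝ) * volume E ^ (1 - 2 / (n + 3) : ℝ) := by
  obtain ⟨C, hC⟩ := exists_volume_incidences_pow_le hn
  set m := n + (n + n.choose 2) with hm
  have hmR : (m : ℝ) = n * (n + 3) / 2 := by
    rw [hm]
    push_cast [Nat.cast_choose_two]
    ring
  have : (0 : ℝ) < n := by positivity
  have hm₀ : (0 : ℝ) < m := by rw [hmR]; positivity
  have hu : 2 * (n + 1) / (n * (n + 3)) * (m : ℝ) = (1 + n : ℕ) := by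
    rw [hmR]; push_cast; field_simp; ring
  have hw : 2 / (n + 3) * (m : ℝ) = n := by rw [hmR]; field_simp
  have hv : (1 - 2 / (n + 3)) * (m : ℝ) = (n + n.choose 2 : ℕ) := by
    rw [sub_mul, hw, hm]; push_cast; ring
  refine ⟨C ^ (1 / m : ℝ), fun {Lm T E F} hE hF hE_top hT_top hLm_top hT hLm => ?_⟩
  have hvolF := volume_le_mul_of_sliceVol_le hF hT hLm
  rw [← ENNReal.rpow_le_rpow_iff hm₀, pairSet_eq_volume_incidences hE hF, ENNReal.rpow_natCast]
  calc volume (incidences E F) ^ m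
      ≤ C * Lm * volume F ^ n * volume E ^ (n + n.choose 2) :=
        hC hE hF hE_top (hvolF.trans_lt (ENNReal.mul_lt_top hLm_top.lt_top hT_top.lt_top)).ne hLm
          ((volume_incidences_le_mul hE hF hT).trans_lt
            (ENNReal.mul_lt_top hT_top.lt_top hE_top.lt_top)).ne
    _ ≤ C * Lm * (Lm * volume T) ^ n * volume E ^ (n + n.choose 2) := by gcongr
    _ = C * Lm ^ (1 + n) * volume T ^ n * volume E ^ (n + n.choose 2) := by ring
    _ = _ := by
        rw [ENNReal.coe_rpow_of_nonneg _ (by positivity)]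
        simp only [ENNReal.mul_rpow_of_nonneg _ _ hm₀.le, ← ENNReal.rpow_mul, hu, hw, hv,
          one_div_mul_cancel hm₀.ne', ENNReal.rpow_one]
        simp only [ENNReal.rpow_natCast]

end WeakType

section PowersOfTwo

lemma two_rpow_add (x y : ℝ) : (2 : ℝ≥0∞) ^ (x + y) = 2 ^ x * 2 ^ y :=
  ENNReal.rpow_add x y two_ne_zero ENNReal.ofNat_ne_top

lemma two_rpow_le_two_rpow {x y : ℝ} : (2 : ℝ≥0∞) ^ x ≤ 2 ^ y ↔ x ≤ y :=
  StrictMono.le_iff_le (f := fun z : ℝ => (2 : ℝ≥0∞) ^ z) fun _ _ h =>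
    ENNReal.rpow_lt_rpow_of_exponent_lt one_lt_two ENNReal.ofNat_ne_top h

lemma two_rpow_ne_zero (x : ℝ) : (2 : ℝ≥0∞) ^ x ≠ 0 :=
  (ENNReal.rpow_pos two_pos ENNReal.ofNat_ne_top).ne'

lemma two_rpow_ne_top (x : ℝ) : (2 : ℝ≥0∞) ^ x ≠ ⊤ :=
  ENNReal.rpow_ne_top_of_ne_zero two_ne_zero ENNReal.ofNat_ne_top

lemma ofReal_two_rpow (x : ℝ) : ENNReal.ofReal (2 ^ x) = 2 ^ x := by
  rw [← ENNReal.ofReal_rpow_of_pos two_pos, ENNReal.ofReal_ofNat]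

lemma ofReal_two_zpow (k : ℤ) : ENNReal.ofReal (2 ^ k) = 2 ^ k := by
  rw [← Real.rpow_intCast, ofReal_two_rpow, ENNReal.rpow_intCast]

lemma exists_ofReal_eq_two_rpow {a : ℝ} (ha : 0 < a) :
    ∃ x : ℝ, a = 2 ^ x ∧ ENNReal.ofReal a = 2 ^ x := by
  have hx : (2 : ℝ) ^ Real.logb 2 a = a := Real.rpow_logb two_pos (by norm_num) ha
  exact ⟨Real.logb 2 a, hx.symm, by rw [← ofReal_two_rpow, hx]⟩

lemma exists_eq_two_rpow {a : ℝ≥0∞} (ha₀ : a ≠ 0) (ha : a ≠ ⊤) : ∃ x : ℝ, a = 2 ^ x := by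
  obtain ⟨x, -, hx⟩ := exists_ofReal_eq_two_rpow (ENNReal.toReal_pos ha₀ ha)
  exact ⟨x, by rw [← hx, ENNReal.ofReal_toReal ha]⟩

lemma summable_two_rpow_neg_abs {a : ℝ} (ha : 0 < a) :
    Summable fun k : ℤ => (2 : ℝ) ^ (-(a * |(k : ℝ)|)) := by
  have hnat : Summable fun k : ℕ => (2 : ℝ) ^ (-(a * (k : ℝ))) := by
    refine (summable_geometric_of_lt_one (r := (2 : ℝ) ^ (-a)) (by positivity)
      (Real.rpow_lt_one_of_one_lt_of_neg one_lt_two (neg_neg_of_pos ha))).congr fun k => ?_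
    rw [← Real.rpow_natCast, ← Real.rpow_mul zero_le_two, neg_mul]
  exact Summable.of_nat_of_neg (by simpa using hnat) (by simpa using hnat)

lemma exists_tsum_two_rpow_neg_abs_sub_le {a : ℝ} (ha : 0 < a) :
    ∃ C : ℝ≥0∞, C ≠ ⊤ ∧ ∀ c : ℝ, ∑' k : ℤ, (2 : ℝ≥0∞) ^ (-(a * |k - c|)) ≤ C := by
  refine ⟨2 ^ a * ∑' k : ℤ, 2 ^ (-(a * |(k : ℝ)|)), ENNReal.mul_ne_top (two_rpow_ne_top _) ?_,
    fun c => ?_⟩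
  · simpa only [ofReal_two_rpow] using (summable_two_rpow_neg_abs ha).tsum_ofReal_ne_top
  · rw [← (Equiv.addRight ⌊c⌋).tsum_eq, ← ENNReal.tsum_mul_left]
    refine ENNReal.tsum_le_tsum fun k => ?_
    rw [← two_rpow_add, two_rpow_le_two_rpow, Equiv.coe_addRight, Int.cast_add]
    have hfract : |c - ⌊c⌋| ≤ 1 := by
      rw [abs_of_nonneg (sub_nonneg.2 (Int.floor_le c))]
      linarith [Int.lt_floor_add_one c]
    have htri : |(k : ℝ)| ≤ |k + ⌊c⌋ - c| + 1 := by
      calc |(k : ℝ)| = |(k + ⌊c⌋ - c) + (c - ⌊c⌋)| := by ring_nf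
        _ ≤ |k + ⌊c⌋ - c| + |c - ⌊c⌋| := abs_add_le _ _
        _ ≤ |k + ⌊c⌋ - c| + 1 := by gcongr
    linarith [mul_le_mul_of_nonneg_left htri ha.le]

lemma mul_abs_add_mul_abs_le {a b s σ τ x y k l R : ℝ} (ha : 0 ≤ a) (hb : 0 < b) (haτ : a ≤ τ)
    (has : a * |s| ≤ σ) :
    a * b * |k - (s * x + y) / b| + σ * |l - (x - k * R)| ≤
      2 * σ * |k * R + l - x| + τ * |b * k - s * (k * R + l) - y| := by
  set Y : ℝ := k * R + l - x with hY
  set V : ℝ := b * k - s * (k * R + l) - y with hV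
  have hk : b * |k - (s * x + y) / b| ≤ |V| + |s| * |Y| := by
    calc b * |k - (s * x + y) / b| = |V + s * Y| := by
          rw [← abs_of_pos hb, ← abs_mul, abs_of_pos hb, hV, hY]
          congr 1
          field_simp
          ring
      _ ≤ |V| + |s| * |Y| := by
          rw [← abs_mul]
          exact abs_add_le _ _
  have hl : l - (x - k * R) = Y := by rw [hY]; ring
  rw [hl]
  linarith [mul_le_mul_of_nonneg_left hk ha, mul_le_mul_of_nonneg_right has (abs_nonneg Y),
    mul_le_mul_of_nonneg_right haτ (abs_nonneg V)]

theorem exists_tsum_tsum_two_rpow_le (R : ℝ) {b σ τ : ℝ} (s : ℝ) (hb : 0 < b) (hσ : 0 < σ)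
    (hτ : 0 < τ) : ∃ C : ℝ≥0∞, C ≠ ⊤ ∧ ∀ x y : ℝ, ∑' k : ℤ, ∑' l : ℤ,
      (2 : ℝ≥0∞) ^ (-(2 * σ * |k * R + l - x|) - τ * |b * k - s * (k * R + l) - y|) ≤ C := by
  set a := min τ (σ / (|s| + 1))
  have ha : 0 < a := by positivity
  have has : a * |s| ≤ σ := by
    calc a * |s| ≤ σ / (|s| + 1) * (|s| + 1) := by
          gcongr
          · exact min_le_right _ _
          · linarith
      _ = σ := div_mul_cancel₀ _ (by positivity)
  obtain ⟨C₁, hC₁, hsum₁⟩ := exists_tsum_two_rpow_neg_abs_sub_le (mul_pos ha hb)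
  obtain ⟨C₂, hC₂, hsum₂⟩ := exists_tsum_two_rpow_neg_abs_sub_le hσ
  refine ⟨C₁ * C₂, ENNReal.mul_ne_top hC₁ hC₂, fun x y => ?_⟩
  calc ∑' k : ℤ, ∑' l : ℤ,
        (2 : ℝ≥0∞) ^ (-(2 * σ * |k * R + l - x|) - τ * |b * k - s * (k * R + l) - y|)
      ≤ ∑' k : ℤ, ∑' l : ℤ,
          2 ^ (-(a * b * |k - (s * x + y) / b|)) * 2 ^ (-(σ * |l - (x - k * R)|)) := by
        refine ENNReal.tsum_le_tsum fun k => ENNReal.tsum_le_tsum fun l => ?_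
        rw [← two_rpow_add, two_rpow_le_two_rpow]
        linarith [mul_abs_add_mul_abs_le (x := x) (y := y) (k := k) (l := l) (R := R) ha.le hb
          (min_le_left τ (σ / (|s| + 1))) has]
    _ ≤ ∑' k : ℤ, 2 ^ (-(a * b * |k - (s * x + y) / b|)) * C₂ := by
        refine ENNReal.tsum_le_tsum fun k => ?_
        rw [ENNReal.tsum_mul_left]
        gcongr
        exact hsum₂ _
    _ ≤ C₁ * C₂ := by
        rw [ENNReal.tsum_mul_right]
        gcongr
        exact hsum₁ _

end PowersOfTwo

section DyadicPieces

variable {n : ℕ} {E F : Set (Pt n)} {g : Pt n → ℝ} {Q R : ℝ}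

/-- The set of times contributing to the dyadic piece `F_k^l` of `g`: those `t` whose slice of the
`k`-th level set has measure in `[2^l, 2^(l+1))`. -/
def dyadicTimes (g : Pt n → ℝ) (k l : ℤ) : Set ℝ :=
  {t | (2 : ℝ≥0∞) ^ l ≤ sliceVol n (lev n g k) t ∧ sliceVol n (lev n g k) t < 2 ^ (l + 1)}

lemma measurableSet_lev (hg : Measurable g) (k : ℤ) : MeasurableSet (lev n g k) :=
  (measurableSet_le measurable_const hg).inter (measurableSet_lt hg measurable_const)

lemma measurable_sliceVol (hF : MeasurableSet F) : Measurable (sliceVol n F) :=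
  measurable_measure_prodMk_left hF

lemma measurableSet_dyadicTimes (hg : Measurable g) (k l : ℤ) :
    MeasurableSet (dyadicTimes g k l) :=
  measurable_sliceVol (measurableSet_lev hg k) measurableSet_Ico

lemma measurableSet_Fkl (hg : Measurable g) (k l : ℤ) : MeasurableSet (Fkl n g k l) :=
  (measurableSet_lev hg k).inter (measurable_fst (measurableSet_dyadicTimes hg k l))

lemma sliceVol_Fkl (g : Pt n → ℝ) (k l : ℤ) :
    sliceVol n (Fkl n g k l) = (dyadicTimes g k l).indicator (sliceVol n (lev n g k)) := by
  funext t
  change volume {y | (t, y) ∈ lev n g k ∧ t ∈ dyadicTimes g k l} = _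
  by_cases ht : t ∈ dyadicTimes g k l <;> simp [ht, sliceVol]

lemma sliceVol_Fkl_le (g : Pt n → ℝ) (k l : ℤ) (t : ℝ) :
    sliceVol n (Fkl n g k l) t ≤ 2 ^ (l + 1) := by
  rw [sliceVol_Fkl]
  exact indicator_apply_le' (fun ht => ht.2.le) fun _ => zero_le

lemma mixedNormR_rpow (hQ : 0 < Q) (R : ℝ) (g : Pt n → ℝ) :
    mixedNormR n Q R g ^ Q = ∫⁻ t, (∫⁻ y, ENNReal.ofReal |g (t, y)| ^ R) ^ (Q / R) := by
  rw [mixedNormR, mixedNorm, mixedNormG, ← ENNReal.rpow_mul, one_div_mul_cancel hQ.ne',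
    ENNReal.rpow_one]

lemma mixedNormR_ind_rpow (hQ : 0 < Q) (hR : 0 < R) (hF : MeasurableSet F) :
    mixedNormR n Q R (ind n F) ^ Q = ∫⁻ t, sliceVol n F t ^ (Q / R) := by
  rw [mixedNormR_rpow hQ]
  refine lintegral_congr fun t => ?_
  have hslice : MeasurableSet {y : Fin n → ℝ | (t, y) ∈ F} := measurable_prodMk_left hF
  rw [sliceVol, ← lintegral_indicator_one hslice]
  congr 1
  refine lintegral_congr fun y => ?_
  by_cases hy : (t, y) ∈ F <;> simp [ind, hy, hR]

lemma mixedNormR_ind_Fkl_le (hQ : 0 < Q) (hR : 0 < R) (hg : Measurable g) (k l : ℤ) :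
    mixedNormR n Q R (ind n (Fkl n g k l)) ≤
      (2 ^ (l + 1)) ^ (1 / R) * volume (dyadicTimes g k l) ^ (1 / Q) := by
  rw [← ENNReal.rpow_le_rpow_iff hQ, ENNReal.mul_rpow_of_nonneg _ _ hQ.le, ← ENNReal.rpow_mul,
    ← ENNReal.rpow_mul, one_div_mul_cancel hQ.ne', ENNReal.rpow_one, one_div_mul_eq_div,
    mixedNormR_ind_rpow hQ hR (measurableSet_Fkl hg k l),
    ← lintegral_indicator_const (measurableSet_dyadicTimes hg k l)]
  refine lintegral_mono fun t => ?_
  rw [sliceVol_Fkl]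
  by_cases ht : t ∈ dyadicTimes g k l
  · rw [indicator_of_mem ht, indicator_of_mem ht]
    exact ENNReal.rpow_le_rpow ht.2.le (by positivity)
  · rw [indicator_of_notMem ht, indicator_of_notMem ht, ENNReal.zero_rpow_of_pos (by positivity)]

lemma le_mixedNormR_ind_Fkl_rpow (hQ : 0 < Q) (hR : 0 < R) (hg : Measurable g) (k l : ℤ) :
    (2 ^ l) ^ (Q / R) * volume (dyadicTimes g k l) ≤
      mixedNormR n Q R (ind n (Fkl n g k l)) ^ Q := by
  rw [mixedNormR_ind_rpow hQ hR (measurableSet_Fkl hg k l),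
    ← lintegral_indicator_const (measurableSet_dyadicTimes hg k l)]
  refine lintegral_mono (indicator_le fun t ht => ?_)
  rw [sliceVol_Fkl, indicator_of_mem ht]
  exact ENNReal.rpow_le_rpow ht.1 (by positivity)

lemma zpow_rpow_mul_sliceVol_lev_le (hR : 0 ≤ R) (hg : Measurable g) (k : ℤ) (t : ℝ) :
    (2 ^ k) ^ R * sliceVol n (lev n g k) t ≤ ∫⁻ y, ENNReal.ofReal (g (t, y)) ^ R := by
  have hslice : MeasurableSet {y : Fin n → ℝ | (t, y) ∈ lev n g k} :=
    measurable_prodMk_left (measurableSet_lev hg k)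
  rw [sliceVol, ← lintegral_indicator_const hslice]
  refine lintegral_mono (indicator_le fun y hy => ENNReal.rpow_le_rpow ?_ hR)
  rw [← ofReal_two_zpow]
  exact ENNReal.ofReal_le_ofReal hy.1

lemma ae_sliceVol_mem_Ioo (hR : 0 ≤ R) (hg : Measurable g)
    (hfin : ∀ᵐ t, ∫⁻ y, ENNReal.ofReal (g (t, y)) ^ R ≠ ⊤) (k : ℤ) :
    ∀ᵐ z : Pt n, z ∈ lev n g k → sliceVol n (lev n g k) z.1 ∈ Ioo 0 ⊤ := by
  have hlev := measurableSet_lev hg k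
  have hmeas : MeasurableSet (sliceVol n (lev n g k) ⁻¹' (Ioo 0 ⊤)ᶜ) :=
    measurable_sliceVol hlev measurableSet_Ioo.compl
  suffices h : volume (lev n g k ∩ Prod.fst ⁻¹' (sliceVol n (lev n g k) ⁻¹' (Ioo 0 ⊤)ᶜ)) = 0 by
    filter_upwards [measure_eq_zero_iff_ae_notMem.1 h] with z hz hzk
    exact by_contra fun hmem => hz ⟨hzk, hmem⟩
  rw [Measure.volume_eq_prod, Measure.measure_prod_null (hlev.inter (measurable_fst hmeas))]
  filter_upwards [hfin] with t ht
  by_cases hslice : sliceVol n (lev n g k) t = 0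
  · exact measure_mono_null (fun y hy => hy.1) hslice
  · have htop : sliceVol n (lev n g k) t ≠ ⊤ := fun h => ht (top_le_iff.1 (by
      simpa [h, ← ENNReal.rpow_intCast, ← ENNReal.rpow_mul, ENNReal.mul_top, two_rpow_ne_zero]
        using zpow_rpow_mul_sliceVol_lev_le hR hg k t))
    refine measure_mono_null (fun y hy => hy.2 ⟨pos_iff_ne_zero.2 hslice, htop.lt_top⟩)
      measure_empty

lemma ae_exists_mem_Fkl (hR : 0 ≤ R) (hg : Measurable g)
    (hfin : ∀ᵐ t, ∫⁻ y, ENNReal.ofReal (g (t, y)) ^ R ≠ ⊤) :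
    ∀ᵐ z : Pt n, 0 < g z → ∃ k l : ℤ, z ∈ Fkl n g k l := by
  filter_upwards [ae_all_iff.2 (ae_sliceVol_mem_Ioo hR hg hfin)] with z hz hgz
  obtain ⟨k, hk⟩ := exists_mem_Ico_zpow hgz (one_lt_two (α := ℝ))
  obtain ⟨l, hl⟩ := ENNReal.exists_mem_Ico_zpow (hz k hk).1.ne' (hz k hk).2.ne one_lt_two
    ENNReal.ofNat_ne_top
  exact ⟨k, l, hk, hl⟩

theorem pairing_le_tsum_pairSet_Fkl (hR : 0 ≤ R) (hE : MeasurableSet E) (hg : Measurable g)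
    (hfin : ∀ᵐ t, ∫⁻ y, ENNReal.ofReal (g (t, y)) ^ R ≠ ⊤) :
    pairing n (ind n E) g ≤
      ∑' k : ℤ, ∑' l : ℤ, (2 : ℝ≥0∞) ^ (k + 1) * pairSet n E (Fkl n g k l) := by
  have hmeas (k l : ℤ) : Measurable fun z =>
      (2 : ℝ≥0∞) ^ (k + 1) * (Fkl n g k l).indicator (Xray n (ind n E)) z :=
    ((measurable_Xray_ind hE).indicator (measurableSet_Fkl hg k l)).const_mul _
  calc pairing n (ind n E) g
      ≤ ∫⁻ z, ∑' k : ℤ, ∑' l : ℤ,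
          (2 : ℝ≥0∞) ^ (k + 1) * (Fkl n g k l).indicator (Xray n (ind n E)) z := by
        refine lintegral_mono_ae ?_
        filter_upwards [ae_exists_mem_Fkl hR hg hfin] with z hz
        rcases le_or_gt (g z) 0 with hgz | hgz
        · rw [ENNReal.ofReal_of_nonpos hgz, mul_zero]
          exact zero_le
        · obtain ⟨k, l, hkl⟩ := hz hgz
          refine le_trans ?_ ((ENNReal.le_tsum l).trans (ENNReal.le_tsum k))
          rw [indicator_of_mem hkl, mul_comm, ← ofReal_two_zpow]
          gcongr
          exact hkl.1.2.le
    _ = ∑' k : ℤ, ∑' l : ℤ, (2 : ℝ≥0∞) ^ (k + 1) * pairSet n E (Fkl n g k l) := by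
        rw [lintegral_tsum fun k => (Measurable.tsum (hmeas k)).aemeasurable]
        refine tsum_congr fun k => ?_
        rw [lintegral_tsum fun l => (hmeas k l).aemeasurable]
        refine tsum_congr fun l => ?_
        rw [pairSet_eq_setLIntegral E (measurableSet_Fkl hg k l),
          ← lintegral_indicator (measurableSet_Fkl hg k l), lintegral_const_mul _
            ((measurable_Xray_ind hE).indicator (measurableSet_Fkl hg k l))]

end DyadicPieces

section PieceEstimate

/-- `1/Q` and `1/R` are obtained by interpolating with parameter `θ ∈ (0, 1)` between the trivial
bound `𝒳(E, F) ≤ |T| |E|` and the bound `𝒳(E, F) ≲ L^u |T|^w |E|^(1 - w)`, for sets `F` lying over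
the times `T` whose slices have measure about `L`. -/
structure InterpolatedExponents (θ u w Q R : ℝ) : Prop where
  theta_pos : 0 < θ
  theta_lt_one : θ < 1
  u_pos : 0 < u
  w_nonneg : 0 ≤ w
  w_le_one : w ≤ 1
  one_div_Q : 1 / Q = 1 - θ * (1 - w)
  one_div_R : 1 / R = θ * u

variable {θ u w Q R c₁ : ℝ}

lemma InterpolatedExponents.R_pos (hexp : InterpolatedExponents θ u w Q R) : 0 < R :=
  one_div_pos.1 (hexp.one_div_R ▸ mul_pos hexp.theta_pos hexp.u_pos)

lemma InterpolatedExponents.Q_pos (hexp : InterpolatedExponents θ u w Q R) : 0 < Q :=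
  one_div_pos.1 (hexp.one_div_Q ▸ sub_pos.2 (mul_lt_one_of_nonneg_of_lt_one_left
    hexp.theta_pos.le hexp.theta_lt_one (by linarith [hexp.w_nonneg])))

lemma InterpolatedExponents.one_le_Q (hexp : InterpolatedExponents θ u w Q R) : 1 ≤ Q := by
  rw [← div_le_one hexp.Q_pos, hexp.one_div_Q]
  linarith [mul_nonneg hexp.theta_pos.le (sub_nonneg.2 hexp.w_le_one)]

/- In the next lemmas all real parameters but the exponents stand for base-two logarithms: `e` of
`|E|`, `t` of the measure of the times of a piece, `x` of its pairing with `E`, `a` of `A`, `H` of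
`η`, `D` of `δ₁` and `G` of the norm of `g`. -/

lemma le_sub_mul_abs_of_interpolation {b v x : ℝ} (hθ₀ : 0 < θ) (hθ₁ : θ < 1)
    (h : ∀ φ ∈ Icc (0 : ℝ) 1, x ≤ b + φ * v) : x ≤ b + θ * v - min θ (1 - θ) * |v| := by
  have hε : 0 < min θ (1 - θ) := lt_min hθ₀ (sub_pos.2 hθ₁)
  have hεθ := min_le_left θ (1 - θ)
  have hθε := min_le_right θ (1 - θ)
  rcases le_total 0 v with hv | hv
  · rw [abs_of_nonneg hv]
    linarith [h (θ - min θ (1 - θ)) ⟨by linarith, by linarith⟩]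
  · rw [abs_of_nonpos hv]
    linarith [h (θ + min θ (1 - θ)) ⟨by linarith, by linarith⟩]

lemma log_piece_le_of_weakType {k l e t G H x : ℝ} (hexp : InterpolatedExponents θ u w Q R)
    (hc₁ : 0 ≤ c₁) (htrivial : x ≤ e + t)
    (hweak : x ≤ c₁ + u * (l + 1) + w * t + (1 - w) * e)
    (ht : k * Q + l * (Q / R) + t ≤ 1 + H + Q * G) :
    k + x ≤ c₁ + u + 1 / Q + H / Q + e * (1 - θ * w) + G -
      min θ (1 - θ) * |u * R * k - (u + (1 - w) * (Q / R)) * (k * R + l) -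
        -((1 - w) * (1 + H + Q * G) + w * e)| := by
  have hQ := hexp.Q_pos
  have hR := hexp.R_pos
  set t' := 1 + H + Q * G - k * Q - l * (Q / R) with ht'
  set v := u * l - (1 - w) * t' - w * e with hv
  have hvabs : |u * R * k - (u + (1 - w) * (Q / R)) * (k * R + l) -
      -((1 - w) * (1 + H + Q * G) + w * e)| = |v| := by
    rw [← abs_neg v, hv, ht']
    congr 1
    field_simp
    ring
  have hbase : k + (e + t' + θ * v) = 1 / Q + H / Q + e * (1 - θ * w) + G := by
    have hsplit : e + t' + θ * v = t' * (1 / Q) + l * (1 / R) + e * (1 - θ * w) := by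
      rw [hexp.one_div_Q, hexp.one_div_R, hv]
      ring
    rw [hsplit, ht']
    field_simp
    ring
  have hinterp (φ : ℝ) (hφ : φ ∈ Icc (0 : ℝ) 1) : x ≤ (c₁ + u + e + t') + φ * v := by
    have hcoeff : φ * (1 - w) ≤ 1 :=
      mul_le_one₀ hφ.2 (sub_nonneg.2 hexp.w_le_one) (by linarith [hexp.w_nonneg])
    have hφ' : 0 ≤ 1 - φ := sub_nonneg.2 hφ.2
    have hc₁u : 0 ≤ c₁ + u := add_nonneg hc₁ hexp.u_pos.le
    calc x = (1 - φ) * x + φ * x := by ring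
      _ ≤ (1 - φ) * (e + t) + φ * (c₁ + u * (l + 1) + w * t + (1 - w) * e) := by
          gcongr
          exact hφ.1
      _ = (1 - φ * (1 - w)) * t + e + φ * (u * l - w * e) + φ * (c₁ + u) := by ring
      _ ≤ (1 - φ * (1 - w)) * t' + e + φ * (u * l - w * e) + 1 * (c₁ + u) := by
          gcongr
          · linarith
          · exact hφ.2
      _ = (c₁ + u + e + t') + φ * v := by rw [hv]; ring
  rw [hvabs]
  linarith [le_sub_mul_abs_of_interpolation hexp.theta_pos hexp.theta_lt_one hinterp]

lemma log_piece_le_of_strength {P a k l e t D G x : ℝ} (hQ : 0 < Q) (hR : 0 < R)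
    (hx : x ≤ 1 + D + e * P + ((l + 1) * (1 / R) + t * (1 / Q))) (hkl : k * R + l ≤ 1 + a)
    (ht : (a - 1) * (Q / R) + t ≤ Q * G) :
    k + x ≤ 1 + 4 / R + D + e * P + G - 1 / R * |k * R + l - a| := by
  have htG : t * (1 / Q) ≤ G - (a - 1) * (1 / R) := by
    calc t * (1 / Q) ≤ (Q * G - (a - 1) * (Q / R)) * (1 / Q) := by gcongr; linarith
      _ = G - (a - 1) * (1 / R) := by field_simp
  have habs : k * R + l - a ≤ 2 - |k * R + l - a| := by
    rcases abs_cases (k * R + l - a) with h | h <;> linarith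
  calc k + x ≤ 1 + D + e * P + G + 1 / R * (k * R + l - a + 2) := by
        have hk : k = 1 / R * (k * R) := by field_simp
        linarith
    _ ≤ 1 + D + e * P + G + 1 / R * (2 - |k * R + l - a| + 2) := by gcongr
    _ = _ := by ring

lemma two_rpow_mul_le_of_piece_bounds {a k l e G H D : ℝ} {X τ : ℝ≥0∞}
    (hexp : InterpolatedExponents θ u w Q R) (hc₁ : 0 ≤ c₁) (hD : D ≤ 0) (hX₀ : X ≠ 0)
    (hτ₀ : τ ≠ 0) (hτ : τ ≠ ⊤) (htrivial : X ≤ τ * 2 ^ e)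
    (hweak : X ≤ 2 ^ c₁ * (2 ^ (l + 1)) ^ u * τ ^ w * (2 ^ e) ^ (1 - w))
    (hsize : (2 ^ k) ^ Q * ((2 ^ l) ^ (Q / R) * τ) ≤ 2 ^ (1 + H) * (2 ^ G) ^ Q)
    (hstrength : X ≤
      2 ^ (1 + D) * (2 ^ e) ^ (1 - θ * w) * ((2 ^ (l + 1)) ^ (1 / R) * τ ^ (1 / Q)))
    (hheight : (2 : ℝ≥0∞) ^ (k * R) * 2 ^ l ≤ 2 ^ (1 + a))
    (htimes : (2 ^ (a - 1)) ^ (Q / R) * τ ≤ (2 ^ G) ^ Q) :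
    2 ^ (k + 1) * X ≤
      2 ^ (2 + (c₁ + u + 1 / Q + 4 / R) / 2 + (D + H) / (2 * Q) + e * (1 - θ * w) + G) *
        2 ^ (-(2 * (1 / (4 * R)) * |k * R + l - a|) - min θ (1 - θ) / 2 *
          |u * R * k - (u + (1 - w) * (Q / R)) * (k * R + l) -
            -((1 - w) * (1 + H + Q * G) + w * e)|) := by
  have hQ := hexp.Q_pos
  have hR := hexp.R_pos
  have hX : X ≠ ⊤ := ne_top_of_le_ne_top (ENNReal.mul_ne_top hτ (two_rpow_ne_top e)) htrivial
  obtain ⟨t, rfl⟩ := exists_eq_two_rpow hτ₀ hτ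
  obtain ⟨x, rfl⟩ := exists_eq_two_rpow hX₀ hX
  simp only [← ENNReal.rpow_mul, ← two_rpow_add, two_rpow_le_two_rpow] at *
  have h₁ := log_piece_le_of_weakType (k := k) (l := l) (H := H) (G := G) hexp hc₁
    (htrivial.trans_eq (add_comm t e)) (by linarith) (by linarith)
  have h₂ := log_piece_le_of_strength (k := k) (G := G) hQ hR hstrength hheight (by linarith)
  have hDQ : D ≤ D / Q := by
    rw [le_div_iff₀ hQ]
    linarith [mul_le_mul_of_nonpos_left hexp.one_le_Q hD]
  have hσ : 2 * (1 / (4 * R)) * |k * R + l - a| = 1 / R * |k * R + l - a| / 2 := by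
    field_simp
    ring
  have hDH : (D + H) / (2 * Q) = (D / Q + H / Q) / 2 := by field_simp
  rw [hσ, hDH]
  linarith

end PieceEstimate

section DyadicSummation

open scoped NNReal

variable {n : ℕ} {E : Set (Pt n)} {g : Pt n → ℝ} {θ Q R : ℝ}

lemma pairSet_Fkl_le (hE : MeasurableSet E) (hg : Measurable g) (k l : ℤ) :
    pairSet n E (Fkl n g k l) ≤ volume (dyadicTimes g k l) * volume E := by
  rw [pairSet_eq_volume_incidences hE (measurableSet_Fkl hg k l)]
  exact volume_incidences_le_mul hE (measurableSet_Fkl hg k l) fun _ hz => hz.2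

lemma zpow_rpow_mul_zpow_le {B : ℝ≥0∞} {k l : ℤ} (hR : 0 ≤ R) (hg : Measurable g)
    (hB : ∀ᵐ t, ∫⁻ y, ENNReal.ofReal (g (t, y)) ^ R ≤ B)
    (hkl : volume (dyadicTimes g k l) ≠ 0) : (2 ^ k) ^ R * 2 ^ l ≤ B := by
  obtain ⟨t, ht, htB⟩ := ((frequently_ae_mem_iff.2 hkl).and_eventually hB).exists
  calc (2 ^ k) ^ R * 2 ^ l ≤ (2 ^ k) ^ R * sliceVol n (lev n g k) t := by gcongr; exact ht.1
    _ ≤ ∫⁻ y, ENNReal.ofReal (g (t, y)) ^ R := zpow_rpow_mul_sliceVol_lev_le hR hg k t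
    _ ≤ B := htB

lemma rpow_mul_volume_dyadicTimes_le {b : ℝ≥0∞} (hQ : 0 < Q) (hR : 0 < R) (hg : Measurable g)
    (hb : ∀ᵐ t, ∫⁻ y, ENNReal.ofReal (g (t, y)) ^ R = 0 ∨
      b ≤ ∫⁻ y, ENNReal.ofReal (g (t, y)) ^ R) (k l : ℤ) :
    b ^ (Q / R) * volume (dyadicTimes g k l) ≤ mixedNormR n Q R g ^ Q := by
  rw [mixedNormR_rpow hQ, ← lintegral_indicator_const (measurableSet_dyadicTimes hg k l)]
  refine lintegral_mono_ae ?_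
  filter_upwards [hb] with t ht
  refine indicator_apply_le' (fun htkl => ?_) fun _ => zero_le
  have hpos : 0 < ∫⁻ y, ENNReal.ofReal (g (t, y)) ^ R :=
    calc (0 : ℝ≥0∞) < (2 ^ k) ^ R * 2 ^ l := by
          simp only [← ENNReal.rpow_intCast, ← ENNReal.rpow_mul, ← two_rpow_add]
          exact pos_iff_ne_zero.2 (two_rpow_ne_zero _)
      _ ≤ (2 ^ k) ^ R * sliceVol n (lev n g k) t := by gcongr; exact htkl.1
      _ ≤ _ := zpow_rpow_mul_sliceVol_lev_le hR.le hg k t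
  refine ENNReal.rpow_le_rpow ((ht.resolve_left hpos.ne').trans ?_) (by positivity)
  gcongr with y
  exact le_abs_self _

/-- The upper bounds satisfied by a set `E` and a function `g` whose dyadic pieces have size at most
about `η` and interact with `E` with strength at most about `δ₁`, relative to the bound
`|E|^P ‖g‖_{L^Q_t L^R_y}`. -/
structure WeaklyInteracting (n : ℕ) (Q R P η δ₁ A : ℝ) (E : Set (Pt n)) (g : Pt n → ℝ) : Prop where
  size_pos : 0 < η
  strength_mem : δ₁ ∈ Ioc 0 1
  height_pos : 0 < A
  measurableSet : MeasurableSet E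
  volume_ne_zero : volume E ≠ 0
  volume_ne_top : volume E ≠ ⊤
  measurable : Measurable g
  norm_ne_top : mixedNormR n Q R g ≠ ⊤
  fibre : ∀ᵐ t, ∫⁻ y, ENNReal.ofReal (g (t, y)) ^ R = 0 ∨
    ∫⁻ y, ENNReal.ofReal (g (t, y)) ^ R ∈ Icc (ENNReal.ofReal (A / 2)) (ENNReal.ofReal (2 * A))
  size : ∀ k l, volume (Fkl n g k l) ≠ 0 →
    (2 ^ k) ^ Q * mixedNormR n Q R (ind n (Fkl n g k l)) ^ Q ≤
      ENNReal.ofReal (2 * η) * mixedNormR n Q R g ^ Q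
  strength : ∀ k l, volume (Fkl n g k l) ≠ 0 → pairSet n E (Fkl n g k l) ≤
    ENNReal.ofReal (2 * δ₁) * volume E ^ P * mixedNormR n Q R (ind n (Fkl n g k l))

variable {u w c₁ P η δ₁ A : ℝ}

lemma WeaklyInteracting.fibre_ne_top (h : WeaklyInteracting n Q R P η δ₁ A E g) :
    ∀ᵐ t, ∫⁻ y, ENNReal.ofReal (g (t, y)) ^ R ≠ ⊤ :=
  h.fibre.mono fun _ ht => ht.elim (fun h₀ => h₀ ▸ zero_ne_top) fun hA =>
    ne_top_of_le_ne_top ofReal_ne_top hA.2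

lemma WeaklyInteracting.rpow_mul_volume_dyadicTimes_le (h : WeaklyInteracting n Q R P η δ₁ A E g)
    (hQ : 0 < Q) (hR : 0 < R) (k l : ℤ) :
    ENNReal.ofReal (A / 2) ^ (Q / R) * volume (dyadicTimes g k l) ≤ mixedNormR n Q R g ^ Q :=
  _root_.rpow_mul_volume_dyadicTimes_le hQ hR h.measurable
    (h.fibre.mono fun _ ht => ht.imp_right And.left) k l

lemma WeaklyInteracting.zpow_rpow_mul_zpow_le (h : WeaklyInteracting n Q R P η δ₁ A E g)
    (hR : 0 ≤ R) {k l : ℤ} (hkl : volume (dyadicTimes g k l) ≠ 0) :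
    (2 ^ k) ^ R * 2 ^ l ≤ ENNReal.ofReal (2 * A) :=
  _root_.zpow_rpow_mul_zpow_le hR h.measurable
    (h.fibre.mono fun _ ht => ht.elim (fun h₀ => h₀.trans_le zero_le) And.right) hkl

lemma WeaklyInteracting.volume_dyadicTimes_ne_top (h : WeaklyInteracting n Q R P η δ₁ A E g)
    (hQ : 0 < Q) (hR : 0 < R) (k l : ℤ) : volume (dyadicTimes g k l) ≠ ⊤ := by
  have hA : 0 < ENNReal.ofReal (A / 2) := ENNReal.ofReal_pos.2 (half_pos h.height_pos)
  exact (ENNReal.lt_top_of_mul_ne_top_right (ne_top_of_le_ne_top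
    (ENNReal.rpow_ne_top_of_nonneg hQ.le h.norm_ne_top)
    (h.rpow_mul_volume_dyadicTimes_le hQ hR k l))
    (ENNReal.rpow_pos hA ofReal_ne_top).ne').ne

lemma WeaklyInteracting.pairing_eq_zero (h : WeaklyInteracting n Q R P η δ₁ A E g)
    (hQ : 0 < Q) (hR : 0 < R) (hg : mixedNormR n Q R g = 0) : pairing n (ind n E) g = 0 := by
  have hA : 0 < ENNReal.ofReal (A / 2) := ENNReal.ofReal_pos.2 (half_pos h.height_pos)
  have hpiece (k l : ℤ) : pairSet n E (Fkl n g k l) = 0 := by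
    have hτ : volume (dyadicTimes g k l) = 0 := by
      have hle := h.rpow_mul_volume_dyadicTimes_le hQ hR k l
      rw [hg, ENNReal.zero_rpow_of_pos hQ, nonpos_iff_eq_zero, mul_eq_zero] at hle
      exact hle.resolve_left (ENNReal.rpow_pos hA ofReal_ne_top).ne'
    simpa [hτ] using pairSet_Fkl_le h.measurableSet h.measurable k l
  simpa [hpiece] using
    pairing_le_tsum_pairSet_Fkl hR.le h.measurableSet h.measurable h.fibre_ne_top

lemma WeaklyInteracting.two_rpow_mul_pairSet_le {a e G H D : ℝ}
    (hexp : InterpolatedExponents θ u w Q R) (hc₁ : 0 ≤ c₁)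
    (h : WeaklyInteracting n Q R (1 - θ * w) (2 ^ H) (2 ^ D) (2 ^ a) E g)
    (hEe : volume E = 2 ^ e) (hgG : mixedNormR n Q R g = 2 ^ G) {k l : ℤ}
    (hweak : pairSet n E (Fkl n g k l) ≤ 2 ^ c₁ * (2 ^ (l + 1)) ^ u *
      volume (dyadicTimes g k l) ^ w * volume E ^ (1 - w)) :
    2 ^ (k + 1) * pairSet n E (Fkl n g k l) ≤
      2 ^ (2 + (c₁ + u + 1 / Q + 4 / R) / 2 + (D + H) / (2 * Q) + e * (1 - θ * w) + G) *
        2 ^ (-(2 * (1 / (4 * R)) * |k * R + l - a|) - min θ (1 - θ) / 2 *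
          |u * R * k - (u + (1 - w) * (Q / R)) * (k * R + l) -
            -((1 - w) * (1 + H + Q * G) + w * e)|) := by
  rcases eq_or_ne (pairSet n E (Fkl n g k l)) 0 with hX | hX
  · rw [hX, mul_zero]
    exact zero_le
  have hQ := hexp.Q_pos
  have hR := hexp.R_pos
  have hg := h.measurable
  have htwo_mul (x : ℝ) : ENNReal.ofReal (2 * 2 ^ x) = 2 ^ (1 + x) := by
    rw [← ofReal_two_rpow, Real.rpow_add two_pos, Real.rpow_one]
  have hhalf : ENNReal.ofReal (2 ^ a / 2) = 2 ^ (a - 1) := by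
    rw [← ofReal_two_rpow, Real.rpow_sub_one two_ne_zero]
  have hD : D ≤ 0 := by
    simpa using (Real.rpow_le_rpow_left_iff one_lt_two).1
      (h.strength_mem.2.trans_eq (Real.rpow_zero 2).symm)
  have htrivial := pairSet_Fkl_le h.measurableSet hg k l
  have hτ₀ : volume (dyadicTimes g k l) ≠ 0 := fun hτ => hX (by simpa [hτ] using htrivial)
  have hF : volume (Fkl n g k l) ≠ 0 := fun hF => hX (by
    rw [pairSet_eq_setLIntegral E (measurableSet_Fkl hg k l), setLIntegral_measure_zero _ _ hF])
  have hheight := h.zpow_rpow_mul_zpow_le hR.le hτ₀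
  have htimes := h.rpow_mul_volume_dyadicTimes_le hQ hR k l
  have hsize := (mul_le_mul_right (le_mixedNormR_ind_Fkl_rpow hQ hR hg k l) _).trans (h.size k l hF)
  have hstrength := (h.strength k l hF).trans
    (mul_le_mul_right (mixedNormR_ind_Fkl_le hQ hR hg k l) _)
  rw [hEe] at htrivial hweak
  rw [htwo_mul, ← ENNReal.rpow_intCast, ← ENNReal.rpow_intCast, ← ENNReal.rpow_mul] at hheight
  rw [hhalf, hgG] at htimes
  rw [htwo_mul, hgG, ← ENNReal.rpow_intCast, ← ENNReal.rpow_intCast] at hsize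
  rw [htwo_mul, hEe] at hstrength
  rw [← ENNReal.rpow_intCast, Int.cast_add, Int.cast_one] at hweak hstrength ⊢
  exact two_rpow_mul_le_of_piece_bounds hexp hc₁ hD hX hτ₀
    (h.volume_dyadicTimes_ne_top hQ hR k l) htrivial hweak hsize hstrength hheight htimes

lemma WeaklyInteracting.pairing_le_of_tsum_le {a e G H D : ℝ} {K : ℝ≥0∞}
    (hexp : InterpolatedExponents θ u w Q R) (hc₁ : 0 ≤ c₁)
    (h : WeaklyInteracting n Q R (1 - θ * w) (2 ^ H) (2 ^ D) (2 ^ a) E g)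
    (hEe : volume E = 2 ^ e) (hgG : mixedNormR n Q R g = 2 ^ G)
    (hweak : ∀ k l, pairSet n E (Fkl n g k l) ≤ 2 ^ c₁ * (2 ^ (l + 1)) ^ u *
      volume (dyadicTimes g k l) ^ w * volume E ^ (1 - w))
    (hK : ∀ x y : ℝ, ∑' k : ℤ, ∑' l : ℤ, (2 : ℝ≥0∞) ^ (-(2 * (1 / (4 * R)) * |k * R + l - x|) -
      min θ (1 - θ) / 2 * |u * R * k - (u + (1 - w) * (Q / R)) * (k * R + l) - y|) ≤ K) :
    pairing n (ind n E) g ≤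
      2 ^ (2 + (c₁ + u + 1 / Q + 4 / R) / 2 + (D + H) / (2 * Q) + e * (1 - θ * w) + G) * K := by
  refine (pairing_le_tsum_pairSet_Fkl hexp.R_pos.le h.measurableSet h.measurable
    h.fibre_ne_top).trans ?_
  refine (ENNReal.tsum_le_tsum fun k => ENNReal.tsum_le_tsum fun l =>
    h.two_rpow_mul_pairSet_le hexp hc₁ hEe hgG (hweak k l)).trans ?_
  simp only [ENNReal.tsum_mul_left]
  gcongr
  exact hK _ _

theorem WeaklyInteracting.exists_pairing_le (hexp : InterpolatedExponents θ u w Q R)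
    (hweak : ∃ C : ℝ≥0, ∀ {Lm : ℝ≥0∞} {T : Set ℝ} {E F : Set (Pt n)}, MeasurableSet E →
      MeasurableSet F → volume E ≠ ⊤ → volume T ≠ ⊤ → Lm ≠ ⊤ → F ⊆ Prod.fst ⁻¹' T →
      (∀ t, sliceVol n F t ≤ Lm) →
      pairSet n E F ≤ C * Lm ^ u * volume T ^ w * volume E ^ (1 - w)) :
    ∃ C : ℝ≥0, ∀ {η δ₁ A : ℝ} {E : Set (Pt n)} {g : Pt n → ℝ},
      WeaklyInteracting n Q R (1 - θ * w) η δ₁ A E g →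
      pairing n (ind n E) g ≤ C * ENNReal.ofReal ((η * δ₁) ^ (1 / (2 * Q))) *
        volume E ^ (1 - θ * w) * mixedNormR n Q R g := by
  have hQ := hexp.Q_pos
  have hR := hexp.R_pos
  obtain ⟨C₁, hC₁⟩ := hweak
  obtain ⟨c₁, hc₁⟩ := exists_eq_two_rpow (a := max 1 C₁) (by simp) (by simp)
  have hc₁₀ : 0 ≤ c₁ := by
    rw [← two_rpow_le_two_rpow, ← hc₁, ENNReal.rpow_zero]
    exact le_max_left _ _
  obtain ⟨K, hK, hsum⟩ := exists_tsum_tsum_two_rpow_le R (b := u * R) (σ := 1 / (4 * R))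
    (τ := min θ (1 - θ) / 2) (u + (1 - w) * (Q / R)) (mul_pos hexp.u_pos hR) (by positivity)
    (half_pos (lt_min hexp.theta_pos (sub_pos.2 hexp.theta_lt_one)))
  lift K to ℝ≥0 using hK
  refine ⟨2 ^ (2 + (c₁ + u + 1 / Q + 4 / R) / 2) * K, fun {η δ₁ A E g} h => ?_⟩
  rcases eq_or_ne (mixedNormR n Q R g) 0 with hg | hg
  · rw [h.pairing_eq_zero hQ hR hg]
    exact zero_le
  obtain ⟨H, rfl, -⟩ := exists_ofReal_eq_two_rpow h.size_pos
  obtain ⟨D, rfl, -⟩ := exists_ofReal_eq_two_rpow h.strength_mem.1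
  obtain ⟨a, rfl, -⟩ := exists_ofReal_eq_two_rpow h.height_pos
  obtain ⟨e, he⟩ := exists_eq_two_rpow h.volume_ne_zero h.volume_ne_top
  obtain ⟨G, hG⟩ := exists_eq_two_rpow hg h.norm_ne_top
  refine (h.pairing_le_of_tsum_le hexp hc₁₀ he hG (fun k l => ?_) hsum).trans_eq ?_
  · refine (hC₁ h.measurableSet (measurableSet_Fkl h.measurable k l) h.volume_ne_top
      (h.volume_dyadicTimes_ne_top hQ hR k l) (by finiteness) (fun _ hz => hz.2)
      (sliceVol_Fkl_le g k l)).trans ?_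
    rw [← hc₁]
    gcongr
    exact le_max_right _ _
  · rw [he, hG, ← Real.rpow_add two_pos, ← Real.rpow_mul zero_le_two, ofReal_two_rpow,
      ENNReal.coe_mul, ENNReal.coe_rpow_of_ne_zero two_ne_zero, ENNReal.coe_ofNat,
      ← ENNReal.rpow_mul, add_comm H D, mul_one_div]
    simp only [two_rpow_add]
    ring

end DyadicSummation

section Exponents

variable {d : ℕ} {θ : ℝ}

lemma one_div_dualExp_inv {x : ℝ} (hx₀ : x ≠ 0) (hx₁ : x ≠ 1) : 1 / dualExp x⁻¹ = 1 - x := by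
  have : x⁻¹ - 1 ≠ 0 := sub_ne_zero.2 (inv_eq_one.not.2 hx₁)
  rw [dualExp, one_div_div]
  field_simp

lemma one_div_pExp (hd : 1 ≤ d) : 1 / pExp d θ = 1 - θ * (2 / ((d - 1 : ℕ) + 3)) := by
  obtain ⟨n, rfl⟩ := Nat.exists_eq_add_of_le' hd
  rw [pExp, one_div, inv_inv, Nat.add_sub_cancel]
  push_cast
  field_simp
  ring

lemma qExp_eq_inv (hd : 1 ≤ d) :
    qExp d θ = (θ * (1 - 2 / ((d - 1 : ℕ) + 3)))⁻¹ := by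
  obtain ⟨n, rfl⟩ := Nat.exists_eq_add_of_le' hd
  rw [qExp, Nat.add_sub_cancel]
  congr 1
  push_cast
  field_simp
  ring

lemma rExp_eq_inv (hd : 2 ≤ d) :
    rExp d θ = (1 - θ * (2 * ((d - 1 : ℕ) + 1) / ((d - 1 : ℕ) * ((d - 1 : ℕ) + 3))))⁻¹ := by
  obtain ⟨n, rfl⟩ := Nat.exists_eq_add_of_le' hd
  have hfactor : ((n + 2 : ℕ) : ℝ) ^ 2 + (n + 2 : ℕ) - 2 = (n + 1) * (n + 4) := by
    push_cast
    ring
  rw [rExp, hfactor, show n + 2 - 1 = n + 1 by lia]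
  congr 1
  push_cast
  field_simp
  ring

lemma interpolatedExponents_dualExp (hd : 3 ≤ d) (hθ₀ : 0 < θ) (hθ₁ : θ < 1) :
    InterpolatedExponents θ
      (2 * ((d - 1 : ℕ) + 1) / ((d - 1 : ℕ) * ((d - 1 : ℕ) + 3))) (2 / ((d - 1 : ℕ) + 3))
      (dualExp (qExp d θ)) (dualExp (rExp d θ)) := by
  obtain ⟨n, rfl⟩ : ∃ n, d = n + 1 := ⟨d - 1, by lia⟩
  have hn : (2 : ℝ) ≤ n := mod_cast (by lia : 2 ≤ n)
  rw [qExp_eq_inv (by lia), rExp_eq_inv (by lia), Nat.add_sub_cancel]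
  set u : ℝ := 2 * (n + 1) / (n * (n + 3)) with hu
  set w : ℝ := 2 / (n + 3) with hw
  have hu₀ : 0 < u := by positivity
  have hu₁ : u < 1 := by
    rw [hu, div_lt_one (by positivity)]
    nlinarith
  have hw₀ : 0 < w := by positivity
  have hw₁ : w < 1 := by
    rw [hw, div_lt_one (by positivity)]
    linarith
  have hθu : θ * u < 1 := mul_lt_one_of_nonneg_of_lt_one_left hθ₀.le hθ₁ hu₁.le
  have hθw : θ * (1 - w) < 1 :=
    mul_lt_one_of_nonneg_of_lt_one_left hθ₀.le hθ₁ (by linarith)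
  refine ⟨hθ₀, hθ₁, hu₀, hw₀.le, hw₁.le, ?_, ?_⟩
  · exact one_div_dualExp_inv (mul_pos hθ₀ (by linarith)).ne' hθw.ne
  · rw [one_div_dualExp_inv (by linarith) (by linarith [mul_pos hθ₀ hu₀])]
    ring

end Exponents

open scoped NNReal in
theorem set_weak_interaction_general {d : ℕ} (hd : 3 ≤ d) {θ : ℝ} (hθ₀ : 0 < θ) (hθ₁ : θ < 1) :
    ∃ (C : ℝ≥0) (c : ℝ), 0 < c ∧ c ≤ 1 ∧
      ∀ {η δ₁ A : ℝ} {E : Set (Pt (d - 1))} {g : Pt (d - 1) → ℝ},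
        WeaklyInteracting (d - 1) (dualExp (qExp d θ)) (dualExp (rExp d θ)) (1 / pExp d θ) η δ₁ A
          E g →
        pairing (d - 1) (ind (d - 1) E) g ≤
          C * ENNReal.ofReal ((η * δ₁) ^ c) * volume E ^ (1 / pExp d θ) * dualNorm d θ g := by
  have hexp := interpolatedExponents_dualExp hd hθ₀ hθ₁
  have hQ := hexp.Q_pos
  rw [one_div_pExp (by lia)]
  obtain ⟨C, hC⟩ :=
    WeaklyInteracting.exists_pairing_le hexp (exists_pairSet_le_mul_rpow (by lia))
  refine ⟨C, 1 / (2 * dualExp (qExp d θ)), by positivity, ?_, hC⟩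
  rw [div_le_one (by positivity)]
  linarith [hexp.one_le_Q]

lemma half_le_log_one_add_rpow_neg {δ C : ℝ} (hδ : δ ∈ Ioc 0 1) (hC : 0 ≤ C) :
    1 / 2 ≤ Real.log (1 + δ ^ (-C)) := by
  have hone : 1 ≤ δ ^ (-C) := Real.one_le_rpow_of_pos_of_le_one_of_nonpos hδ.1 hδ.2 (by linarith)
  calc (1 / 2 : ℝ) ≤ Real.log 2 := by linarith [Real.log_two_gt_d9]
    _ ≤ Real.log (1 + δ ^ (-C)) := Real.log_le_log two_pos (by linarith)

open scoped NNReal in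
lemma coe_mul_ofReal_le_ofReal_mul_log (C : ℝ≥0) {x δ : ℝ} (hx : 0 ≤ x) (hδ : δ ∈ Ioc 0 1) :
    C * ENNReal.ofReal x ≤
      ENNReal.ofReal (max 1 (2 * C) * x * Real.log (1 + δ ^ (-max 1 (2 * (C : ℝ))))) := by
  rw [← ENNReal.ofReal_coe_nnreal, ← ENNReal.ofReal_mul C.coe_nonneg]
  refine ENNReal.ofReal_le_ofReal ?_
  calc C * x = 2 * C * x * (1 / 2) := by ring
    _ ≤ max 1 (2 * C) * x * Real.log (1 + δ ^ (-max 1 (2 * (C : ℝ)))) := by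
        gcongr
        · exact le_max_right _ _
        · exact half_le_log_one_add_rpow_neg hδ (by positivity)

lemma theta0_pos {d : ℕ} (hd : 2 ≤ d) : 0 < theta0 d := by
  have hd' : (2 : ℝ) ≤ d := mod_cast hd
  exact div_pos (by nlinarith) (by positivity)

/-- interaction of a set with a function whose dyadic pieces all
have comparable small norm and act with comparable strength. -/
theorem set_weak_interaction (d : ℕ) (hd : 3 ≤ d) (θ : ℝ)
    (hθ1 : theta0 d < θ) (hθ2 : θ < 1) :
    ∃ (C c : ℝ), 1 ≤ C ∧ 0 < c ∧ c ≤ 1 ∧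
      ∀ η δ δ₁ : ℝ, η ∈ Set.Ioc (0:ℝ) 1 → δ ∈ Set.Ioc (0:ℝ) 1 →
        δ₁ ∈ Set.Ioc (0:ℝ) 1 →
      ∀ E : Set (Pt (d-1)), MeasurableSet E → 0 < volume E → volume E < ⊤ →
      ∀ g : Pt (d-1) → ℝ, Measurable g → 0 ≤ g → dualNorm d θ g ≠ ⊤ →
      ∀ (A : ℝ) (T : Set ℝ), 0 < A →
        (∀ᵐ t : ℝ, t ∈ T →
          ENNReal.ofReal (A/2) ≤
              (∫⁻ y, ENNReal.ofReal (g (t, y)) ^ dualExp (rExp d θ)) ∧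
            (∫⁻ y, ENNReal.ofReal (g (t, y)) ^ dualExp (rExp d θ)) ≤
              ENNReal.ofReal (2*A)) →
        (∀ᵐ t : ℝ, t ∉ T →
          (∫⁻ y, ENNReal.ofReal (g (t, y)) ^ dualExp (rExp d θ)) = 0) →
      (∀ k l : ℤ, 0 < volume (Fkl (d-1) g k l) →
        (ENNReal.ofReal η * dualNorm d θ g ^ dualExp (qExp d θ) ≤
            ((2:ℝ≥0∞) ^ k) ^ dualExp (qExp d θ) *
              dualNorm d θ (ind (d-1) (Fkl (d-1) g k l)) ^ dualExp (qExp d θ) ∧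
          ((2:ℝ≥0∞) ^ k) ^ dualExp (qExp d θ) *
              dualNorm d θ (ind (d-1) (Fkl (d-1) g k l)) ^ dualExp (qExp d θ) <
            ENNReal.ofReal (2*η) * dualNorm d θ g ^ dualExp (qExp d θ)) ∧
        (ENNReal.ofReal δ₁ * volume E ^ (1 / pExp d θ) *
              dualNorm d θ (ind (d-1) (Fkl (d-1) g k l)) ≤
            pairing (d-1) (ind (d-1) E) (ind (d-1) (Fkl (d-1) g k l)) ∧
          pairing (d-1) (ind (d-1) E) (ind (d-1) (Fkl (d-1) g k l)) <
            ENNReal.ofReal (2*δ₁) * volume E ^ (1 / pExp d θ) *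
              dualNorm d θ (ind (d-1) (Fkl (d-1) g k l)))) →
      ENNReal.ofReal δ * volume E ^ (1 / pExp d θ) * dualNorm d θ g ≤
        pairing (d-1) (ind (d-1) E) g →
      pairing (d-1) (ind (d-1) E) g ≤
        ENNReal.ofReal (C * (η * δ₁) ^ c * Real.log (1 + δ ^ (-C))) *
          volume E ^ (1 / pExp d θ) * dualNorm d θ g := by
  obtain ⟨C, c, hc₀, hc₁, hC⟩ :=
    set_weak_interaction_general hd ((theta0_pos (by lia)).trans hθ1) hθ2
  refine ⟨max 1 (2 * C), c, le_max_left _ _, hc₀, hc₁, fun η δ δ₁ hη hδ hδ₁ E hE hE₀ hE_top g hg _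
    hg_top A T hA hT hTc hpieces _ => ?_⟩
  have hinteract : WeaklyInteracting (d-1) (dualExp (qExp d θ)) (dualExp (rExp d θ)) (1 / pExp d θ)
      η δ₁ A E g :=
    { size_pos := hη.1
      strength_mem := hδ₁
      height_pos := hA
      measurableSet := hE
      volume_ne_zero := hE₀.ne'
      volume_ne_top := hE_top.ne
      measurable := hg
      norm_ne_top := hg_top
      fibre := by
        filter_upwards [hT, hTc] with t ht htc
        exact (em (t ∈ T)).symm.imp htc ht
      size := fun k l hkl => (hpieces k l hkl.bot_lt).1.2.le
      strength := fun k l hkl => (hpieces k l hkl.bot_lt).2.2.le }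
  refine (hC hinteract).trans ?_
  gcongr
  exact coe_mul_ofReal_le_ofReal_mul_log C (Real.rpow_nonneg (mul_pos hη.1 hδ₁.1).le c) hδ

end
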